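/- arXiv:2408.08445 — 8 statements merged into one kernel-verified Lean document; each statement's English description precedes it below -/
import Mathlib

section
/- Let M be a point process on ℝ^k formed by random points {X_n}, with factorial moment measures μ_n as in the context. Let 𝓘 be a dissecting semi-ring of Borel subsets of ℝ^k: 𝓘 is closed under binary intersections, every difference of two members of 𝓘 is a finite disjoint union of members of 𝓘, every open subset of ℝ^k is a countable union of members of 𝓘, and every bounded Borel set is contained in a finite union of members of 𝓘. Let λ be a locally finite Borel measure on ℝ^k, fix n ≥ 1, and let u_n : (ℝ^k)ⁿ → [0,∞] be measurable and λⁿ-a.e. symmetric (for every permutation σ of {1,…,n}, u_n(x_{σ(1)},…,x_{σ(n)}) = u_n(x₁,…,x_n) for λⁿ-a.e. x). Suppose that for all m ≥ 1, all n₁,…,n_m ∈ ℕ with n₁+⋯+n_m = n, and all pairwise disjoint bounded A₁,…,A_m ∈ 𝓘, E[∏_{j=1}^m M(A_j)!/(M(A_j)−n_j)!] = ∫_{A₁^{n₁}×⋯×A_m^{n_m}} u_n(x₁,…,x_n) λⁿ(dx) < ∞. Then μ_n(A) = ∫_A u_n dλⁿ for every Borel set A ⊆ (ℝ^k)ⁿ.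 -/
open MeasureTheory
open scoped ENNReal

noncomputable section

/-- A point process on `ℝ^k`. -/
def IsPointProcess (k : ℕ) {Ω : Type*} [MeasurableSpace Ω]
    (M : Ω → Measure (Fin k → ℝ)) : Prop :=
  (∀ A : Set (Fin k → ℝ), MeasurableSet A → Measurable fun ω => M ω A) ∧
  (∀ ω, ∀ B : Set (Fin k → ℝ), MeasurableSet B → Bornology.IsBounded B →
    ∃ n : ℕ, M ω B = n)

/-- Measurability of an `ℝ^k ∪ {∂}`-valued map (`∂ = none`). -/
def OptMeasurable {k : ℕ} {Ω : Type*} [MeasurableSpace Ω]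
    (X : Ω → Option (Fin k → ℝ)) : Prop :=
  ∀ A : Set (Fin k → ℝ), MeasurableSet A →
    MeasurableSet {ω | X ω ∈ Option.some '' A}

/-- The sequence `X` forms the point process `M`. -/
def Forms {k : ℕ} {Ω : Type*} [MeasurableSpace Ω]
    (X : ℕ → Ω → Option (Fin k → ℝ)) (M : Ω → Measure (Fin k → ℝ)) : Prop :=
  ∀ ω, ∀ A : Set (Fin k → ℝ), MeasurableSet A →
    M ω A = ∑' n : ℕ, Set.indicator (Option.some '' A) (fun _ => (1 : ℝ≥0∞)) (X n ω)

/-- `μ` is the `n`-th factorial moment measure of the point process formed by `X`: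
`μ(A) = E[∑ 1{(X_{i₁},…,X_{iₙ}) ∈ A}]`, the sum over `n`-tuples of distinct indices. -/
def IsFactorialMomentMeasure {k : ℕ} {Ω : Type*} [MeasurableSpace Ω] (P : Measure Ω)
    (X : ℕ → Ω → Option (Fin k → ℝ)) (n : ℕ) (μ : Measure (Fin n → (Fin k → ℝ))) : Prop :=
  ∀ A : Set (Fin n → (Fin k → ℝ)), MeasurableSet A →
    μ A = ∫⁻ ω, ∑' i : Fin n → ℕ,
      Set.indicator {i : Fin n → ℕ | Function.Injective i ∧
        ∃ y ∈ A, ∀ l, X (i l) ω = Option.some (y l)} (fun _ => (1 : ℝ≥0∞)) i ∂P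

/-- Descending factorial `x (x-1) ⋯ (x-n+1)` in `ℝ≥0∞`. -/
def descFactE (x : ℝ≥0∞) (n : ℕ) : ℝ≥0∞ := ∏ i ∈ Finset.range n, (x - (i : ℝ≥0∞))

/-- A dissecting semi-ring of Borel subsets of `ℝ^k`. -/
def IsDissectingSemiRing (k : ℕ) (I : Set (Set (Fin k → ℝ))) : Prop :=
  (∀ A ∈ I, MeasurableSet A) ∧
  (∀ A ∈ I, ∀ B ∈ I, A ∩ B ∈ I) ∧
  (∀ A ∈ I, ∀ B ∈ I, ∃ s : Finset (Set (Fin k → ℝ)), (↑s : Set (Set (Fin k → ℝ))) ⊆ I ∧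
    (↑s : Set (Set (Fin k → ℝ))).PairwiseDisjoint id ∧ A \ B = ⋃₀ ↑s) ∧
  (∀ G : Set (Fin k → ℝ), IsOpen G →
    ∃ f : ℕ → Set (Fin k → ℝ), (∀ i, f i ∈ I) ∧ G = ⋃ i, f i) ∧
  (∀ B : Set (Fin k → ℝ), MeasurableSet B → Bornology.IsBounded B →
    ∃ s : Finset (Set (Fin k → ℝ)), (↑s : Set (Set (Fin k → ℝ))) ⊆ I ∧ B ⊆ ⋃₀ ↑s)

/-! Call a box `∏ B l` aligned if any two of its sides are equal or disjoint. Grouping equal sides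
identifies the factorial moment measure of an aligned box with a joint factorial moment of the
point counts of its distinct sides, so the hypothesis says that the two measures agree, and are
finite, on aligned boxes. Aligned boxes form a π-system. Around any tuple `x` there are
arbitrarily small ones: choose small sides such that points `x l ≠ x l'` have disjoint sides
and points `x l = x l'` have the same side. As countably many sides suffice for this, aligned
boxes generate the product σ-algebra and countably many of them cover the space, whence the two
measures are equal. -/

open Set Function TopologicalSpace

section Counting

variable {α ι κ τ : Type*}

theorem descFactE_natCast (a n : ℕ) : descFactE a n = a.descFactorial n := by
  simp [descFactE, Nat.descFactorial_eq_prod_range]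

theorem descFactE_top {n : ℕ} (hn : n ≠ 0) : descFactE ⊤ n = ⊤ := by
  simp [descFactE, hn]

theorem infinite_embedding [Finite ι] [Nonempty ι] [Infinite α] : Infinite (ι ↪ α) := by
  classical
  obtain ⟨l⟩ := ‹Nonempty ι›
  have f : ι ↪ α :=
    (Finite.equivFin ι).toEmbedding.trans (Fin.valEmbedding.trans (Infinite.natEmbedding α))
  exact .of_surjective (fun g : ι ↪ α => g l) fun a => ⟨f.setValue l a, f.setValue_eq l a⟩

theorem toENNReal_card_embedding [Fintype ι] :
    (ENat.card (ι ↪ α) : ℝ≥0∞) = descFactE (ENat.card α) (Fintype.card ι) := by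
  classical
  cases finite_or_infinite α
  · have := Fintype.ofFinite α
    simp [ENat.card_eq_coe_fintype_card, descFactE_natCast]
  · cases isEmpty_or_nonempty ι
    · simp [descFactE, ENat.card_eq_coe_fintype_card]
    · simp [infinite_embedding, descFactE_top Fintype.card_ne_zero]

theorem enatCard_pi [Fintype τ] (S : τ → Type*) :
    ENat.card (∀ j, S j) = ∏ j, ENat.card (S j) := by
  simp_rw [ENat.card, Cardinal.mk_pi, Cardinal.prod_eq_of_fintype, Cardinal.toENat_lift, map_prod]

/-- An injective map that sends each `l` into the set labelled `β l`, where the labelled sets are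
pairwise disjoint, amounts to a family of embeddings of the fibres of `β`. -/
def injectiveSelectionEquiv (β : ι → τ) {S : τ → Set κ} (hS : Pairwise (Disjoint on S)) :
    {i : ι → κ | Injective i ∧ ∀ l, i l ∈ S (β l)} ≃ ∀ j, {l // β l = j} ↪ S j where
  toFun i j :=
    { toFun := fun l => ⟨i.1 l, by simpa only [l.2] using i.2.2 l⟩
      inj' := fun _ _ h => Subtype.ext (i.2.1 (congrArg Subtype.val h)) }
  invFun F := by
    refine ⟨fun l => F (β l) ⟨l, rfl⟩, fun l l' h => ?_, fun l => (F (β l) ⟨l, rfl⟩).2⟩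
    have fibre_val : ∀ j (p : {l // β l = j}), (F (β p) ⟨p, rfl⟩ : κ) = F j p := by
      rintro _ ⟨p, rfl⟩
      rfl
    have same_fibre : β l = β l' := by
      by_contra hne
      exact (hS hne).ne_of_mem (F (β l) ⟨l, rfl⟩).2 (F (β l') ⟨l', rfl⟩).2 h
    have := (F (β l')).injective (Subtype.ext ((fibre_val _ ⟨l, same_fibre⟩).symm.trans h))
    exact congrArg Subtype.val this
  left_inv _ := rfl
  right_inv F := by
    ext _ ⟨l, rfl⟩
    rfl

theorem toENNReal_encard_injectiveSelection [Fintype ι] [Fintype τ] [DecidableEq τ]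
    (β : ι → τ) {S : τ → Set κ} (hS : Pairwise (Disjoint on S)) :
    ({i : ι → κ | Injective i ∧ ∀ l, i l ∈ S (β l)}.encard : ℝ≥0∞) =
      ∏ j, descFactE (S j).encard (Finset.univ.filter fun l => β l = j).card := by
  rw [← ENat.card_coe_set_eq, ENat.card_congr (injectiveSelectionEquiv β hS), enatCard_pi]
  rw [← ENat.toENNRealRingHom_apply, map_prod]
  refine Finset.prod_congr rfl fun j _ => ?_
  simp [toENNReal_card_embedding, Fintype.card_subtype]

end Counting

section Configurations

variable {E ι κ τ : Type*}

/-- The number of points in `A` of a configuration `x` indexed by `κ`. An index `i` with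
`x i = none` carries no point. -/
def pointCount (x : κ → Option E) (A : Set E) : ℕ∞ :=
  {i | x i ∈ some '' A}.encard

/-- The number of tuples of points of `x` with pairwise distinct indices that lie in `A`, that is,
the mass of `A` under the factorial power of the counting measure of `x`. -/
def factorialCount (x : κ → Option E) (A : Set (ι → E)) : ℕ∞ :=
  {i : ι → κ | Injective i ∧ ∃ y ∈ A, ∀ l, x (i l) = some (y l)}.encard

theorem factorialCount_univ_pi [Fintype ι] [Fintype τ] [DecidableEq τ] (x : κ → Option E)
    {A : τ → Set E} (hA : Pairwise (Disjoint on A)) (β : ι → τ) :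
    (factorialCount x (univ.pi (A ∘ β)) : ℝ≥0∞) =
      ∏ j, descFactE (pointCount x (A j)) (Finset.univ.filter fun l => β l = j).card := by
  have hdisj : Pairwise (Disjoint on fun j => {i | x i ∈ some '' A j}) := fun j j' hj =>
    (((disjoint_image_iff (Option.some_injective E)).2 (hA hj)).preimage x)
  have hsel (i : ι → κ) : (∃ y ∈ univ.pi (A ∘ β), ∀ l, x (i l) = some (y l)) ↔
      ∀ l, i l ∈ {i | x i ∈ some '' A (β l)} := by
    simp only [mem_univ_pi, comp_apply, mem_ofPred_eq, mem_image, Classical.skolem, forall_and,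
      eq_comm]
  simp only [factorialCount, hsel, toENNReal_encard_injectiveSelection β hdisj, pointCount]

end Configurations

section Networks

variable {E : Type*} [TopologicalSpace E]

/-- A network of a topological space: a family of sets, not necessarily open, such that every open
set is a union of members of the family. -/
def IsNetwork (C : Set (Set E)) : Prop :=
  ∀ G, IsOpen G → ∀ x ∈ G, ∃ V ∈ C, x ∈ V ∧ V ⊆ G

theorem IsNetwork.sUnion_eq_univ {C : Set (Set E)} (hC : IsNetwork C) : ⋃₀ C = univ :=
  eq_univ_of_forall fun x =>
    let ⟨V, hV, hxV, _⟩ := hC univ isOpen_univ x trivial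
    ⟨V, hV, hxV⟩

theorem IsNetwork.borel_le_generateFrom {C : Set (Set E)} (hC : IsNetwork C)
    (hcount : C.Countable) : borel E ≤ MeasurableSpace.generateFrom C := by
  refine MeasurableSpace.generateFrom_le fun G hG => ?_
  have hunion : G = ⋃₀ {V ∈ C | V ⊆ G} := by
    refine Subset.antisymm (fun x hx => ?_) (sUnion_subset fun V hV => hV.2)
    obtain ⟨V, hV, hxV, hVG⟩ := hC G hG x hx
    exact ⟨V, ⟨hV, hVG⟩, hxV⟩
  rw [hunion]
  exact .sUnion (hcount.mono (sep_subset _ _)) fun V hV =>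
    MeasurableSpace.measurableSet_generateFrom hV.1

theorem exists_countable_isNetwork_subset [SecondCountableTopology E] {C : Set (Set E)}
    (hC : ∀ G, IsOpen G → ∃ f : ℕ → Set E, (∀ i, f i ∈ C) ∧ G = ⋃ i, f i) :
    ∃ J ⊆ C, J.Countable ∧ IsNetwork J := by
  choose! f hfC hf using hC
  have hbasis := isBasis_countableBasis E
  refine ⟨⋃ U ∈ countableBasis E, range (f U), ?_, ?_, fun G hG x hx => ?_⟩
  · exact iUnion₂_subset fun U hU => range_subset_iff.2 (hfC U (hbasis.isOpen hU))
  · exact (countable_countableBasis E).biUnion fun U _ => countable_range (f U)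
  · obtain ⟨U, hU, hxU, hUG⟩ := hbasis.exists_subset_of_mem_open hx hG
    rw [hf U (hbasis.isOpen hU)] at hxU hUG
    obtain ⟨i, hi⟩ := mem_iUnion.1 hxU
    exact ⟨f U i, mem_biUnion hU (mem_range_self i), hi, (subset_iUnion (f U) i).trans hUG⟩

theorem IsNetwork.sep_isBounded {α : Type*} [PseudoMetricSpace α] {C : Set (Set α)}
    (hC : IsNetwork C) : IsNetwork {A ∈ C | Bornology.IsBounded A} := by
  intro G hG x hx
  obtain ⟨V, hV, hxV, hVG⟩ := hC (G ∩ Metric.ball x 1) (hG.inter Metric.isOpen_ball) x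
    ⟨hx, Metric.mem_ball_self one_pos⟩
  exact ⟨V, ⟨hV, Metric.isBounded_ball.subset (hVG.trans inter_subset_right)⟩, hxV,
    hVG.trans inter_subset_left⟩

/-- A π-system of measurable sets that contains a countable network. It plays the role of the
bounded members of a dissecting semi-ring in a general topological space. -/
structure IsDissectingPiSystem [MeasurableSpace E] (C : Set (Set E)) : Prop where
  measurableSet : ∀ A ∈ C, MeasurableSet A
  isPiSystem : IsPiSystem C
  exists_countable_isNetwork : ∃ J ⊆ C, J.Countable ∧ IsNetwork J

end Networks

section AlignedBoxes

variable {E ι : Type*}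

/-- The boxes indexed by `ι` with sides in `C`, any two of which are equal or disjoint. -/
def alignedBoxes (ι : Type*) (C : Set (Set E)) : Set (Set (ι → E)) :=
  {T | ∃ B : ι → Set E, (∀ l, B l ∈ C) ∧ (range B).PairwiseDisjoint id ∧ univ.pi B = T}

theorem alignedBoxes_mono {C D : Set (Set E)} (h : C ⊆ D) :
    alignedBoxes ι C ⊆ alignedBoxes ι D := by
  rintro _ ⟨B, hB, hdisj, rfl⟩
  exact ⟨B, fun l => h (hB l), hdisj, rfl⟩

theorem countable_alignedBoxes [Finite ι] {C : Set (Set E)} (hC : C.Countable) :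
    (alignedBoxes ι C).Countable := by
  refine ((countable_univ_pi fun _ : ι => hC).image univ.pi).mono ?_
  rintro _ ⟨B, hB, -, rfl⟩
  exact mem_image_of_mem _ fun l _ => hB l

theorem measurableSet_of_mem_alignedBoxes [Countable ι] [MeasurableSpace E] {C : Set (Set E)}
    (hC : ∀ A ∈ C, MeasurableSet A) {T : Set (ι → E)} (hT : T ∈ alignedBoxes ι C) :
    MeasurableSet T := by
  obtain ⟨B, hB, -, rfl⟩ := hT
  exact .univ_pi fun l => hC _ (hB l)

theorem isPiSystem_alignedBoxes {C : Set (Set E)} (hC : IsPiSystem C) :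
    IsPiSystem (alignedBoxes ι C) := by
  rintro _ ⟨B, hB, hBdisj, rfl⟩ _ ⟨D, hD, hDdisj, rfl⟩ ⟨x, hxB, hxD⟩
  rw [pairwiseDisjoint_range_iff] at hBdisj hDdisj
  refine ⟨fun l => B l ∩ D l, fun l => hC _ (hB l) _ (hD l) ⟨x l, hxB l trivial, hxD l trivial⟩,
    ?_, pi_inter_distrib⟩
  refine pairwiseDisjoint_range_iff.2 fun l l' hne => ?_
  by_cases hBeq : B l = B l'
  · have hDne : D l ≠ D l' := fun hDeq => hne (by simp only [hBeq, hDeq])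
    exact (hDdisj l l' hDne).mono inter_subset_right inter_subset_right
  · exact (hBdisj l l' hBeq).mono inter_subset_left inter_subset_left

theorem IsNetwork.alignedBoxes [TopologicalSpace E] [T2Space E] [Finite ι] {C : Set (Set E)}
    (hC : IsNetwork C) : IsNetwork (alignedBoxes ι C) := by
  intro G hG x hx
  obtain ⟨O, hO, hOG⟩ := isOpen_pi_iff'.1 hG x hx
  obtain ⟨U, hU, hUdisj⟩ := (finite_range x).t2_separation
  let W (p : E) : Set E := U p ∩ ⋂ l, ⋂ (_ : x l = p), O l
  have hWopen (p : E) : IsOpen (W p) :=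
    (hU p).2.inter (isOpen_iInter_of_finite fun l => isOpen_iInter_of_finite fun _ => (hO l).1)
  have hWmem (p : E) : p ∈ W p :=
    ⟨(hU p).1, mem_iInter₂.2 fun l hl => hl ▸ (hO l).2⟩
  choose V hVC hVmem hVW using fun p => hC (W p) (hWopen p) p (hWmem p)
  refine ⟨_, ⟨fun l => V (x l), fun l => hVC _, ?_, rfl⟩, fun l _ => hVmem _, ?_⟩
  · refine pairwiseDisjoint_range_iff.2 fun l l' hne => ?_
    have hxne : x l ≠ x l' := fun h => hne (congrArg V h)
    exact (hUdisj (mem_range_self l) (mem_range_self l') hxne).mono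
      ((hVW _).trans inter_subset_left) ((hVW _).trans inter_subset_left)
  · have hVO (l : ι) : V (x l) ⊆ O l := fun _ hp => mem_iInter₂.1 (hVW (x l) hp).2 l rfl
    exact (pi_mono fun l _ => hVO l).trans hOG

theorem IsDissectingPiSystem.pi_eq_generateFrom_alignedBoxes [TopologicalSpace E] [T2Space E]
    [MeasurableSpace E] [BorelSpace E] [Finite ι] {C : Set (Set E)} (hC : IsDissectingPiSystem C) :
    MeasurableSpace.pi = MeasurableSpace.generateFrom (alignedBoxes ι C) := by
  obtain ⟨J, hJC, hJcount, hJ⟩ := hC.exists_countable_isNetwork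
  refine le_antisymm ?_ (MeasurableSpace.generateFrom_le fun _ =>
    measurableSet_of_mem_alignedBoxes hC.measurableSet)
  calc MeasurableSpace.pi
      ≤ borel (ι → E) := pi_le_borel_pi
    _ ≤ MeasurableSpace.generateFrom (alignedBoxes ι J) :=
      hJ.alignedBoxes.borel_le_generateFrom (countable_alignedBoxes hJcount)
    _ ≤ MeasurableSpace.generateFrom (alignedBoxes ι C) :=
      MeasurableSpace.generateFrom_mono (alignedBoxes_mono hJC)

theorem IsDissectingPiSystem.ext_of_alignedBoxes [TopologicalSpace E] [T2Space E]
    [MeasurableSpace E] [BorelSpace E] [Finite ι] {C : Set (Set E)} (hC : IsDissectingPiSystem C)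
    {μ ν : Measure (ι → E)} (hfin : ∀ T ∈ alignedBoxes ι C, μ T ≠ ⊤)
    (heq : ∀ T ∈ alignedBoxes ι C, μ T = ν T) : μ = ν := by
  obtain ⟨J, hJC, hJcount, hJ⟩ := hC.exists_countable_isNetwork
  exact Measure.ext_of_generateFrom_of_cover_subset hC.pi_eq_generateFrom_alignedBoxes
    (isPiSystem_alignedBoxes hC.isPiSystem) (alignedBoxes_mono hJC)
    (countable_alignedBoxes hJcount) hJ.alignedBoxes.sUnion_eq_univ
    (fun T hT => hfin T (alignedBoxes_mono hJC hT)) heq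

theorem exists_fin_injective_comp_surjective [Finite ι] {α : Type*} (B : ι → α) :
    ∃ (m : ℕ) (A : Fin m → α) (β : ι → Fin m), Injective A ∧ Surjective β ∧ A ∘ β = B := by
  let e := Finite.equivFin (range B)
  refine ⟨_, Subtype.val ∘ e.symm, e ∘ rangeFactorization B,
    Subtype.val_injective.comp e.symm.injective,
    e.surjective.comp rangeFactorization_surjective, ?_⟩
  exact funext fun l => congrArg Subtype.val (e.symm_apply_apply (rangeFactorization B l))

theorem exists_fin_pairwise_disjoint_of_mem_alignedBoxes [Finite ι] {C : Set (Set E)}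
    {T : Set (ι → E)} (hT : T ∈ alignedBoxes ι C) :
    ∃ (m : ℕ) (A : Fin m → Set E) (β : ι → Fin m), Surjective β ∧ (∀ j, A j ∈ C) ∧
      Pairwise (Disjoint on A) ∧ univ.pi (A ∘ β) = T := by
  obtain ⟨B, hB, hdisj, rfl⟩ := hT
  obtain ⟨m, A, β, hA, hβ, rfl⟩ := exists_fin_injective_comp_surjective B
  rw [hβ.range_comp] at hdisj
  refine ⟨m, A, β, hβ, hβ.forall.2 hB, fun j j' hne => ?_, rfl⟩
  exact hdisj (mem_range_self j) (mem_range_self j') (hA.ne hne)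

end AlignedBoxes

theorem stmt6_general {E Ω ι κ : Type*} [TopologicalSpace E] [T2Space E] [MeasurableSpace E]
    [BorelSpace E] [MeasurableSpace Ω] [Fintype ι] (P : Measure Ω) (M : Ω → Measure E)
    (X : κ → Ω → Option E) {C : Set (Set E)} (hC : IsDissectingPiSystem C)
    (hM : ∀ ω, ∀ A ∈ C, M ω A = pointCount (X · ω) A)
    (μ ν : Measure (ι → E)) (u : (ι → E) → ℝ≥0∞)
    (hμ : ∀ A, MeasurableSet A → μ A = ∫⁻ ω, factorialCount (X · ω) A ∂P)
    (hmom : ∀ (m : ℕ) (A : Fin m → Set E) (β : ι → Fin m), Surjective β → (∀ j, A j ∈ C) →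
      Pairwise (Disjoint on A) →
      ∫⁻ ω, ∏ j, descFactE (M ω (A j)) (Finset.univ.filter fun l => β l = j).card ∂P =
          ∫⁻ x in univ.pi (A ∘ β), u x ∂ν ∧
        ∫⁻ x in univ.pi (A ∘ β), u x ∂ν ≠ ⊤) :
    ∀ A, MeasurableSet A → μ A = ∫⁻ x in A, u x ∂ν := by
  have box_eq (T) (hT : T ∈ alignedBoxes ι C) :
      μ T = ∫⁻ x in T, u x ∂ν ∧ ∫⁻ x in T, u x ∂ν ≠ ⊤ := by
    have hTmeas := measurableSet_of_mem_alignedBoxes hC.measurableSet hT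
    obtain ⟨m, A, β, hβ, hAC, hA, rfl⟩ := exists_fin_pairwise_disjoint_of_mem_alignedBoxes hT
    simpa only [hμ _ hTmeas, factorialCount_univ_pi _ hA, hM _ _ (hAC _)] using
      hmom m A β hβ hAC hA
  have hdensity : μ = ν.withDensity u := by
    refine hC.ext_of_alignedBoxes (fun T hT => (box_eq T hT).1 ▸ (box_eq T hT).2) fun T hT => ?_
    rw [withDensity_apply _ (measurableSet_of_mem_alignedBoxes hC.measurableSet hT)]
    exact (box_eq T hT).1
  intro A hA
  rw [hdensity, withDensity_apply _ hA]

section FiniteDimensional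

variable {k n : ℕ} {Ω : Type*} [MeasurableSpace Ω]

theorem Forms.apply_eq_pointCount {X : ℕ → Ω → Option (Fin k → ℝ)}
    {M : Ω → Measure (Fin k → ℝ)} (h : Forms X M) (ω : Ω) {A : Set (Fin k → ℝ)}
    (hA : MeasurableSet A) : M ω A = pointCount (X · ω) A := by
  rw [h ω A hA, pointCount, ← ENNReal.tsum_set_one, tsum_subtype _ fun _ => (1 : ℝ≥0∞)]
  rfl

theorem IsFactorialMomentMeasure.apply_eq_lintegral {P : Measure Ω}
    {X : ℕ → Ω → Option (Fin k → ℝ)} {μ : Measure (Fin n → Fin k → ℝ)}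
    (h : IsFactorialMomentMeasure P X n μ) (A : Set (Fin n → Fin k → ℝ)) (hA : MeasurableSet A) :
    μ A = ∫⁻ ω, factorialCount (X · ω) A ∂P := by
  simp only [h A hA, factorialCount, ← ENNReal.tsum_set_one, tsum_subtype _ fun _ => (1 : ℝ≥0∞)]

theorem IsDissectingSemiRing.isDissectingPiSystem {I : Set (Set (Fin k → ℝ))}
    (hI : IsDissectingSemiRing k I) : IsDissectingPiSystem {A ∈ I | Bornology.IsBounded A} where
  measurableSet A hA := hI.1 A hA.1
  isPiSystem A hA B hB _ := ⟨hI.2.1 A hA.1 B hB.1, hA.2.subset inter_subset_left⟩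
  exists_countable_isNetwork :=
    let ⟨J, hJI, hJcount, hJ⟩ := exists_countable_isNetwork_subset hI.2.2.2.1
    ⟨{A ∈ J | Bornology.IsBounded A}, fun _ hA => ⟨hJI hA.1, hA.2⟩, hJcount.mono (sep_subset _ _),
      hJ.sep_isBounded⟩

end FiniteDimensional

/-- Lemma 2.6 (`Cons`): a symmetric function reproducing the joint factorial
moments on a dissecting semi-ring is the `n`-th correlation function, i.e. the
density of the `n`-th factorial moment measure. -/
theorem stmt6 (k : ℕ) {Ω : Type*} [MeasurableSpace Ω] (P : Measure Ω)
    [IsProbabilityMeasure P]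
    (M : Ω → Measure (Fin k → ℝ)) (hpp : IsPointProcess k M)
    (X : ℕ → Ω → Option (Fin k → ℝ)) (hXm : ∀ i, OptMeasurable (X i))
    (hform : Forms X M)
    (I : Set (Set (Fin k → ℝ))) (hI : IsDissectingSemiRing k I)
    (lam : Measure (Fin k → ℝ)) [IsLocallyFiniteMeasure lam]
    (n₀ : ℕ) (hn₀ : 0 < n₀)
    (μ : Measure (Fin n₀ → (Fin k → ℝ))) (hμ : IsFactorialMomentMeasure P X n₀ μ)
    (u : (Fin n₀ → (Fin k → ℝ)) → ℝ≥0∞) (hu : Measurable u)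
    (husym : ∀ σ : Equiv.Perm (Fin n₀),
      ∀ᵐ x ∂(Measure.pi fun _ : Fin n₀ => lam), u (x ∘ σ) = u x)
    (hmom : ∀ (m : ℕ) (A : Fin m → Set (Fin k → ℝ)) (β : Fin n₀ → Fin m),
      Function.Surjective β →
      (∀ j, A j ∈ I) → (∀ j, Bornology.IsBounded (A j)) →
      (∀ i j, i ≠ j → Disjoint (A i) (A j)) →
      (∫⁻ ω, ∏ j, descFactE (M ω (A j))
          ((Finset.univ.filter fun l => β l = j).card) ∂P)
        = (∫⁻ x in {x : Fin n₀ → (Fin k → ℝ) | ∀ l, x l ∈ A (β l)}, u x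
            ∂(Measure.pi fun _ : Fin n₀ => lam)) ∧
      (∫⁻ x in {x : Fin n₀ → (Fin k → ℝ) | ∀ l, x l ∈ A (β l)}, u x
          ∂(Measure.pi fun _ : Fin n₀ => lam)) ≠ ⊤) :
    ∀ A : Set (Fin n₀ → (Fin k → ℝ)), MeasurableSet A →
      μ A = ∫⁻ x in A, u x ∂(Measure.pi fun _ : Fin n₀ => lam) :=
  stmt6_general P M X hI.isDissectingPiSystem
    (fun ω _ hA => hform.apply_eq_pointCount ω (hI.1 _ hA.1)) μ _ u hμ.apply_eq_lintegral
    fun m A β hβ hA hdisj => by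
      simpa [Set.pi] using
        hmom m A β hβ (fun j => (hA j).1) (fun j => (hA j).2) fun _ _ hne => hdisj hne
end
end

section
/- Let M be a point process on ℝ^k formed by random points {X_n}, with factorial moment measures μ_n as in the context. Suppose M is determinantal with correlation kernel K (a measurable, locally bounded complex-valued function on ℝ^k × ℝ^k) and locally finite reference measure λ, in the sense that for every n ≥ 1 and every Borel set A ⊆ (ℝ^k)ⁿ, μ_n(A) = ∫_A det[K(x_i,x_j)]_{i,j=1}^n λⁿ(dx). Then M is ℙ-almost surely a simple point process; equivalently, ℙ(X_i = X_j ∈ ℝ^k for some pair of distinct indices i ≠ j) = 0, i.e., almost surely M(ω,{x}) ≤ 1 for every x ∈ ℝ^k. -/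
open MeasureTheory
open scoped ENNReal

noncomputable section

/-!
The second factorial moment measure of the diagonal is the expected number of ordered pairs of
distinct indices whose points coincide, so it vanishes exactly when coincidences almost surely do
not occur. On the diagonal the matrix `K (x i) (x j)` has two equal rows, hence its determinant,
the density of the second factorial moment measure, is zero there.
-/

section Development

variable {Ω E ι : Type*} [MeasurableSpace Ω] [MeasurableSpace E]

/-- Measurability of a partial map into a measurable space `E`, encoded with the value `none`
outside its domain. This is `OptMeasurable` for an arbitrary target. -/
def PartiallyMeasurable (X : Ω → Option E) : Prop :=
  ∀ A : Set E, MeasurableSet A → MeasurableSet {ω | X ω ∈ Option.some '' A}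

/-- The factorial moment of order `n` of the family of random points `X`, evaluated at `A`: the
expected number of `n`-tuples of distinct indices whose points are all defined and together form an
element of `A`. For points of `ℝ^k` this is the right-hand side in `IsFactorialMomentMeasure`. -/
def factorialMoment (P : Measure Ω) (X : ι → Ω → Option E) (n : ℕ) (A : Set (Fin n → E)) : ℝ≥0∞ :=
  ∫⁻ ω, ∑' i : Fin n → ι,
    Set.indicator {i : Fin n → ι | Function.Injective i ∧
      ∃ y ∈ A, ∀ l, X (i l) ω = Option.some (y l)} (fun _ => (1 : ℝ≥0∞)) i ∂P

lemma PartiallyMeasurable.measurableSet_isSome {X : Ω → Option E} (hX : PartiallyMeasurable X) :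
    MeasurableSet {ω | (X ω).isSome} := by
  convert hX Set.univ MeasurableSet.univ using 1
  ext ω
  simp [Option.isSome_iff_exists, eq_comm (a := X ω)]

lemma PartiallyMeasurable.measurable_get {X : Ω → Option E} (hX : PartiallyMeasurable X)
    {S : Set Ω} (hS : ∀ ω ∈ S, (X ω).isSome) :
    Measurable fun ω : S => (X ω).get (hS ω ω.2) := by
  intro A hA
  convert measurable_subtype_coe (hX A hA) using 1
  ext ω
  obtain ⟨x, hx⟩ := Option.isSome_iff_exists.1 (hS ω ω.2)
  simp [hx]

lemma measurableSet_exists_mem_forall_eq_some {κ : Type*} [Countable κ] {X : κ → Ω → Option E}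
    (hX : ∀ l, PartiallyMeasurable (X l)) {A : Set (κ → E)} (hA : MeasurableSet A) :
    MeasurableSet {ω | ∃ y ∈ A, ∀ l, X l ω = Option.some (y l)} := by
  let S : Set Ω := ⋂ l, {ω | (X l ω).isSome}
  have hS : MeasurableSet S := .iInter fun l => (hX l).measurableSet_isSome
  have hSome : ∀ l, ∀ ω ∈ S, (X l ω).isSome := fun l ω hω => Set.mem_iInter.1 hω l
  let points : S → κ → E := fun ω l => (X l ω).get (hSome l ω ω.2)
  have hpoints : Measurable points :=
    measurable_pi_lambda _ fun l => (hX l).measurable_get (hSome l)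
  convert hS.subtype_image (hpoints hA)
  ext ω
  constructor
  · rintro ⟨y, hy, hXy⟩
    have hω : ω ∈ S := Set.mem_iInter.2 fun l => by simp [hXy l]
    have hpy : points ⟨ω, hω⟩ = y := funext fun l => by simp [points, hXy l]
    exact ⟨⟨ω, hω⟩, by rwa [Set.mem_preimage, hpy], rfl⟩
  · rintro ⟨ω, hω, rfl⟩
    exact ⟨points ω, hω, fun l => (Option.some_get _).symm⟩

lemma measurableSet_setOf_apply_eq_apply [MeasurableEq E] {κ : Type*} (i j : κ) :
    MeasurableSet {x : κ → E | x i = x j} :=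
  measurableSet_eq_fun (measurable_pi_apply i) (measurable_pi_apply j)

variable [Countable ι] {P : Measure Ω} {X : ι → Ω → Option E}

theorem factorialMoment_eq_zero_iff (hX : ∀ i, PartiallyMeasurable (X i)) {n : ℕ}
    {A : Set (Fin n → E)} (hA : MeasurableSet A) :
    factorialMoment P X n A = 0 ↔
      ∀ᵐ ω ∂P, ∀ i : Fin n → ι, Function.Injective i →
        ¬∃ y ∈ A, ∀ l, X (i l) ω = Option.some (y l) := by
  have hevent (i : Fin n → ι) : MeasurableSet
      {ω | Function.Injective i ∧ ∃ y ∈ A, ∀ l, X (i l) ω = Option.some (y l)} :=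
    (MeasurableSet.const _).inter
      (measurableSet_exists_mem_forall_eq_some (fun l => hX (i l)) hA)
  have hcount : Measurable fun ω => ∑' i : Fin n → ι,
      Set.indicator {i : Fin n → ι | Function.Injective i ∧
        ∃ y ∈ A, ∀ l, X (i l) ω = Option.some (y l)} (fun _ => (1 : ℝ≥0∞)) i :=
    .tsum fun i => measurable_const.indicator (hevent i)
  rw [factorialMoment, lintegral_eq_zero_iff hcount]
  refine Filter.eventually_congr (.of_forall fun ω => ?_)
  simp only [Pi.zero_apply, ENNReal.tsum_eq_zero, Set.indicator_apply_eq_zero, Set.mem_ofPred_eq,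
    one_ne_zero, imp_false, not_and]

theorem factorialMoment_two_diagonal_eq_zero_iff [MeasurableEq E]
    (hX : ∀ i, PartiallyMeasurable (X i)) :
    factorialMoment P X 2 {x | x 0 = x 1} = 0 ↔
      ∀ᵐ ω ∂P, ∀ i j : ι, i ≠ j → ∀ x : E,
        ¬(X i ω = Option.some x ∧ X j ω = Option.some x) := by
  rw [factorialMoment_eq_zero_iff hX (measurableSet_setOf_apply_eq_apply 0 1)]
  refine Filter.eventually_congr (.of_forall fun ω => ?_)
  constructor
  · intro h i j hij x hx
    exact h ![i, j] (injective_pair_iff_ne.2 hij) ⟨fun _ => x, rfl, Fin.forall_fin_two.2 hx⟩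
  · rintro h i hi ⟨y, hy, hXy⟩
    exact h (i 0) (i 1) (hi.ne zero_ne_one) (y 0) ⟨hXy 0, hy ▸ hXy 1⟩

end Development

lemma det_kernel_eq_zero_of_eq {n E R : Type*} [Fintype n] [DecidableEq n] [CommRing R]
    (K : E → E → R) {x : n → E} {i j : n} (hij : i ≠ j) (hx : x i = x j) :
    Matrix.det (Matrix.of fun a b => K (x a) (x b)) = 0 :=
  Matrix.det_zero_of_row_eq hij (by ext; simp [hx])

theorem stmt7_general {Ω E ι : Type*} [MeasurableSpace Ω] [MeasurableSpace E] [MeasurableEq E]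
    [Countable ι] {P : Measure Ω} {X : ι → Ω → Option E} (hX : ∀ i, PartiallyMeasurable (X i))
    (K : E → E → ℂ) (ν : Measure (Fin 2 → E))
    (hdet : ∀ A : Set (Fin 2 → E), MeasurableSet A →
      factorialMoment P X 2 A = ∫⁻ x in A,
        ENNReal.ofReal (Matrix.det (Matrix.of fun i j : Fin 2 => K (x i) (x j))).re ∂ν) :
    ∀ᵐ ω ∂P, ∀ i j : ι, i ≠ j → ∀ x : E,
      ¬(X i ω = Option.some x ∧ X j ω = Option.some x) := by
  rw [← factorialMoment_two_diagonal_eq_zero_iff hX,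
    hdet _ (measurableSet_setOf_apply_eq_apply 0 1)]
  refine setLIntegral_eq_zero (measurableSet_setOf_apply_eq_apply 0 1) fun x hx => ?_
  simp [det_kernel_eq_zero_of_eq K zero_ne_one hx]

/-- Part (1) of Proposition 2.10 (`PropLem`): a determinantal point process is
almost surely simple. -/
theorem stmt7 (k : ℕ) {Ω : Type*} [MeasurableSpace Ω] (P : Measure Ω)
    [IsProbabilityMeasure P]
    (M : Ω → Measure (Fin k → ℝ)) (hpp : IsPointProcess k M)
    (X : ℕ → Ω → Option (Fin k → ℝ)) (hXm : ∀ i, OptMeasurable (X i))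
    (hform : Forms X M)
    (K : (Fin k → ℝ) → (Fin k → ℝ) → ℂ) (hKm : Measurable (Function.uncurry K))
    (hKb : ∀ B : Set ((Fin k → ℝ) × (Fin k → ℝ)), Bornology.IsBounded B →
      ∃ Cb : ℝ, ∀ p ∈ B, ‖K p.1 p.2‖ ≤ Cb)
    (lam : Measure (Fin k → ℝ)) [IsLocallyFiniteMeasure lam]
    (μ : (n : ℕ) → Measure (Fin n → (Fin k → ℝ)))
    (hμ : ∀ n, IsFactorialMomentMeasure P X n (μ n))
    (hdet : ∀ n : ℕ, 0 < n →
      (∀ᵐ x ∂(Measure.pi fun _ : Fin n => lam),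
        (Matrix.det (Matrix.of fun i j : Fin n => K (x i) (x j))).im = 0 ∧
        0 ≤ (Matrix.det (Matrix.of fun i j : Fin n => K (x i) (x j))).re) ∧
      ∀ A : Set (Fin n → (Fin k → ℝ)), MeasurableSet A →
        μ n A = ∫⁻ x in A,
          ENNReal.ofReal (Matrix.det (Matrix.of fun i j : Fin n => K (x i) (x j))).re
          ∂(Measure.pi fun _ : Fin n => lam)) :
    ∀ᵐ ω ∂P, ∀ i j : ℕ, i ≠ j → ∀ x : Fin k → ℝ,
      ¬(X i ω = Option.some x ∧ X j ω = Option.some x) :=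
  stmt7_general hXm K _ fun A hA => (hμ 2 A hA).symm.trans ((hdet 2 two_pos).2 A hA)
end
end

section
/- Let K be a measurable, locally bounded complex-valued function on ℝ^k × ℝ^k and λ a locally finite Borel measure on ℝ^k. Let M′ and M″ be point processes on ℝ^k (possibly on different probability spaces), each formed by a sequence of random points, and suppose both are determinantal with correlation kernel K and reference measure λ, in the sense that their factorial moment measures satisfy μ′_n(A) = μ″_n(A) = ∫_A det[K(x_i,x_j)]_{i,j=1}^n λⁿ(dx) for every n ≥ 1 and every Borel set A ⊆ (ℝ^k)ⁿ. Then M′ and M″ have the same distribution; in particular, the law of a determinantal point process is uniquely determined by its correlation kernel and reference measure. -/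
open MeasureTheory
open scoped ENNReal

noncomputable section

/-- The factorial moment measures are the determinantal ones associated with the
kernel `K` and reference measure `lam`. -/
def HasDetMoments (k : ℕ) (K : (Fin k → ℝ) → (Fin k → ℝ) → ℂ)
    (lam : Measure (Fin k → ℝ)) (μ : (n : ℕ) → Measure (Fin n → (Fin k → ℝ))) : Prop :=
  ∀ n : ℕ, 0 < n →
    ∀ A : Set (Fin n → (Fin k → ℝ)), MeasurableSet A →
      μ n A = ∫⁻ x in A,
        ENNReal.ofReal (Matrix.det (Matrix.of fun i j : Fin n => K (x i) (x j))).re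
        ∂(Measure.pi fun _ : Fin n => lam)

/-! If the factorial moment measures of a point process grow at most like `n! Cⁿ` on `Uⁿ`, then for
a bounded `φ ≥ 0` vanishing off `U` the expansion `∏ eᵗᵠ = ∑ ∏ (eᵗᵠ - 1)` over finite sets of points
expresses `𝔼 exp (t ∫ φ dM)`, for all `t ≥ 0`, through the factorial moments, and makes it finite
for small `t > 0`. By analytic continuation this moment generating function determines the law of
`∫ φ dM`. Taking `φ = ∑ⱼ wⱼ 1_{Bⱼ}` with `wⱼ` the logarithms of distinct primes, unique
factorization recovers all the counts `M(Bⱼ)` from the single number `∫ φ dM = ∑ⱼ wⱼ M(Bⱼ)`. For a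
determinantal process with locally bounded kernel, the growth bound is the trivial estimate of the
determinant by its `n!` terms. -/

open scoped NNReal

section FinsetSums

variable {α : Type*}

lemma card_fiber_ofFinEmb {n : ℕ} (s : Set.powersetCard α n) :
    ENat.card {e : Fin n ↪ α // Set.powersetCard.ofFinEmb n α e = s} = n.factorial := by
  have hcard : (s : Finset α).card = n := s.2
  have restrict : {e : Fin n ↪ α // Set.powersetCard.ofFinEmb n α e = s} ≃
      (Fin n ↪ (s : Finset α)) :=
    { toFun := fun e => e.1.codRestrict (s : Finset α) fun l => by simp [← e.2]
      invFun := fun f => ⟨f.trans (Function.Embedding.subtype _), Subtype.ext <|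
        Finset.eq_of_subset_of_card_le (fun i hi => by
          obtain ⟨l, rfl⟩ := (by simpa using hi : ∃ l, _ = i)
          exact (f l).2) (by simp [hcard])⟩
      left_inv := fun _ => rfl
      right_inv := fun _ => rfl }
  rw [ENat.card_congr restrict, ENat.card_eq_coe_fintype_card, Fintype.card_embedding_eq]
  simp [hcard, Nat.descFactorial_self]

lemma tsum_embedding_prod (n : ℕ) (a : α → ℝ≥0∞) :
    ∑' e : Fin n ↪ α, ∏ l, a (e l) =
      n.factorial * ∑' s : Set.powersetCard α n, ∏ i ∈ (s : Finset α), a i := by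
  rw [← (Equiv.sigmaFiberEquiv (Set.powersetCard.ofFinEmb n α)).tsum_eq, ENNReal.tsum_sigma',
    ← ENNReal.tsum_mul_left]
  refine tsum_congr fun s => ?_
  have hconst (e : {e : Fin n ↪ α // Set.powersetCard.ofFinEmb n α e = s}) :
      ∏ l, a (e.1 l) = ∏ i ∈ (s : Finset α), a i := by
    simp [← e.2, Finset.prod_map]
  calc _ = ∑' _ : {e : Fin n ↪ α // Set.powersetCard.ofFinEmb n α e = s},
        ∏ i ∈ (s : Finset α), a i := tsum_congr hconst
    _ = _ := by rw [ENNReal.tsum_const, card_fiber_ofFinEmb, ENat.toENNReal_coe]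

lemma tsum_finset_prod_eq_tsum_embedding (a : α → ℝ≥0∞) :
    ∑' s : Finset α, ∏ i ∈ s, a i =
      ∑' n : ℕ, (n.factorial : ℝ≥0∞)⁻¹ * ∑' e : Fin n ↪ α, ∏ l, a (e l) := by
  rw [← (Equiv.sigmaFiberEquiv (Finset.card (α := α))).tsum_eq, ENNReal.tsum_sigma']
  refine tsum_congr fun n => ?_
  rw [tsum_embedding_prod, ← mul_assoc, ENNReal.inv_mul_cancel
    (by exact_mod_cast n.factorial_ne_zero) (ENNReal.natCast_ne_top _), one_mul]
  rfl

lemma ofReal_exp_tsum_eq_tsum_finset_prod {y : α → ℝ} (hy : Summable y) (hy₀ : ∀ i, 0 ≤ y i) :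
    ENNReal.ofReal (Real.exp (∑' i, y i)) =
      ∑' s : Finset α, ∏ i ∈ s, ENNReal.ofReal (Real.exp (y i) - 1) := by
  have hprod : HasProd (fun i => ENNReal.ofReal (Real.exp (y i)))
      (ENNReal.ofReal (Real.exp (∑' i, y i))) := by
    simpa only [HasProd, Function.comp_def,
      ENNReal.ofReal_prod_of_nonneg fun i _ => (Real.exp_pos (y i)).le]
      using ENNReal.tendsto_ofReal hy.hasSum.rexp
  refine hprod.unique ?_
  convert hasProd_one_add_of_hasSum_prod (ENNReal.summable.hasSum) using 2 with i
  rw [← ENNReal.ofReal_one, ← ENNReal.ofReal_add zero_le_one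
    (sub_nonneg.2 (Real.one_le_exp (hy₀ i))), add_sub_cancel]

end FinsetSums

section Mgf

open ProbabilityTheory

variable {Ω : Type*} [MeasurableSpace Ω] {P : Measure Ω}
  {Ω' : Type*} [MeasurableSpace Ω'] {P' : Measure Ω'}

lemma Iio_subset_interior_integrableExpSet [IsFiniteMeasure P] {S : Ω → ℝ} {t₀ : ℝ}
    (hS : AEMeasurable S P) (hS₀ : 0 ≤ᵐ[P] S) (ht₀ : t₀ ∈ integrableExpSet S P) :
    Set.Iio t₀ ⊆ interior (integrableExpSet S P) := by
  refine interior_maximal (fun t ht => ?_) isOpen_Iio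
  refine Integrable.mono' ht₀ (by fun_prop) ?_
  filter_upwards [hS₀] with ω hω
  rw [Real.norm_of_nonneg (Real.exp_pos _).le]
  exact Real.exp_le_exp.2 (mul_le_mul_of_nonneg_right (le_of_lt ht) hω)

lemma map_eq_map_of_mgf_eqOn_Ici [IsProbabilityMeasure P] [IsFiniteMeasure P']
    {S : Ω → ℝ} {S' : Ω' → ℝ} (hS : AEMeasurable S P) (hS' : AEMeasurable S' P')
    (hS₀ : 0 ≤ᵐ[P] S) (hS'₀ : 0 ≤ᵐ[P'] S') {t₀ : ℝ} (ht₀ : 0 < t₀)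
    (hint : t₀ ∈ integrableExpSet S P) (heq : Set.EqOn (mgf S P) (mgf S' P') (Set.Ici 0)) :
    P.map S = P'.map S' := by
  have hint' : t₀ ∈ integrableExpSet S' P' := by
    by_contra h
    exact (mgf_pos hint).ne' ((heq ht₀.le).trans (mgf_undef h))
  have hI := Iio_subset_interior_integrableExpSet hS hS₀ hint
  have hI' := Iio_subset_interior_integrableExpSet hS' hS'₀ hint'
  have hneg : Set.EqOn (mgf S P) (mgf S' P') (Set.Iio t₀) := by
    refine AnalyticOnNhd.eqOn_of_preconnected_of_eventuallyEq (z₀ := t₀ / 2)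
      (analyticOnNhd_mgf.mono hI) (analyticOnNhd_mgf.mono hI') isPreconnected_Iio
      (half_lt_self ht₀) ?_
    filter_upwards [lt_mem_nhds (half_pos ht₀)] with t ht using heq ht.le
  have hmgf : mgf S P = mgf S' P' := funext fun t =>
    (le_or_gt 0 t).elim (fun ht => heq ht) fun ht => hneg (ht.trans ht₀)
  have := Measure.isProbabilityMeasure_map hS
  refine Measure.ext_of_charFun (funext fun t => ?_)
  rw [← complexMGF_mul_I hS, ← complexMGF_mul_I hS']
  exact eqOn_complexMGF_of_mgf hmgf (by simpa using hI ht₀)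

lemma map_eq_map_of_lintegral_exp_eq [IsProbabilityMeasure P] [IsFiniteMeasure P']
    {S : Ω → ℝ} {S' : Ω' → ℝ} (hS : AEMeasurable S P) (hS' : AEMeasurable S' P')
    (hS₀ : 0 ≤ᵐ[P] S) (hS'₀ : 0 ≤ᵐ[P'] S')
    (heq : ∀ t, 0 ≤ t → ∫⁻ ω, ENNReal.ofReal (Real.exp (t * S ω)) ∂P =
      ∫⁻ ω, ENNReal.ofReal (Real.exp (t * S' ω)) ∂P')
    (hfin : ∃ t, 0 < t ∧ ∫⁻ ω, ENNReal.ofReal (Real.exp (t * S ω)) ∂P ≠ ∞) :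
    P.map S = P'.map S' := by
  obtain ⟨t₀, ht₀, hfin⟩ := hfin
  have hexp (t : ℝ) : 0 ≤ᵐ[P] fun ω => Real.exp (t * S ω) :=
    ae_of_all _ fun _ => (Real.exp_pos _).le
  refine map_eq_map_of_mgf_eqOn_Ici hS hS' hS₀ hS'₀ ht₀ ?_ fun t ht => ?_
  · exact (lintegral_ofReal_ne_top_iff_integrable (by fun_prop) (hexp t₀)).1 hfin
  · rw [mgf, mgf, integral_eq_lintegral_of_nonneg_ae (hexp t) (by fun_prop),
      integral_eq_lintegral_of_nonneg_ae (ae_of_all _ fun _ => (Real.exp_pos _).le) (by fun_prop),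
      heq t ht]

end Mgf

section WeightedSums

lemma exists_measurable_leftInverse_weightedSum (ι : Type*) [Fintype ι] :
    ∃ (w : ι → ℝ≥0) (D : ℝ → ι → ℕ), Measurable D ∧
      ∀ n : ι → ℕ, D (∑ j, (w j : ℝ) * n j) = n := by
  obtain ⟨p, hp, hp_inj⟩ : ∃ p : ι → ℕ, (∀ j, (p j).Prime) ∧ p.Injective := by
    obtain ⟨f, hf⟩ := Countable.exists_injective_nat ι
    exact ⟨fun j => Nat.nth Nat.Prime (f j), fun j => Nat.prime_nth_prime _,
      (Nat.nth_injective Nat.infinite_setOfPred_prime).comp hf⟩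
  refine ⟨fun j => (Real.log (p j)).toNNReal,
    fun v j => ⌊Real.exp v⌋₊.factorization (p j), ?_, fun n => ?_⟩
  · exact measurable_pi_lambda _ fun j =>
      (measurable_from_nat (f := fun m => m.factorization (p j))).comp
        (Nat.measurable_floor.comp Real.measurable_exp)
  · have hexp : Real.exp (∑ j, Real.log (p j) * n j) = (∏ j, p j ^ n j : ℕ) := by
      rw [Real.exp_sum, Nat.cast_prod]
      refine Finset.prod_congr rfl fun j _ => ?_
      rw [mul_comm, Real.exp_nat_mul, Real.exp_log (by exact_mod_cast (hp j).pos), Nat.cast_pow]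
    ext j
    simp only [Real.coe_toNNReal _ (Real.log_natCast_nonneg _)]
    rw [hexp, Nat.floor_natCast, Nat.factorization_prod fun i _ => pow_ne_zero _ (hp i).ne_zero,
      Finsupp.finsetSum_apply, Finset.sum_eq_single j]
    · simp [(hp j).factorization_pow]
    · intro i _ hij
      simp [(hp i).factorization_pow, hp_inj.ne hij]
    · simp

end WeightedSums

section PointConfigurations

variable {α E F : Type*} [MeasurableSpace E] [MeasurableSpace F]

/-- The `σ`-algebra on `E ∪ {∂}` (`∂ = none`) generated by the measurable subsets of `E`
and `{∂}`. -/
instance : MeasurableSpace (Option E) := .map some inferInstance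

lemma measurable_option_elim {f : E → ℝ≥0∞} (hf : Measurable f) :
    Measurable fun o : Option E => o.elim 0 f :=
  measurable_iff_le_map.2 fun _ hA => hf hA

lemma measurableEmbedding_some : MeasurableEmbedding (some : E → Option E) where
  injective := Option.some_injective E
  measurable _ hA := hA
  measurableSet_image' A hA := by
    change MeasurableSet (some ⁻¹' (some '' A))
    rwa [Set.preimage_image_eq _ (Option.some_injective E)]

lemma measurableEmbedding_comp_left {κ : Type*} [Countable κ] {f : E → F}
    (hf : MeasurableEmbedding f) : MeasurableEmbedding fun y : κ → E => f ∘ y := by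
  have hrange : Set.range (fun y : κ → E => f ∘ y) = Set.univ.pi fun _ => Set.range f := by
    ext z
    simp [funext_iff, Classical.skolem, eq_comm]
  have hmem (z : Set.range fun y : κ → E => f ∘ y) (i : κ) : z.1 i ∈ Set.range f := by
    obtain ⟨_, y, rfl⟩ := z
    exact ⟨y i, rfl⟩
  refine .of_measurable_inverse_on_range (g := fun z i => hf.equivRange.symm ⟨z.1 i, hmem z i⟩)
    (measurable_pi_lambda _ fun i => hf.measurable.comp (measurable_pi_apply i)) ?_ ?_ ?_
  · rw [hrange]
    exact MeasurableSet.univ_pi fun _ => hf.measurableSet_range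
  · exact measurable_pi_lambda _ fun i => hf.equivRange.symm.measurable.comp
      ((measurable_pi_apply i).comp measurable_subtype_coe).subtype_mk
  · intro y
    funext i
    exact hf.equivRange_symm_apply_mk (y i)

lemma measurableEmbedding_some_comp {κ : Type*} [Countable κ] :
    MeasurableEmbedding fun y : κ → E => some ∘ y :=
  measurableEmbedding_comp_left measurableEmbedding_some

/-- The counting measure, with multiplicities, of a family of points of `E`; members equal to
`∂ = none` are ignored. -/
def pointMeasure (x : α → Option E) : Measure E :=
  Measure.sum fun i => (x i).elim 0 Measure.dirac

lemma lintegral_pointMeasure (x : α → Option E) {f : E → ℝ≥0∞} (hf : Measurable f) :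
    ∫⁻ y, f y ∂pointMeasure x = ∑' i, (x i).elim 0 f := by
  rw [pointMeasure, lintegral_sum_measure]
  refine tsum_congr fun i => ?_
  cases x i with
  | none => simp
  | some y => simp [lintegral_dirac' y hf]

lemma pointMeasure_apply (x : α → Option E) {A : Set E} (hA : MeasurableSet A) :
    pointMeasure x A = ∑' i, (some '' A).indicator 1 (x i) := by
  rw [← lintegral_indicator_one hA, lintegral_pointMeasure x (measurable_one.indicator hA)]
  refine tsum_congr fun i => ?_
  classical
  cases x i <;> simp [Set.indicator_apply]

lemma pointMeasure_apply_eq_encard (x : α → Option E) {A : Set E} (hA : MeasurableSet A) :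
    pointMeasure x A = (x ⁻¹' (some '' A)).encard := by
  rw [pointMeasure_apply x hA, ← ENNReal.tsum_set_one, tsum_subtype _ fun _ => (1 : ℝ≥0∞)]
  rfl

variable {Ω : Type*} [MeasurableSpace Ω] [Countable α] {X : α → Ω → Option E}

lemma measurable_lintegral_pointMeasure (hX : ∀ i, Measurable (X i)) {f : E → ℝ≥0∞}
    (hf : Measurable f) : Measurable fun ω => ∫⁻ y, f y ∂pointMeasure (X · ω) := by
  simp_rw [lintegral_pointMeasure _ hf]
  exact Measurable.tsum fun i => (measurable_option_elim hf).comp (hX i)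

lemma measurable_pointMeasure_apply (hX : ∀ i, Measurable (X i)) {A : Set E}
    (hA : MeasurableSet A) : Measurable fun ω => pointMeasure (X · ω) A := by
  simpa only [lintegral_indicator_one hA] using
    measurable_lintegral_pointMeasure hX (measurable_one.indicator hA)

end PointConfigurations

section FactorialMoments

variable {α E Ω : Type*} [MeasurableSpace E] [MeasurableSpace Ω]

/-- The `n`-th factorial moment measure `A ↦ 𝔼 ∑ 1{(X i₁, …, X iₙ) ∈ A}` (the sum being over
`n`-tuples of distinct indices) of a family of random points, where `∂ = none` stands for an
absent point. -/
def factorialMomentMeasure (P : Measure Ω) (X : α → Ω → Option E) (n : ℕ) :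
    Measure (Fin n → E) :=
  Measure.sum fun e : Fin n ↪ α => (P.map fun ω l => X (e l) ω).comap (some ∘ ·)

variable {P : Measure Ω} {X : α → Ω → Option E}

lemma factorialMomentMeasure_apply [Countable α] (hX : ∀ i, Measurable (X i)) {n : ℕ}
    {A : Set (Fin n → E)} (hA : MeasurableSet A) :
    factorialMomentMeasure P X n A = ∫⁻ ω, ∑' e : Fin n ↪ α,
      ((some ∘ ·) '' A).indicator 1 (fun l => X (e l) ω) ∂P := by
  have hcount : Countable (Fin n ↪ α) := DFunLike.coe_injective.countable
  have hsome := measurableEmbedding_some_comp (E := E) (κ := Fin n)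
  have hA' := hsome.measurableSet_image' hA
  have hind : Measurable (((some ∘ ·) '' A).indicator (1 : (Fin n → Option E) → ℝ≥0∞)) :=
    measurable_one.indicator hA'
  rw [lintegral_tsum fun e => by fun_prop, factorialMomentMeasure, Measure.sum_apply _ hA]
  refine tsum_congr fun e => ?_
  rw [hsome.comap_apply, ← lintegral_indicator_one hA', lintegral_map hind (by fun_prop)]

lemma lintegral_prod_comap_some {n : ℕ} (Q : Measure (Fin n → Option E)) (g : E → ℝ≥0∞) :
    ∫⁻ y, ∏ l, g (y l) ∂Q.comap (some ∘ ·) = ∫⁻ z, ∏ l, (z l).elim 0 g ∂Q := by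
  have hsome := measurableEmbedding_some_comp (E := E) (κ := Fin n)
  have hsupp : (Function.support fun z : Fin n → Option E => ∏ l, (z l).elim 0 g) ⊆
      Set.range fun y : Fin n → E => some ∘ y := by
    intro z hz
    have hz' (l) : ∃ y, some y = z l := by
      have := Finset.prod_ne_zero_iff.1 hz l (Finset.mem_univ l)
      cases hl : z l <;> simp_all
    choose y hy using hz'
    exact ⟨y, funext hy⟩
  rw [← setLIntegral_eq_of_support_subset hsupp, ← hsome.map_comap, hsome.lintegral_map]
  rfl

lemma lintegral_prod_factorialMomentMeasure (hX : ∀ i, Measurable (X i)) (n : ℕ)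
    {g : E → ℝ≥0∞} (hg : Measurable g) :
    ∫⁻ y, ∏ l, g (y l) ∂factorialMomentMeasure P X n =
      ∑' e : Fin n ↪ α, ∫⁻ ω, ∏ l, (X (e l) ω).elim 0 g ∂P := by
  rw [factorialMomentMeasure, lintegral_sum_measure]
  refine tsum_congr fun e => ?_
  have helim := measurable_option_elim hg
  rw [lintegral_prod_comap_some, lintegral_map (by fun_prop) (by fun_prop)]

lemma factorialMomentMeasure_zero (hX : ∀ i, Measurable (X i)) :
    factorialMomentMeasure P X 0 = P Set.univ • Measure.dirac finZeroElim := by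
  have huniv : factorialMomentMeasure P X 0 Set.univ = P Set.univ := by
    simpa [tsum_fintype] using
      lintegral_prod_factorialMomentMeasure (P := P) hX 0 (measurable_const (a := (0 : ℝ≥0∞)))
  refine Measure.ext fun A _ => ?_
  rcases A.eq_empty_or_nonempty with rfl | hA
  · simp
  · simp [Subsingleton.eq_univ_of_nonempty hA, huniv]

lemma lintegral_pointMeasure_apply [Countable α] (hX : ∀ i, Measurable (X i)) {U : Set E}
    (hU : MeasurableSet U) :
    ∫⁻ ω, pointMeasure (X · ω) U ∂P = factorialMomentMeasure P X 1 (Set.univ.pi fun _ => U) := by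
  have hind : Measurable (U.indicator (1 : E → ℝ≥0∞)) := measurable_one.indicator hU
  have hprod (y : Fin 1 → E) : (Set.univ.pi fun _ => U).indicator (1 : (Fin 1 → E) → ℝ≥0∞) y =
      ∏ l, U.indicator (1 : E → ℝ≥0∞) (y l) := by
    classical
    simp [Set.indicator_apply, Set.mem_pi]
  simp_rw [← lintegral_indicator_one hU, lintegral_pointMeasure _ hind]
  have helim := measurable_option_elim hind
  rw [lintegral_tsum fun i => by fun_prop,
    ← lintegral_indicator_one (.univ_pi fun _ => hU), lintegral_congr hprod,
    lintegral_prod_factorialMomentMeasure hX 1 hind,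
    ← (Equiv.uniqueEmbeddingEquivResult (α := Fin 1)).symm.tsum_eq]
  simp only [Finset.univ_unique, Fin.default_eq_zero, Fin.isValue, Finset.prod_singleton]
  rfl

end FactorialMoments

section LinearStatistics

variable {α E Ω : Type*} [MeasurableSpace E] [MeasurableSpace Ω] {P : Measure Ω}
  {X : α → Ω → Option E}

lemma lintegral_tsum_finset_prod_elim [Countable α] (hX : ∀ i, Measurable (X i)) {g : E → ℝ≥0∞}
    (hg : Measurable g) :
    ∫⁻ ω, ∑' s : Finset α, ∏ i ∈ s, (X i ω).elim 0 g ∂P =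
      ∑' n : ℕ, (n.factorial : ℝ≥0∞)⁻¹ * ∫⁻ y, ∏ l, g (y l) ∂factorialMomentMeasure P X n := by
  have hcount (n : ℕ) : Countable (Fin n ↪ α) := DFunLike.coe_injective.countable
  have helim := measurable_option_elim hg
  simp_rw [tsum_finset_prod_eq_tsum_embedding fun i => (X i _).elim 0 g,
    lintegral_prod_factorialMomentMeasure hX _ hg]
  rw [lintegral_tsum fun n => by fun_prop]
  refine tsum_congr fun n => ?_
  rw [lintegral_const_mul _ (by fun_prop), lintegral_tsum fun e => by fun_prop]

lemma ofReal_exp_lintegral_pointMeasure (x : α → Option E) {φ : E → ℝ≥0∞} (hφ : Measurable φ)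
    (hfin : ∫⁻ y, φ y ∂pointMeasure x ≠ ∞) {t : ℝ} (ht : 0 ≤ t) :
    ENNReal.ofReal (Real.exp (t * (∫⁻ y, φ y ∂pointMeasure x).toReal)) =
      ∑' s : Finset α, ∏ i ∈ s,
        (x i).elim 0 fun y => ENNReal.ofReal (Real.exp (t * (φ y).toReal) - 1) := by
  rw [lintegral_pointMeasure x hφ] at hfin ⊢
  rw [ENNReal.tsum_toReal_eq fun i => ne_top_of_le_ne_top hfin (ENNReal.le_tsum i),
    ← tsum_mul_left, ofReal_exp_tsum_eq_tsum_finset_prod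
      ((ENNReal.summable_toReal hfin).mul_left t) fun i => by positivity]
  refine tsum_congr fun s => Finset.prod_congr rfl fun i _ => ?_
  cases x i <;> simp

lemma lintegral_exp_lintegral_pointMeasure [Countable α] (hX : ∀ i, Measurable (X i))
    {φ : E → ℝ≥0∞} (hφ : Measurable φ) (hfin : ∀ᵐ ω ∂P, ∫⁻ y, φ y ∂pointMeasure (X · ω) ≠ ∞) {t : ℝ}
    (ht : 0 ≤ t) :
    ∫⁻ ω, ENNReal.ofReal (Real.exp (t * (∫⁻ y, φ y ∂pointMeasure (X · ω)).toReal)) ∂P =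
      ∑' n : ℕ, (n.factorial : ℝ≥0∞)⁻¹ * ∫⁻ y, ∏ l,
        ENNReal.ofReal (Real.exp (t * (φ (y l)).toReal) - 1) ∂factorialMomentMeasure P X n := by
  rw [← lintegral_tsum_finset_prod_elim hX
    (g := fun y => ENNReal.ofReal (Real.exp (t * (φ y).toReal) - 1)) (by fun_prop)]
  refine lintegral_congr_ae ?_
  filter_upwards [hfin] with ω hω using ofReal_exp_lintegral_pointMeasure _ hφ hω ht

end LinearStatistics

section ExponentialGrowth

variable {E : Type*} [MeasurableSpace E]

lemma lintegral_prod_le_pow_mul {n : ℕ} {μ : Measure (Fin n → E)} {U : Set E}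
    (hU : MeasurableSet U) {g : E → ℝ≥0∞} {δ : ℝ≥0∞} (hgδ : ∀ y, g y ≤ U.indicator (fun _ => δ) y) :
    ∫⁻ y, ∏ l, g (y l) ∂μ ≤ δ ^ n * μ (Set.univ.pi fun _ => U) := by
  have hprod (y : Fin n → E) :
      ∏ l, g (y l) ≤ (Set.univ.pi fun _ => U).indicator (fun _ => δ ^ n) y := by
    by_cases hy : y ∈ Set.univ.pi fun _ => U
    · rw [Set.indicator_of_mem hy]
      simpa using Finset.prod_le_pow_card Finset.univ (fun l => g (y l)) δ fun l _ =>
        (hgδ (y l)).trans (Set.indicator_le_self _ _ _)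
    · obtain ⟨l, hl⟩ : ∃ l, y l ∉ U := by simpa [Set.mem_pi] using hy
      have hzero : g (y l) = 0 := by simpa [hl] using hgδ (y l)
      simp [Finset.prod_eq_zero (f := fun l => g (y l)) (Finset.mem_univ l) hzero]
  exact (lintegral_mono hprod).trans_eq (lintegral_indicator_const (.univ_pi fun _ => hU) _)

lemma tsum_inv_factorial_mul_lintegral_prod_ne_top {μ : (n : ℕ) → Measure (Fin n → E)}
    {U : Set E} (hU : MeasurableSet U) {C δ : ℝ≥0∞} (hδ : δ * C < 1)
    (hμ : ∀ n, μ n (Set.univ.pi fun _ => U) ≤ n.factorial * C ^ n)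
    {g : E → ℝ≥0∞} (hg : ∀ y, g y ≤ U.indicator (fun _ => δ) y) :
    ∑' n : ℕ, (n.factorial : ℝ≥0∞)⁻¹ * ∫⁻ y, ∏ l, g (y l) ∂μ n ≠ ∞ := by
  refine ne_top_of_le_ne_top (b := ∑' n : ℕ, (δ * C) ^ n) ?_ (ENNReal.tsum_le_tsum fun n => ?_)
  · rw [ENNReal.tsum_geometric]
    exact ENNReal.inv_ne_top.2 (tsub_pos_of_lt hδ).ne'
  · calc (n.factorial : ℝ≥0∞)⁻¹ * ∫⁻ y, ∏ l, g (y l) ∂μ n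
        ≤ (n.factorial : ℝ≥0∞)⁻¹ * (δ ^ n * (n.factorial * C ^ n)) := by
          gcongr
          exact (lintegral_prod_le_pow_mul hU hg).trans (by gcongr; exact hμ n)
      _ = (n.factorial : ℝ≥0∞)⁻¹ * n.factorial * (δ * C) ^ n := by ring
      _ = (δ * C) ^ n := by
          rw [ENNReal.inv_mul_cancel (by exact_mod_cast n.factorial_ne_zero)
            (ENNReal.natCast_ne_top _), one_mul]

lemma exists_pos_ofReal_exp_mul_sub_one_mul_lt_one (c : ℝ) {C : ℝ≥0∞} (hC : C ≠ ∞) :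
    ∃ t, 0 < t ∧ ENNReal.ofReal (Real.exp (t * c) - 1) * C < 1 := by
  have hlim : Filter.Tendsto (fun t => ENNReal.ofReal (Real.exp (t * c) - 1) * C)
      (nhds 0) (nhds 0) := by
    have hcont : Continuous fun t => ENNReal.ofReal (Real.exp (t * c) - 1) :=
      ENNReal.continuous_ofReal.comp (by fun_prop)
    simpa using ENNReal.Tendsto.mul_const (hcont.tendsto 0) (.inr hC)
  obtain ⟨ε, hε, hlt⟩ := Metric.eventually_nhds_iff.1 (hlim.eventually_lt_const zero_lt_one)
  exact ⟨ε / 2, half_pos hε, hlt (by simpa [abs_of_pos hε] using half_lt_self hε)⟩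

end ExponentialGrowth

section WeightedIndicators

variable {E ι : Type*} [Fintype ι] {B : ι → Set E}

lemma sum_indicator_le_indicator_iUnion (w : ι → ℝ≥0) (y : E) :
    ∑ j, (B j).indicator (fun _ => (w j : ℝ≥0∞)) y ≤
      (⋃ j, B j).indicator (fun _ => ((∑ j, w j : ℝ≥0) : ℝ≥0∞)) y := by
  by_cases hy : y ∈ ⋃ j, B j
  · rw [Set.indicator_of_mem hy, ENNReal.ofNNReal_finsetSum]
    exact Finset.sum_le_sum fun j _ => Set.indicator_le_self _ _ _
  · rw [Set.indicator_of_notMem hy]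
    simp_all

variable [MeasurableSpace E]

lemma measurable_sum_indicator (hB : ∀ i, MeasurableSet (B i)) (w : ι → ℝ≥0) :
    Measurable fun y => ∑ j, (B j).indicator (fun _ => (w j : ℝ≥0∞)) y :=
  Finset.measurable_fun_sum _ fun j _ => measurable_const.indicator (hB j)

lemma lintegral_sum_indicator_pointMeasure_toReal {α : Type*} (x : α → Option E)
    (hB : ∀ i, MeasurableSet (B i)) {N : ι → ℕ} (hN : ∀ i, pointMeasure x (B i) = N i)
    (w : ι → ℝ≥0) :
    (∫⁻ y, ∑ j, (B j).indicator (fun _ => (w j : ℝ≥0∞)) y ∂pointMeasure x).toReal =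
      ∑ j, (w j : ℝ) * N j := by
  rw [lintegral_finsetSum _ fun j _ => measurable_const.indicator (hB j)]
  simp_rw [lintegral_indicator_const (hB _), hN]
  rw [ENNReal.toReal_sum fun j _ => by finiteness]
  simp

end WeightedIndicators

section Uniqueness

variable {α β E Ω Ω' : Type*} [Countable α] [Countable β] [MeasurableSpace E]
  [MeasurableSpace Ω] [MeasurableSpace Ω'] {P : Measure Ω} {P' : Measure Ω'}
  {X : α → Ω → Option E} {X' : β → Ω' → Option E}

lemma ae_pointMeasure_ne_top (hX : ∀ i, Measurable (X i)) {U : Set E} (hU : MeasurableSet U)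
    (hmom : factorialMomentMeasure P X 1 (Set.univ.pi fun _ => U) ≠ ∞) :
    ∀ᵐ ω ∂P, pointMeasure (X · ω) U ≠ ∞ := by
  rw [← lintegral_pointMeasure_apply hX hU] at hmom
  filter_upwards [ae_lt_top (measurable_pointMeasure_apply hX hU) hmom] with ω hω using hω.ne

lemma ae_lintegral_pointMeasure_ne_top (hX : ∀ i, Measurable (X i)) {U : Set E}
    (hU : MeasurableSet U) (hmom : factorialMomentMeasure P X 1 (Set.univ.pi fun _ => U) ≠ ∞)
    {φ : E → ℝ≥0∞} {c : ℝ≥0} (hφ : ∀ y, φ y ≤ U.indicator (fun _ => (c : ℝ≥0∞)) y) :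
    ∀ᵐ ω ∂P, ∫⁻ y, φ y ∂pointMeasure (X · ω) ≠ ∞ := by
  filter_upwards [ae_pointMeasure_ne_top hX hU hmom] with ω hω
  refine ne_top_of_le_ne_top (ENNReal.mul_ne_top (ENNReal.coe_ne_top (r := c)) hω) ?_
  exact (lintegral_mono hφ).trans_eq (lintegral_indicator_const hU _)

lemma exists_lintegral_exp_ne_top (hX : ∀ i, Measurable (X i)) {U : Set E}
    (hU : MeasurableSet U) {C : ℝ≥0∞} (hC : C ≠ ∞)
    (hmom : ∀ n, factorialMomentMeasure P X n (Set.univ.pi fun _ => U) ≤ n.factorial * C ^ n)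
    {φ : E → ℝ≥0∞} (hφ : Measurable φ) {c : ℝ≥0}
    (hφc : ∀ y, φ y ≤ U.indicator (fun _ => (c : ℝ≥0∞)) y) :
    ∃ t, 0 < t ∧
      ∫⁻ ω, ENNReal.ofReal (Real.exp (t * (∫⁻ y, φ y ∂pointMeasure (X · ω)).toReal)) ∂P ≠ ∞ := by
  obtain ⟨t, ht, hδ⟩ := exists_pos_ofReal_exp_mul_sub_one_mul_lt_one c hC
  have hmom₁ : factorialMomentMeasure P X 1 (Set.univ.pi fun _ => U) ≠ ∞ :=
    ne_top_of_le_ne_top (by finiteness) (hmom 1)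
  refine ⟨t, ht, ?_⟩
  rw [lintegral_exp_lintegral_pointMeasure hX hφ
    (ae_lintegral_pointMeasure_ne_top hX hU hmom₁ hφc) ht.le]
  refine tsum_inv_factorial_mul_lintegral_prod_ne_top hU hδ hmom
    (g := fun y => ENNReal.ofReal (Real.exp (t * (φ y).toReal) - 1)) fun y => ?_
  by_cases hy : y ∈ U
  · have : (φ y).toReal ≤ c := ENNReal.toReal_le_coe_of_le_coe (by simpa [hy] using hφc y)
    rw [Set.indicator_of_mem hy]
    gcongr
  · have : φ y = 0 := by simpa [hy] using hφc y
    simp [this]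

lemma map_lintegral_pointMeasure_eq [IsProbabilityMeasure P] [IsProbabilityMeasure P']
    (hX : ∀ i, Measurable (X i)) (hX' : ∀ i, Measurable (X' i))
    (hmom : ∀ n, factorialMomentMeasure P X n = factorialMomentMeasure P' X' n)
    {U : Set E} (hU : MeasurableSet U) {C : ℝ≥0∞} (hC : C ≠ ∞)
    (hgrowth : ∀ n, factorialMomentMeasure P X n (Set.univ.pi fun _ => U) ≤ n.factorial * C ^ n)
    {φ : E → ℝ≥0∞} (hφ : Measurable φ) {c : ℝ≥0}
    (hφc : ∀ y, φ y ≤ U.indicator (fun _ => (c : ℝ≥0∞)) y) :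
    P.map (fun ω => (∫⁻ y, φ y ∂pointMeasure (X · ω)).toReal) =
      P'.map (fun ω => (∫⁻ y, φ y ∂pointMeasure (X' · ω)).toReal) := by
  have hmom₁ : factorialMomentMeasure P X 1 (Set.univ.pi fun _ => U) ≠ ∞ :=
    ne_top_of_le_ne_top (by finiteness) (hgrowth 1)
  refine map_eq_map_of_lintegral_exp_eq
    (measurable_lintegral_pointMeasure hX hφ).ennreal_toReal.aemeasurable
    (measurable_lintegral_pointMeasure hX' hφ).ennreal_toReal.aemeasurable
    (ae_of_all _ fun _ => ENNReal.toReal_nonneg) (ae_of_all _ fun _ => ENNReal.toReal_nonneg)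
    (fun t ht => ?_) (exists_lintegral_exp_ne_top hX hU hC hgrowth hφ hφc)
  rw [lintegral_exp_lintegral_pointMeasure hX hφ
      (ae_lintegral_pointMeasure_ne_top hX hU hmom₁ hφc) ht,
    lintegral_exp_lintegral_pointMeasure hX' hφ
      (ae_lintegral_pointMeasure_ne_top hX' hU (hmom 1 ▸ hmom₁) hφc) ht]
  simp_rw [hmom]

variable {ι : Type*} [Fintype ι] {B : ι → Set E}

lemma map_pointMeasure_apply_eq_map_leftInverse (hX : ∀ i, Measurable (X i))
    (hB : ∀ i, MeasurableSet (B i)) (hfin : ∀ᵐ ω ∂P, pointMeasure (X · ω) (⋃ i, B i) ≠ ∞)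
    {w : ι → ℝ≥0} {D : ℝ → ι → ℕ} (hD : Measurable D)
    (hDw : ∀ n : ι → ℕ, D (∑ j, (w j : ℝ) * n j) = n) :
    P.map (fun ω i => pointMeasure (X · ω) (B i)) =
      (P.map fun ω => (∫⁻ y, ∑ j, (B j).indicator (fun _ => (w j : ℝ≥0∞)) y
        ∂pointMeasure (X · ω)).toReal).map fun v i => (D v i : ℝ≥0∞) := by
  have hφ := measurable_sum_indicator hB w
  rw [Measure.map_map (by fun_prop) (measurable_lintegral_pointMeasure hX hφ).ennreal_toReal]
  refine Measure.map_congr ?_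
  filter_upwards [hfin] with ω hω
  have hnat (i) : ∃ n : ℕ, pointMeasure (X · ω) (B i) = n := by
    have h := measure_ne_top_of_subset (Set.subset_iUnion B i) hω
    rw [pointMeasure_apply_eq_encard _ (hB i)] at h ⊢
    obtain ⟨n, hn⟩ := ENat.ne_top_iff_exists.1 (ENat.toENNReal_ne_top.1 h)
    exact ⟨n, by simp [← hn]⟩
  choose N hN using hnat
  ext i
  simp [lintegral_sum_indicator_pointMeasure_toReal _ hB hN, hDw, hN]

end Uniqueness

theorem stmt8_general {α β E Ω Ω' ι : Type*} [Countable α] [Countable β] [MeasurableSpace E]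
    [MeasurableSpace Ω] [MeasurableSpace Ω'] [Finite ι] {P : Measure Ω} {P' : Measure Ω'}
    [IsProbabilityMeasure P] [IsProbabilityMeasure P']
    {X : α → Ω → Option E} {X' : β → Ω' → Option E}
    (hX : ∀ i, Measurable (X i)) (hX' : ∀ i, Measurable (X' i))
    (hmom : ∀ n, 0 < n → factorialMomentMeasure P X n = factorialMomentMeasure P' X' n)
    {B : ι → Set E} (hB : ∀ i, MeasurableSet (B i))
    (hgrowth : ∃ C ≠ ∞, ∀ n, 0 < n →
      factorialMomentMeasure P X n (Set.univ.pi fun _ => ⋃ i, B i) ≤ n.factorial * C ^ n) :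
    P.map (fun ω i => pointMeasure (X · ω) (B i)) =
      P'.map fun ω i => pointMeasure (X' · ω) (B i) := by
  have := Fintype.ofFinite ι
  obtain ⟨C, hC, hgrowth⟩ := hgrowth
  have hmom' (n) : factorialMomentMeasure P X n = factorialMomentMeasure P' X' n := by
    rcases n.eq_zero_or_pos with rfl | hn
    · simp [factorialMomentMeasure_zero hX, factorialMomentMeasure_zero hX']
    · exact hmom n hn
  have hgrowth' (n) :
      factorialMomentMeasure P X n (Set.univ.pi fun _ => ⋃ i, B i) ≤ n.factorial * C ^ n := by
    rcases n.eq_zero_or_pos with rfl | hn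
    · simp [factorialMomentMeasure_zero hX]
    · exact hgrowth n hn
  obtain ⟨w, D, hD, hDw⟩ := exists_measurable_leftInverse_weightedSum ι
  have hU : MeasurableSet (⋃ i, B i) := .iUnion hB
  have hmom₁ : factorialMomentMeasure P X 1 (Set.univ.pi fun _ => ⋃ i, B i) ≠ ∞ :=
    ne_top_of_le_ne_top (by finiteness) (hgrowth 1 one_pos)
  rw [map_pointMeasure_apply_eq_map_leftInverse hX hB (ae_pointMeasure_ne_top hX hU hmom₁) hD hDw,
    map_pointMeasure_apply_eq_map_leftInverse hX' hB
      (ae_pointMeasure_ne_top hX' hU (hmom' 1 ▸ hmom₁)) hD hDw,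
    map_lintegral_pointMeasure_eq hX hX' hmom' hU hC hgrowth' (measurable_sum_indicator hB w)
      (sum_indicator_le_indicator_iUnion w)]

section EuclideanSpace

variable {k : ℕ} {Ω : Type*} [MeasurableSpace Ω]

lemma OptMeasurable.measurable {X : Ω → Option (Fin k → ℝ)} (hX : OptMeasurable X) :
    Measurable X := by
  have hsome {A : Set (Option (Fin k → ℝ))} (hA : MeasurableSet A) :
      MeasurableSet {ω | X ω ∈ some '' (some ⁻¹' A)} := hX _ hA
  intro A hA
  by_cases hnone : none ∈ A
  · convert (hsome hA.compl).compl using 1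
    ext ω
    cases h : X ω <;> simp [h, hnone]
  · convert hsome hA using 1
    ext ω
    cases h : X ω <;> simp [h, hnone]

lemma Forms.eq_pointMeasure {X : ℕ → Ω → Option (Fin k → ℝ)} {M : Ω → Measure (Fin k → ℝ)}
    (h : Forms X M) (ω : Ω) : M ω = pointMeasure (X · ω) :=
  Measure.ext fun A hA => (h ω A hA).trans (pointMeasure_apply _ hA).symm

lemma IsFactorialMomentMeasure.eq_factorialMomentMeasure {P : Measure Ω}
    {X : ℕ → Ω → Option (Fin k → ℝ)} (hX : ∀ i, Measurable (X i)) {n : ℕ}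
    {μ : Measure (Fin n → (Fin k → ℝ))} (hμ : IsFactorialMomentMeasure P X n μ) :
    μ = factorialMomentMeasure P X n := by
  refine Measure.ext fun A hA => ?_
  rw [hμ A hA, factorialMomentMeasure_apply hX hA]
  refine lintegral_congr fun ω => ?_
  have hmem (i : Fin n → ℕ) : (∃ y ∈ A, ∀ l, X (i l) ω = some (y l)) ↔
      (fun l => X (i l) ω) ∈ (some ∘ ·) '' A := by
    simp [funext_iff, eq_comm]
  simp_rw [hmem, Set.ofPred_and, ← Set.indicator_indicator]
  rw [← tsum_subtype, ← (Equiv.subtypeInjectiveEquivEmbedding (Fin n) ℕ).tsum_eq]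
  rfl

variable {K : (Fin k → ℝ) → (Fin k → ℝ) → ℂ} {lam : Measure (Fin k → ℝ)}
  {μ μ' : (n : ℕ) → Measure (Fin n → (Fin k → ℝ))}

lemma hasDetMoments_factorialMomentMeasure {P : Measure Ω} {X : ℕ → Ω → Option (Fin k → ℝ)}
    (hX : ∀ i, OptMeasurable (X i)) (hμ : ∀ n, IsFactorialMomentMeasure P X n (μ n))
    (hdet : HasDetMoments k K lam μ) : HasDetMoments k K lam (factorialMomentMeasure P X) :=
  funext (fun n => (hμ n).eq_factorialMomentMeasure fun i => (hX i).measurable) ▸ hdet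

lemma HasDetMoments.eq (h : HasDetMoments k K lam μ) (h' : HasDetMoments k K lam μ') {n : ℕ}
    (hn : 0 < n) : μ n = μ' n :=
  Measure.ext fun A hA => (h n hn A hA).trans (h' n hn A hA).symm

lemma ofReal_re_det_le {n : ℕ} {A : Matrix (Fin n) (Fin n) ℂ} {c : ℝ} (hc : 0 ≤ c)
    (hA : ∀ i j, ‖A i j‖ ≤ c) :
    ENNReal.ofReal A.det.re ≤ n.factorial * ENNReal.ofReal c ^ n := by
  rw [← ENNReal.ofReal_natCast, ← ENNReal.ofReal_pow hc, ← ENNReal.ofReal_mul (by positivity)]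
  refine ENNReal.ofReal_le_ofReal ((Complex.re_le_norm _).trans ?_)
  exact (Matrix.det_le (abv := NormedField.toAbsoluteValue ℂ) hA).trans_eq (by simp)

lemma HasDetMoments.exists_apply_univ_pi_le [IsLocallyFiniteMeasure lam]
    (h : HasDetMoments k K lam μ)
    (hK : ∀ B : Set ((Fin k → ℝ) × (Fin k → ℝ)), Bornology.IsBounded B →
      ∃ c : ℝ, ∀ p ∈ B, ‖K p.1 p.2‖ ≤ c)
    {U : Set (Fin k → ℝ)} (hU : MeasurableSet U) (hUb : Bornology.IsBounded U) :
    ∃ C ≠ ∞, ∀ n, 0 < n → μ n (Set.univ.pi fun _ => U) ≤ n.factorial * C ^ n := by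
  obtain ⟨c, hc⟩ := hK (U ×ˢ U) (hUb.prod hUb)
  refine ⟨ENNReal.ofReal (max c 0) * lam U,
    ENNReal.mul_ne_top ENNReal.ofReal_ne_top hUb.measure_lt_top.ne, fun n hn => ?_⟩
  have hUn : MeasurableSet (Set.univ.pi fun _ : Fin n => U) := .univ_pi fun _ => hU
  rw [h n hn _ hUn]
  calc _ ≤ ∫⁻ _ in Set.univ.pi fun _ : Fin n => U, n.factorial * ENNReal.ofReal (max c 0) ^ n
        ∂Measure.pi fun _ => lam :=
        setLIntegral_mono' hUn fun x hx => ofReal_re_det_le (le_max_right c 0) fun i j =>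
          (hc (x i, x j) ⟨hx i trivial, hx j trivial⟩).trans (le_max_left c 0)
    _ = _ := by simp [Measure.pi_pi, mul_pow, mul_assoc]

end EuclideanSpace

/-- Part (3) of Proposition 2.10 (`PropLem`): the law of a determinantal point
process is uniquely determined by its correlation kernel and reference measure. -/
theorem stmt8 (k : ℕ)
    {Ω₁ Ω₂ : Type*} [MeasurableSpace Ω₁] [MeasurableSpace Ω₂]
    (P₁ : Measure Ω₁) (P₂ : Measure Ω₂)
    [IsProbabilityMeasure P₁] [IsProbabilityMeasure P₂]
    (M₁ : Ω₁ → Measure (Fin k → ℝ)) (M₂ : Ω₂ → Measure (Fin k → ℝ))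
    (hpp₁ : IsPointProcess k M₁) (hpp₂ : IsPointProcess k M₂)
    (X₁ : ℕ → Ω₁ → Option (Fin k → ℝ)) (X₂ : ℕ → Ω₂ → Option (Fin k → ℝ))
    (hX₁ : ∀ i, OptMeasurable (X₁ i)) (hX₂ : ∀ i, OptMeasurable (X₂ i))
    (hform₁ : Forms X₁ M₁) (hform₂ : Forms X₂ M₂)
    (K : (Fin k → ℝ) → (Fin k → ℝ) → ℂ) (hKm : Measurable (Function.uncurry K))
    (hKb : ∀ B : Set ((Fin k → ℝ) × (Fin k → ℝ)), Bornology.IsBounded B →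
      ∃ Cb : ℝ, ∀ p ∈ B, ‖K p.1 p.2‖ ≤ Cb)
    (lam : Measure (Fin k → ℝ)) [IsLocallyFiniteMeasure lam]
    (hdetreal : ∀ (n : ℕ), 0 < n → ∀ᵐ x ∂(Measure.pi fun _ : Fin n => lam),
      (Matrix.det (Matrix.of fun i j : Fin n => K (x i) (x j))).im = 0 ∧
      0 ≤ (Matrix.det (Matrix.of fun i j : Fin n => K (x i) (x j))).re)
    (μ₁ μ₂ : (n : ℕ) → Measure (Fin n → (Fin k → ℝ)))
    (hμ₁ : ∀ n, IsFactorialMomentMeasure P₁ X₁ n (μ₁ n))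
    (hμ₂ : ∀ n, IsFactorialMomentMeasure P₂ X₂ n (μ₂ n))
    (hdet₁ : HasDetMoments k K lam μ₁) (hdet₂ : HasDetMoments k K lam μ₂) :
    ∀ (p : ℕ) (B : Fin p → Set (Fin k → ℝ)),
      (∀ i, MeasurableSet (B i)) → (∀ i, Bornology.IsBounded (B i)) →
      Measure.map (fun ω i => M₁ ω (B i)) P₁ =
        Measure.map (fun ω i => M₂ ω (B i)) P₂ := by
  intro p B hB hBb
  have h₁ := hasDetMoments_factorialMomentMeasure hX₁ hμ₁ hdet₁
  have h₂ := hasDetMoments_factorialMomentMeasure hX₂ hμ₂ hdet₂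
  simp_rw [hform₁.eq_pointMeasure, hform₂.eq_pointMeasure]
  exact stmt8_general (fun i => (hX₁ i).measurable) (fun i => (hX₂ i).measurable)
    (fun n hn => h₁.eq h₂ hn) hB
    (h₁.exists_apply_univ_pi_le hKb (.iUnion hB) (Bornology.isBounded_iUnion.2 hBb))
end
end

section
/- Fix r ∈ ℕ and reals t₁ < t₂ < ⋯ < t_r. Let X = (X_i^j : i ≥ 1, 1 ≤ j ≤ r) and Y = (Y_i^j : i ≥ 1, 1 ≤ j ≤ r) be random arrays on a probability space (Ω, ℱ, ℙ) with X_i^j(ω) ≥ X_{i+1}^j(ω) and Y_i^j(ω) ≥ Y_{i+1}^j(ω) for all ω ∈ Ω, i ≥ 1 and 1 ≤ j ≤ r. Suppose that the random measures M^X(ω,·) = ∑_{i≥1}∑_{j=1}^r δ_{(t_j, X_i^j(ω))} and M^Y(ω,·) = ∑_{i≥1}∑_{j=1}^r δ_{(t_j, Y_i^j(ω))} are locally finite, hence point processes on ℝ². Then M^X and M^Y have the same distribution (for every finite collection of bounded Borel sets B₁,…,B_p ⊆ ℝ², the random vectors (M^X(B₁),…,M^X(B_p)) and (M^Y(B₁),…,M^Y(B_p))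 have the same law) if and only if X and Y have the same finite-dimensional distributions (for every finite set of index pairs (i,j), the corresponding random vectors of entries of X and of Y have the same law, i.e., X and Y have the same law as random elements of ℝ^∞ with the product σ-algebra). -/
open MeasureTheory
open scoped ENNReal

noncomputable section

/-- A point process on `ℝ²`. -/
def IsPointProcess2 {Ω : Type*} [MeasurableSpace Ω] (M : Ω → Measure (ℝ × ℝ)) : Prop :=
  (∀ A : Set (ℝ × ℝ), MeasurableSet A → Measurable fun ω => M ω A) ∧
  (∀ ω, ∀ B : Set (ℝ × ℝ), MeasurableSet B → Bornology.IsBounded B →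
    ∃ n : ℕ, M ω B = n)

/-- The random measure `∑_{i≥1}∑_{j=1}^r δ_{(t_j, X_i^j(ω))}` on `ℝ²` formed by the
array `X` at times `t`. -/
def arrMeasure {r : ℕ} (t : Fin r → ℝ) {Ω : Type*}
    (X : ℕ → Fin r → Ω → ℝ) (ω : Ω) : Measure (ℝ × ℝ) :=
  Measure.sum fun p : ℕ × Fin r => Measure.dirac (t p.2, X p.1 p.2 ω)

/-!
In each column the points are ordered, so `X_i^j > a` means exactly that more than `i` points of
`M^X` (indexing from `0`) lie in `{t_j} × (a, ∞)`. Exhausting `(a, ∞)` by bounded intervals, this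
is an event about the counts of `M^X` on bounded sets: every measurable set of ordered arrays is the
preimage of a measurable set of counts. Hence the law of the counts determines the law of the array.
Conversely the counts are measurable functions of the array.
-/

open Filter Set

section Laws

variable {α β Ω Ω' : Type*} [MeasurableSpace β] [MeasurableSpace Ω] [MeasurableSpace Ω']
  {P : Measure Ω} {Q : Measure Ω'}

theorem map_eq_map_of_map_comp_eq_map_comp [mα : MeasurableSpace α] {F : α → β}
    (hF : Measurable F) (hle : mα ≤ MeasurableSpace.comap F inferInstance)
    {X : Ω → α} {Y : Ω' → α} (hX : Measurable X) (hY : Measurable Y)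
    (h : P.map (F ∘ X) = Q.map (F ∘ Y)) : P.map X = Q.map Y := by
  rw [← Measure.map_map hF hX, ← Measure.map_map hF hY] at h
  ext S hS
  obtain ⟨T, hT, rfl⟩ := hle S hS
  rw [← Measure.map_apply hF hT, h, Measure.map_apply hF hT]

theorem map_restrict_eq_map_map_equivFin {T : Type*} {U : Ω → T → β} (hU : Measurable U)
    (I : Finset T) : P.map (fun ω => I.restrict (U ω)) =
      (P.map fun ω k => U ω (I.equivFin.symm k)).map fun y i => y (I.equivFin i) := by
  rw [Measure.map_map (by fun_prop) (by fun_prop)]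
  congr 1 with ω i
  simp

theorem map_eq_map_of_forall_fin_map_eq [IsFiniteMeasure P] {T : Type*}
    {U : Ω → T → β} {V : Ω' → T → β} (hU : Measurable U) (hV : Measurable V)
    (h : ∀ (n : ℕ) (τ : Fin n → T),
      P.map (fun ω k => U ω (τ k)) = Q.map (fun ω k => V ω (τ k))) :
    P.map U = Q.map V := by
  refine (ProbabilityTheory.isProjectiveLimit_map hU.aemeasurable).unique fun I => ?_
  calc (Q.map V).map I.restrict = Q.map fun ω => I.restrict (V ω) :=
        Measure.map_map I.measurable_restrict hV
    _ = P.map fun ω => I.restrict (U ω) := by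
        rw [map_restrict_eq_map_map_equivFin hU, h, map_restrict_eq_map_map_equivFin hV]

end Laws

section Counting

variable {R : Type*} [LinearOrder R] {y : ℕ → R} {a b : R} {i : ℕ}

theorem lt_apply_of_lt_encard_preimage_Ioc (hy : Antitone y)
    (h : (i : ℕ∞) < (y ⁻¹' Ioc a b).encard) : a < y i := by
  contrapose! h
  calc (y ⁻¹' Ioc a b).encard ≤ (Iio i).encard :=
        encard_le_encard fun k hk => hy.reflect_lt (h.trans_lt hk.1)
    _ = i := by
        rw [← Finset.coe_Iio, encard_coe_eq_coe_finsetCard, Nat.card_Iio]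

theorem lt_encard_preimage_Ioc (hy : Antitone y) (ha : a < y i) (hb : y 0 ≤ b) :
    i < (y ⁻¹' Ioc a b).encard := by
  calc (i : ℕ∞) < (i + 1 : ℕ) := by exact_mod_cast i.lt_succ_self
    _ = (Iic i).encard := by
        rw [← Finset.coe_Iic, encard_coe_eq_coe_finsetCard, Nat.card_Iic]
    _ ≤ (y ⁻¹' Ioc a b).encard :=
        encard_le_encard fun k hk => ⟨ha.trans_le (hy hk), (hy k.zero_le).trans hb⟩

theorem lt_apply_iff_exists_lt_encard_preimage_Ioc (hy : Antitone y) {u : ℕ → R}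
    (hu : Tendsto u atTop atTop) :
    a < y i ↔ ∃ n, i < (y ⁻¹' Ioc a (u n)).encard := by
  refine ⟨fun ha => ?_, fun ⟨_, hn⟩ => lt_apply_of_lt_encard_preimage_Ioc hy hn⟩
  obtain ⟨n, hn⟩ := (hu.eventually_ge_atTop (y 0)).exists
  exact ⟨n, lt_encard_preimage_Ioc hy ha hn⟩

end Counting

/-- The point measure `∑ δ_(t j, x (i, j))` of a deterministic array `x`, with an arbitrary
index set of columns and arbitrary spaces for the labels `t j` and the entries. The measure
`arrMeasure t X ω` is definitionally `arrayMeasure t` of the array `(i, j) ↦ X i j ω`. -/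
def arrayMeasure {J E R : Type*} [MeasurableSpace E] [MeasurableSpace R] (t : J → E)
    (x : ℕ × J → R) : Measure (E × R) :=
  Measure.sum fun p => Measure.dirac (t p.2, x p)

/-- The arrays whose columns are nonincreasing, with the σ-algebra induced by the product. -/
abbrev OrderedArray (J R : Type*) [Preorder R] : Type _ :=
  {x : ℕ × J → R // ∀ j, Antitone fun i => x (i, j)}

/-- The bounded measurable sets, which index the counts `M(B)` of a point process `M`. -/
abbrev BoundedMeasurableSet (α : Type*) [MeasurableSpace α] [Bornology α] : Type _ :=
  {B : Set α // MeasurableSet B ∧ Bornology.IsBounded B}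

section ArrayMeasure

variable {J E R : Type*} [MeasurableSpace E] [MeasurableSpace R] {t : J → E}

theorem arrayMeasure_apply (t : J → E) (x : ℕ × J → R) {B : Set (E × R)} (hB : MeasurableSet B) :
    arrayMeasure t x B = {p : ℕ × J | (t p.2, x p) ∈ B}.encard := by
  rw [arrayMeasure, Measure.sum_apply _ hB, ← ENNReal.tsum_set_one,
    tsum_subtype _ fun _ => (1 : ℝ≥0∞)]
  exact tsum_congr fun p => Measure.dirac_apply' _ hB

theorem arrayMeasure_singleton_prod [MeasurableSingletonClass E] (ht : Function.Injective t)
    (x : ℕ × J → R) (j : J) {S : Set R} (hS : MeasurableSet S) :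
    arrayMeasure t x ({t j} ×ˢ S) = ((fun i => x (i, j)) ⁻¹' S).encard := by
  have hcolumn : {p : ℕ × J | (t p.2, x p) ∈ ({t j} ×ˢ S : Set (E × R))} =
      (·, j) '' ((fun i => x (i, j)) ⁻¹' S) := by
    ext ⟨i, j'⟩
    simp only [mem_ofPred_eq, mem_prod, mem_singleton_iff, ht.eq_iff, mem_image, mem_preimage,
      Prod.mk.injEq]
    grind
  rw [arrayMeasure_apply t x ((measurableSet_singleton _).prod hS), hcolumn,
    (Prod.mk_left_injective j).encard_image]

theorem measurable_arrayMeasure [Countable J] (t : J → E) :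
    Measurable (arrayMeasure t : (ℕ × J → R) → Measure (E × R)) := by
  refine Measure.measurable_of_measurable_coe _ fun B hB => ?_
  simp only [arrayMeasure, Measure.sum_apply _ hB]
  exact Measurable.tsum fun p => (Measure.measurable_coe hB).comp
    (Measure.measurable_dirac.comp (measurable_const.prodMk (measurable_pi_apply p)))

variable [Bornology E] [Bornology R]

/-- The counts of the point measure of `x` on the bounded measurable sets. -/
def boundedCounts (t : J → E) (x : ℕ × J → R) (B : BoundedMeasurableSet (E × R)) : ℝ≥0∞ :=
  arrayMeasure t x B

theorem measurable_boundedCounts [Countable J] (t : J → E) :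
    Measurable (boundedCounts t : (ℕ × J → R) → BoundedMeasurableSet (E × R) → ℝ≥0∞) :=
  measurable_pi_lambda _ fun B => (Measure.measurable_coe B.2.1).comp (measurable_arrayMeasure t)

variable [MeasurableSingletonClass E] [LinearOrder R] [TopologicalSpace R] [OrderTopology R]
  [SecondCountableTopology R] [BorelSpace R] [IsOrderBornology R]

theorem OrderedArray.exists_measurableSet_lt_iff_boundedCounts_mem (ht : Function.Injective t)
    (i : ℕ) (j : J) (a : R) :
    ∃ T : Set (BoundedMeasurableSet (E × R) → ℝ≥0∞), MeasurableSet T ∧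
      ∀ x : OrderedArray J R, a < x.1 (i, j) ↔ boundedCounts t x.1 ∈ T := by
  have : Nonempty R := ⟨a⟩
  obtain ⟨u, hu⟩ := exists_seq_tendsto (atTop : Filter R)
  let strip (n : ℕ) : BoundedMeasurableSet (E × R) :=
    ⟨{t j} ×ˢ Ioc a (u n), (measurableSet_singleton _).prod measurableSet_Ioc,
      Bornology.isBounded_singleton.prod (bddBelow_Ioc.isBounded bddAbove_Ioc)⟩
  refine ⟨⋃ n, {m | (i : ℝ≥0∞) < m (strip n)}, MeasurableSet.iUnion fun n =>
    measurableSet_lt measurable_const (measurable_pi_apply (strip n)), fun x => ?_⟩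
  simp only [mem_iUnion, mem_ofPred_eq, boundedCounts, strip,
    arrayMeasure_singleton_prod ht x.1 j measurableSet_Ioc,
    lt_apply_iff_exists_lt_encard_preimage_Ioc (x.2 j) hu]
  norm_cast

theorem OrderedArray.measurableSpace_le_comap_boundedCounts (ht : Function.Injective t) :
    (inferInstance : MeasurableSpace (OrderedArray J R)) ≤
      MeasurableSpace.comap (fun x => boundedCounts t x.1) inferInstance := by
  suffices hval : Measurable[MeasurableSpace.comap (fun x => boundedCounts t x.1) inferInstance]
      (Subtype.val : OrderedArray J R → ℕ × J → R) from hval.comap_le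
  refine @measurable_pi_lambda _ _ _ (_) _ _ fun ⟨i, j⟩ => measurable_of_Ioi (mδ := _) fun a => ?_
  obtain ⟨T, hT, hmem⟩ := exists_measurableSet_lt_iff_boundedCounts_mem ht i j a
  exact ⟨T, hT, ext fun x => (hmem x).symm⟩

variable {Ω Ω' : Type*} [MeasurableSpace Ω] [MeasurableSpace Ω'] {P : Measure Ω} {Q : Measure Ω'}

theorem OrderedArray.map_eq_map_of_map_boundedCounts_eq [Countable J] (ht : Function.Injective t)
    {X : Ω → OrderedArray J R} {Y : Ω' → OrderedArray J R} (hX : Measurable X) (hY : Measurable Y)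
    (h : P.map (fun ω => boundedCounts t (X ω).1) = Q.map fun ω => boundedCounts t (Y ω).1) :
    P.map X = Q.map Y :=
  map_eq_map_of_map_comp_eq_map_comp ((measurable_boundedCounts t).comp measurable_subtype_coe)
    (measurableSpace_le_comap_boundedCounts ht) hX hY h

theorem stmt9_general [Countable J] [IsFiniteMeasure P] (ht : Function.Injective t)
    {X : Ω → ℕ × J → R} {Y : Ω' → ℕ × J → R} (hX : Measurable X) (hY : Measurable Y)
    (hXanti : ∀ ω j, Antitone fun i => X ω (i, j)) (hYanti : ∀ ω j, Antitone fun i => Y ω (i, j)) :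
    (∀ (p : ℕ) (B : Fin p → Set (E × R)),
        (∀ k, MeasurableSet (B k)) → (∀ k, Bornology.IsBounded (B k)) →
        P.map (fun ω k => arrayMeasure t (X ω) (B k)) =
          Q.map (fun ω k => arrayMeasure t (Y ω) (B k))) ↔
      P.map X = Q.map Y := by
  constructor
  · intro h
    have hcounts : P.map (fun ω => boundedCounts t (X ω)) = Q.map fun ω => boundedCounts t (Y ω) :=
      map_eq_map_of_forall_fin_map_eq ((measurable_boundedCounts t).comp hX)
        ((measurable_boundedCounts t).comp hY)
        fun p B => h p (fun k => B k) (fun k => (B k).2.1) fun k => (B k).2.2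
    have hX' : Measurable fun ω => (⟨X ω, hXanti ω⟩ : OrderedArray J R) := hX.subtype_mk
    have hY' : Measurable fun ω => (⟨Y ω, hYanti ω⟩ : OrderedArray J R) := hY.subtype_mk
    have hlaw := OrderedArray.map_eq_map_of_map_boundedCounts_eq ht hX' hY' hcounts
    simpa only [Measure.map_map measurable_subtype_coe, hX', hY', Function.comp_def]
      using congrArg (Measure.map Subtype.val) hlaw
  · intro h p B hB _
    have hcount : Measurable fun (x : ℕ × J → R) k => arrayMeasure t x (B k) :=
      measurable_pi_lambda _ fun k =>
        (Measure.measurable_coe (hB k)).comp (measurable_arrayMeasure t)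
    simpa only [Measure.map_map hcount, hX, hY, Function.comp_def]
      using congrArg (Measure.map fun x k => arrayMeasure t x (B k)) h

end ArrayMeasure

/-- Corollary 2.15 (`CorWC2`): two ordered arrays form point processes with the same
law iff they have the same finite-dimensional distributions. -/
theorem stmt9 (r : ℕ) (hr : 0 < r) (t : Fin r → ℝ) (ht : StrictMono t)
    {Ω : Type*} [MeasurableSpace Ω] (P : Measure Ω) [IsProbabilityMeasure P]
    (X Y : ℕ → Fin r → Ω → ℝ)
    (hXmeas : ∀ i j, Measurable (X i j)) (hYmeas : ∀ i j, Measurable (Y i j))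
    (hXord : ∀ i j ω, X (i + 1) j ω ≤ X i j ω)
    (hYord : ∀ i j ω, Y (i + 1) j ω ≤ Y i j ω)
    (hXpp : IsPointProcess2 (arrMeasure t X))
    (hYpp : IsPointProcess2 (arrMeasure t Y)) :
    ((∀ (p : ℕ) (B : Fin p → Set (ℝ × ℝ)),
        (∀ i, MeasurableSet (B i)) → (∀ i, Bornology.IsBounded (B i)) →
        Measure.map (fun ω i => arrMeasure t X ω (B i)) P =
          Measure.map (fun ω i => arrMeasure t Y ω (B i)) P) ↔
      Measure.map (fun ω (p : ℕ × Fin r) => X p.1 p.2 ω) P =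
        Measure.map (fun ω (p : ℕ × Fin r) => Y p.1 p.2 ω) P) :=
  stmt9_general ht.injective (measurable_pi_lambda _ fun _ => hXmeas _ _)
    (measurable_pi_lambda _ fun _ => hYmeas _ _)
    (fun ω j => antitone_nat_of_succ_le fun i => hXord i j ω)
    (fun ω j => antitone_nat_of_succ_le fun i => hYord i j ω)
end
end

section
/- For each N ≥ 1 let X^N = (X_i^N)_{i≥1} be a random sequence on a probability space (Ω, ℱ, ℙ) with X_1^N(ω) ≥ X_2^N(ω) ≥ ⋯ for all ω, and suppose that M^N(ω,A) = ∑_{i≥1} 1{X_i^N(ω) ∈ A} defines a point process on ℝ. Assume: (1) there is a point process M on ℝ (on some probability space) such that M^N converges weakly to M in the vague topology, i.e., for every p ∈ ℕ and all continuous compactly supported f₁,…,f_p : ℝ → ℝ, the random vectors (∫f₁ dM^N, …, ∫f_p dM^N) converge in distribution to (∫f₁ dM, …, ∫f_p dM) as N → ∞; (2) ℙ(M(ℝ) = ∞) = 1; (3) lim_{a→∞} limsup_{N→∞} ℙ(X_1^N ≥ a) = 0. Then the sequence {X^N} is tight as random elements of ℝ^∞; equivalently, for every i ≥ 1, lim_{a→∞}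 limsup_{N→∞} ℙ(|X_i^N| ≥ a) = 0. -/
open MeasureTheory Filter Topology
open scoped ENNReal

noncomputable section

/-- A point process on `ℝ`. -/
def IsPointProcess1 {Ω : Type*} [MeasurableSpace Ω] (M : Ω → Measure ℝ) : Prop :=
  (∀ A : Set ℝ, MeasurableSet A → Measurable fun ω => M ω A) ∧
  (∀ ω, ∀ B : Set ℝ, MeasurableSet B → Bornology.IsBounded B → ∃ n : ℕ, M ω B = n)

/-!
Since `M` has infinitely many points, for each `i` some continuous cutoff `f ≤ 1` of compact support
satisfies `∫ f dM > i` with probability close to one, and the portmanteau theorem passes this on to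
`∫ f dM^N` for large `N`. On the other hand, if `X_i^N` lies to the left of the support of `f`, only
the points with indices `0, …, i - 1` contribute and `∫ f dM^N ≤ i`. Hence the lower tail of `X_i^N`
is small, while its upper tail is dominated by that of the largest point.
-/

section Limsup

variable {ι : Type*} {l : Filter ι}

lemma ennreal_limsup_add_le (u v : ι → ℝ≥0∞) :
    limsup (fun i ↦ u i + v i) l ≤ limsup u l + limsup v l := by
  refine (limsup_le_iff).2 fun c hc ↦ ?_
  obtain ⟨a, ha, b, hb, hab⟩ := ENNReal.exists_add_lt_of_add_lt hc
  filter_upwards [eventually_lt_of_limsup_lt ha, eventually_lt_of_limsup_lt hb] with i hu hv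
  exact (ENNReal.add_lt_add hu hv).trans hab

variable {Ω : ι → Type*} [∀ i, MeasurableSpace (Ω i)] {P : ∀ i, Measure (Ω i)}

lemma tendsto_limsup_measure_le_abs {Y : ∀ i, Ω i → ℝ}
    (hupper : Tendsto (fun a : ℝ ↦ limsup (fun i ↦ P i {ω | a ≤ Y i ω}) l) atTop (𝓝 0))
    (hlower : Tendsto (fun a : ℝ ↦ limsup (fun i ↦ P i {ω | Y i ω ≤ a}) l) atBot (𝓝 0)) :
    Tendsto (fun a : ℝ ↦ limsup (fun i ↦ P i {ω | a ≤ |Y i ω|}) l) atTop (𝓝 0) := by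
  have hsum := hupper.add (hlower.comp tendsto_neg_atTop_atBot)
  rw [add_zero] at hsum
  refine tendsto_of_tendsto_of_tendsto_of_le_of_le tendsto_const_nhds hsum
    (fun _ ↦ zero_le) fun a ↦ ?_
  have hsub (i : ι) : {ω | a ≤ |Y i ω|} ⊆ {ω | a ≤ Y i ω} ∪ {ω | Y i ω ≤ -a} :=
    fun ω hω ↦ (le_abs.1 (show a ≤ |Y i ω| from hω)).imp id le_neg_of_le_neg
  calc limsup (fun i ↦ P i {ω | a ≤ |Y i ω|}) l
      ≤ limsup (fun i ↦ P i {ω | a ≤ Y i ω} + P i {ω | Y i ω ≤ -a}) l :=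
        limsup_le_limsup <| .of_forall fun i ↦
          (measure_mono (hsub i)).trans (measure_union_le _ _)
    _ ≤ limsup (fun i ↦ P i {ω | a ≤ Y i ω}) l + limsup (fun i ↦ P i {ω | Y i ω ≤ -a}) l :=
        ennreal_limsup_add_le _ _

lemma limsup_measure_preimage_le_of_tendstoInDistribution [∀ i, IsProbabilityMeasure (P i)]
    {Ω' : Type*} [MeasurableSpace Ω'] {P' : Measure Ω'} [IsProbabilityMeasure P']
    {E : Type*} [TopologicalSpace E] [HasOuterApproxClosed E] [MeasurableSpace E]
    [OpensMeasurableSpace E] {Y : ∀ i, Ω i → E} {Z : Ω' → E}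
    (h : TendstoInDistribution Y l Z P P') {F : Set E} (hF : IsClosed F) :
    limsup (fun i ↦ P i (Y i ⁻¹' F)) l ≤ P' (Z ⁻¹' F) := by
  simpa only [ProbabilityMeasure.coe_mk,
    Measure.map_apply_of_aemeasurable (h.forall_aemeasurable _) hF.measurableSet,
    Measure.map_apply_of_aemeasurable h.aemeasurable_limit hF.measurableSet]
    using ProbabilityMeasure.limsup_measure_closed_le_of_tendsto h.tendsto hF

end Limsup

section RandomMeasure

variable {Ω E : Type*} [MeasurableSpace Ω] {P : Measure Ω} [MeasurableSpace E] {M : Ω → Measure E}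

lemma measurable_integral_of_measurable_measure (hM : Measurable M) {f : E → ℝ}
    (hf : Measurable f) : Measurable fun ω ↦ ∫ x, f x ∂M ω :=
  (hf.stronglyMeasurable.integral_kernel (κ := ⟨M, hM⟩)).measurable

lemma tendsto_measure_apply_le_of_iUnion_eq_univ [IsFiniteMeasure P] (hM : Measurable M)
    (hinf : ∀ᵐ ω ∂P, M ω Set.univ = ∞) {s : ℕ → Set E} (hs : Monotone s)
    (hsm : ∀ n, MeasurableSet (s n)) (hsU : ⋃ n, s n = Set.univ) {c : ℝ≥0∞} (hc : c ≠ ∞) :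
    Tendsto (fun n ↦ P {ω | M ω (s n) ≤ c}) atTop (𝓝 0) := by
  have hnull : P (⋂ n, {ω | M ω (s n) ≤ c}) = 0 := by
    refine measure_mono_null (fun ω hω ↦ mt (fun htop ↦ ?_) hc) hinf
    have hlim := tendsto_measure_iUnion_atTop (μ := M ω) hs
    rw [hsU, htop] at hlim
    exact top_le_iff.1 (le_of_tendsto' hlim fun n ↦ Set.mem_iInter.1 hω n)
  rw [← hnull]
  refine tendsto_measure_iInter_atTop (fun n ↦ ?_) (fun m n hmn ω hω ↦ ?_) ⟨0, measure_ne_top _ _⟩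
  · exact (measurableSet_le ((Measure.measurable_coe (hsm n)).comp hM)
      measurable_const).nullMeasurableSet
  · exact (measure_mono (hs hmn)).trans hω

lemma measure_le_ofReal_integral_of_one_le {μ : Measure E} {f : E → ℝ} (hf : Integrable f μ)
    (hf0 : 0 ≤ᵐ[μ] f) {s : Set E} (hs : ∀ x ∈ s, 1 ≤ f x) :
    μ s ≤ ENNReal.ofReal (∫ x, f x ∂μ) := by
  rw [ofReal_integral_eq_lintegral_ofReal hf hf0]
  exact meas_le_lintegral₀ hf.aemeasurable.ennreal_ofReal
    fun x hx ↦ ENNReal.one_le_ofReal.2 (hs x hx)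

lemma exists_cutoff_measure_integral_le_lt [TopologicalSpace E] [T2Space E]
    [LocallyCompactSpace E] [SigmaCompactSpace E] [OpensMeasurableSpace E] [IsFiniteMeasure P]
    (hM : Measurable M) (hfin : ∀ ω, IsFiniteMeasureOnCompacts (M ω))
    (hinf : ∀ᵐ ω ∂P, M ω Set.univ = ∞) (c : ℝ) {ε : ℝ≥0∞} (hε : 0 < ε) :
    ∃ f : E → ℝ, Continuous f ∧ HasCompactSupport f ∧ (∀ x, f x ≤ 1) ∧
      P {ω | ∫ x, f x ∂M ω ≤ c} < ε := by
  let K := CompactExhaustion.choice E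
  have hsmall : Tendsto (fun n ↦ P {ω | M ω (K n) ≤ ENNReal.ofReal c}) atTop (𝓝 0) :=
    tendsto_measure_apply_le_of_iUnion_eq_univ hM hinf (fun _ _ hmn ↦ K.subset hmn)
      (fun n ↦ (K.isCompact n).measurableSet) K.iUnion_eq ENNReal.ofReal_ne_top
  obtain ⟨n, hn⟩ := (hsmall.eventually_lt_const hε).exists
  obtain ⟨f, hfK, -, hfs, hf01⟩ := exists_continuous_one_zero_of_isCompact (K.isCompact n)
    isClosed_empty (Set.disjoint_empty _)
  refine ⟨f, f.continuous, hfs, fun x ↦ (hf01 x).2, (measure_mono fun ω hω ↦ ?_).trans_lt hn⟩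
  have := hfin ω
  calc M ω (K n) ≤ ENNReal.ofReal (∫ x, f x ∂M ω) :=
        measure_le_ofReal_integral_of_one_le (f.continuous.integrable_of_hasCompactSupport hfs)
          (.of_forall fun x ↦ (hf01 x).1) fun x hx ↦ (hfK hx).ge
    _ ≤ ENNReal.ofReal c := ENNReal.ofReal_le_ofReal hω

end RandomMeasure

section VagueConvergence

variable {ι : Type*} {l : Filter ι} {Ω : ι → Type*} [∀ N, MeasurableSpace (Ω N)]
  {P : ∀ N, Measure (Ω N)} [∀ N, IsProbabilityMeasure (P N)]
  {Ω' : Type*} [MeasurableSpace Ω'] {P' : Measure Ω'} [IsProbabilityMeasure P']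
  {E : Type*} [TopologicalSpace E] [MeasurableSpace E]
  {M : Ω' → Measure E} {ξ : ∀ N, Ω N → Measure E}

/-- Convergence in distribution of random measures with respect to the vague topology. By the
Cramér–Wold device it is enough to integrate one test function at a time. -/
def TendstoVaguelyInDistribution (ξ : ∀ N, Ω N → Measure E) (l : Filter ι) (M : Ω' → Measure E)
    (P : ∀ N, Measure (Ω N)) [∀ N, IsProbabilityMeasure (P N)]
    (P' : Measure Ω') [IsProbabilityMeasure P'] : Prop :=
  ∀ f : E → ℝ, Continuous f → HasCompactSupport f →
    TendstoInDistribution (fun N ω ↦ ∫ x, f x ∂ξ N ω) l (fun ω' ↦ ∫ x, f x ∂M ω') P P'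

lemma tendstoVaguelyInDistribution_of_forall_tendsto_integral [OpensMeasurableSpace E]
    (hξ : ∀ N, Measurable (ξ N)) (hM : Measurable M)
    (h : ∀ f : E → ℝ, Continuous f → HasCompactSupport f →
      ∀ g : BoundedContinuousFunction ℝ ℝ,
        Tendsto (fun N ↦ ∫ ω, g (∫ x, f x ∂ξ N ω) ∂P N) l (𝓝 (∫ ω', g (∫ x, f x ∂M ω') ∂P'))) :
    TendstoVaguelyInDistribution ξ l M P P' := by
  intro f hf hfs
  have hξf (N : ι) := (measurable_integral_of_measurable_measure (hξ N) hf.measurable).aemeasurable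
    (μ := P N)
  have hMf := (measurable_integral_of_measurable_measure hM hf.measurable).aemeasurable (μ := P')
  refine ⟨hξf, hMf, ProbabilityMeasure.tendsto_iff_forall_integral_tendsto.2 fun g ↦ ?_⟩
  simpa only [ProbabilityMeasure.coe_mk,
    integral_map (hξf _) g.continuous.aestronglyMeasurable,
    integral_map hMf g.continuous.aestronglyMeasurable] using h f hf hfs g

lemma TendstoVaguelyInDistribution.exists_cutoff_limsup_measure_integral_le_lt [T2Space E]
    [LocallyCompactSpace E] [SigmaCompactSpace E] [OpensMeasurableSpace E]
    (h : TendstoVaguelyInDistribution ξ l M P P') (hM : Measurable M)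
    (hfin : ∀ ω', IsFiniteMeasureOnCompacts (M ω')) (hinf : ∀ᵐ ω' ∂P', M ω' Set.univ = ∞)
    (c : ℝ) {ε : ℝ≥0∞} (hε : 0 < ε) :
    ∃ f : E → ℝ, Continuous f ∧ HasCompactSupport f ∧ (∀ x, f x ≤ 1) ∧
      limsup (fun N ↦ P N {ω | ∫ x, f x ∂ξ N ω ≤ c}) l < ε := by
  obtain ⟨f, hf, hfs, hf1, hfε⟩ := exists_cutoff_measure_integral_le_lt hM hfin hinf c hε
  exact ⟨f, hf, hfs, hf1, (limsup_measure_preimage_le_of_tendstoInDistribution (h f hf hfs)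
    isClosed_Iic).trans_lt hfε⟩

end VagueConvergence

section PointConfiguration

lemma integral_sum_dirac_le_of_forall_ge_eq_zero {E : Type*} [MeasurableSpace E]
    [MeasurableSingletonClass E] {x : ℕ → E} {f : E → ℝ}
    (hf : Integrable f (Measure.sum fun j ↦ Measure.dirac (x j))) (hf1 : ∀ y, f y ≤ 1) {i : ℕ}
    (hi : ∀ j ≥ i, f (x j) = 0) :
    ∫ y, f y ∂(Measure.sum fun j ↦ Measure.dirac (x j)) ≤ i := by
  calc ∫ y, f y ∂(Measure.sum fun j ↦ Measure.dirac (x j)) = ∑' j, f (x j) := by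
        simp only [integral_sum_measure hf, integral_dirac]
    _ = ∑ j ∈ Finset.range i, f (x j) :=
        tsum_eq_sum fun j hj ↦ hi j (not_lt.1 (mt Finset.mem_range.2 hj))
    _ ≤ ∑ _j ∈ Finset.range i, 1 := Finset.sum_le_sum fun j _ ↦ hf1 (x j)
    _ = i := by simp

variable {ι : Type*} {l : Filter ι} {Ω : ι → Type*} [∀ N, MeasurableSpace (Ω N)]
  {P : ∀ N, Measure (Ω N)} [∀ N, IsProbabilityMeasure (P N)] {X : ∀ N, ℕ → Ω N → ℝ}
  {Ω' : Type*} [MeasurableSpace Ω'] {P' : Measure Ω'} [IsProbabilityMeasure P']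
  {M : Ω' → Measure ℝ}

lemma tendsto_limsup_measure_particle_le (hX : ∀ N ω, Antitone fun i ↦ X N i ω)
    (hXfin : ∀ N ω, IsFiniteMeasureOnCompacts (Measure.sum fun j ↦ Measure.dirac (X N j ω)))
    (hM : Measurable M) (hMfin : ∀ ω', IsFiniteMeasureOnCompacts (M ω'))
    (hconv : TendstoVaguelyInDistribution
      (fun N ω ↦ Measure.sum fun j ↦ Measure.dirac (X N j ω)) l M P P')
    (hinf : ∀ᵐ ω' ∂P', M ω' Set.univ = ∞) (i : ℕ) :
    Tendsto (fun a : ℝ ↦ limsup (fun N ↦ P N {ω | X N i ω ≤ a}) l) atBot (𝓝 0) := by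
  refine ENNReal.tendsto_nhds_zero.2 fun ε hε ↦ ?_
  obtain ⟨f, hf, hfs, hf1, hfε⟩ :=
    hconv.exists_cutoff_limsup_measure_integral_le_lt hM hMfin hinf i hε
  obtain ⟨b, hb⟩ := hfs.isCompact.bddBelow
  filter_upwards [eventually_lt_atBot b] with a hab
  refine (limsup_le_limsup <| .of_forall fun N ↦ measure_mono fun ω hω ↦ ?_).trans hfε.le
  have := hXfin N ω
  refine integral_sum_dirac_le_of_forall_ge_eq_zero (hf.integrable_of_hasCompactSupport hfs) hf1
    fun j hij ↦ image_eq_zero_of_notMem_tsupport fun hj ↦ ?_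
  exact (hb hj).not_gt (((hX N ω hij).trans hω).trans_lt hab)

theorem stmt10_general (hX : ∀ N ω, Antitone fun i ↦ X N i ω)
    (hXfin : ∀ N ω, IsFiniteMeasureOnCompacts (Measure.sum fun j ↦ Measure.dirac (X N j ω)))
    (hM : Measurable M) (hMfin : ∀ ω', IsFiniteMeasureOnCompacts (M ω'))
    (hconv : TendstoVaguelyInDistribution
      (fun N ω ↦ Measure.sum fun j ↦ Measure.dirac (X N j ω)) l M P P')
    (hinf : ∀ᵐ ω' ∂P', M ω' Set.univ = ∞)
    (htight : Tendsto (fun a : ℝ ↦ limsup (fun N ↦ P N {ω | a ≤ X N 0 ω}) l) atTop (𝓝 0))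
    (i : ℕ) :
    Tendsto (fun a : ℝ ↦ limsup (fun N ↦ P N {ω | a ≤ |X N i ω|}) l) atTop (𝓝 0) := by
  have hupper : Tendsto (fun a : ℝ ↦ limsup (fun N ↦ P N {ω | a ≤ X N i ω}) l) atTop (𝓝 0) :=
    tendsto_of_tendsto_of_tendsto_of_le_of_le tendsto_const_nhds htight (fun _ ↦ zero_le)
      fun _ ↦ limsup_le_limsup <| .of_forall fun N ↦
        measure_mono fun ω hω ↦ le_trans hω (hX N ω i.zero_le)
  exact tendsto_limsup_measure_le_abs hupper
    (tendsto_limsup_measure_particle_le hX hXfin hM hMfin hconv hinf i)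

end PointConfiguration

namespace IsPointProcess1

variable {Ω : Type*} [MeasurableSpace Ω] {M : Ω → Measure ℝ}

protected lemma measurable (hM : IsPointProcess1 M) : Measurable M :=
  Measure.measurable_of_measurable_coe M hM.1

lemma isFiniteMeasureOnCompacts (hM : IsPointProcess1 M) (ω : Ω) :
    IsFiniteMeasureOnCompacts (M ω) where
  lt_top_of_isCompact K hK := by
    obtain ⟨n, hn⟩ := hM.2 ω K hK.measurableSet hK.isBounded
    exact hn ▸ ENNReal.natCast_lt_top n

end IsPointProcess1

/-- Proposition 2.16 (`TightnessCrit`): tightness criterion for ordered particle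
configurations whose point processes converge weakly to an infinite point process. -/
theorem stmt10 {Ω : Type*} [MeasurableSpace Ω] (P : Measure Ω) [IsProbabilityMeasure P]
    (X : ℕ → ℕ → Ω → ℝ) (hXm : ∀ N i, Measurable (X N i))
    (hord : ∀ N i ω, X N (i + 1) ω ≤ X N i ω)
    (hpp : ∀ N, IsPointProcess1 fun ω => Measure.sum fun i : ℕ => Measure.dirac (X N i ω))
    {Ω' : Type*} [MeasurableSpace Ω'] (P' : Measure Ω') [IsProbabilityMeasure P']
    (M : Ω' → Measure ℝ) (hM : IsPointProcess1 M)
    (hconv : ∀ (p : ℕ) (f : Fin p → ℝ → ℝ),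
      (∀ i, Continuous (f i)) → (∀ i, HasCompactSupport (f i)) →
      ∀ g : BoundedContinuousFunction (Fin p → ℝ) ℝ,
        Tendsto (fun N => ∫ ω, g (fun i => ∫ x, f i x
            ∂(Measure.sum fun j : ℕ => Measure.dirac (X N j ω))) ∂P)
          atTop (𝓝 (∫ ω', g (fun i => ∫ x, f i x ∂(M ω')) ∂P')))
    (hinf : ∀ᵐ ω' ∂P', M ω' Set.univ = ⊤)
    (htight1 : Tendsto (fun a : ℝ =>
        Filter.limsup (fun N : ℕ => P {ω | a ≤ X N 0 ω}) atTop)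
      atTop (𝓝 (0 : ℝ≥0∞))) :
    ∀ i : ℕ, Tendsto (fun a : ℝ =>
        Filter.limsup (fun N : ℕ => P {ω | a ≤ |X N i ω|}) atTop)
      atTop (𝓝 (0 : ℝ≥0∞)) := by
  have hvague : TendstoVaguelyInDistribution
      (fun N ω ↦ Measure.sum fun j ↦ Measure.dirac (X N j ω)) atTop M (fun _ ↦ P) P' :=
    tendstoVaguelyInDistribution_of_forall_tendsto_integral (fun N ↦ (hpp N).measurable)
      hM.measurable fun f hf hfs g ↦ hconv 1 (fun _ ↦ f) (fun _ ↦ hf) (fun _ ↦ hfs)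
        (g.compContinuous ⟨fun t ↦ t 0, continuous_apply 0⟩)
  exact stmt10_general (fun N ω ↦ antitone_nat_of_succ_le fun i ↦ hord N i ω)
    (fun N ↦ (hpp N).isFiniteMeasureOnCompacts) hM.measurable hM.isFiniteMeasureOnCompacts
    hvague hinf htight1
end
end

section
/- With the notation of the context, define for each N ∈ ℕ the quantity K¹_N = (1−q)^{M_u(N)−M_v(N)} · (2πi)^{−1} ∫ over the vertical segment from 1 − iN^{−1/3} to 1 + iN^{−1/3} of (1−qw)^{M_v(N)−M_u(N)} · exp((δ_N − 1)·Log w) dw, i.e., K¹_N = (1−q)^{M_u(N)−M_v(N)} · (2π)^{−1} ∫_{−N^{−1/3}}^{N^{−1/3}} (1−q(1+it))^{M_v(N)−M_u(N)} · exp((δ_N − 1)·Log(1+it)) dt (here M_v(N)−M_u(N) is an integer power and 1−q(1+it) ≠ 0). Then lim_{N→∞} N^{1/3} σ_q K¹_N = (2πi)^{−1} ∫_{−iσ_q}^{iσ_q} exp((ỹ−x̃)w − f_q(t_v−t_u)w²) dw = (2π)^{−1} ∫_{−σ_q}^{σ_q} exp((ỹ−x̃)·is − f_q(t_v−t_u)(is)²)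 ds. -/
open Filter Topology Complex MeasureTheory intervalIntegral

noncomputable section

def sigmaQ (q : ℝ) : ℝ := q ^ ((1 : ℝ) / 3) * (1 + q) ^ ((1 : ℝ) / 3) / (1 - q)

def fQ (q : ℝ) : ℝ := q ^ ((1 : ℝ) / 3) / (2 * (1 + q) ^ ((2 : ℝ) / 3))

/-- `M_t(N) = N + ⌊t N^{2/3}⌋`. -/
def MMt (t : ℝ) (N : ℕ) : ℤ := (N : ℤ) + ⌊t * (N : ℝ) ^ ((2 : ℝ) / 3)⌋

/-- `δ_N = (q/(1-q))(t_v - t_u)N^{2/3} + σ_q (ỹ_N - x̃_N) N^{1/3}`. -/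
def deltaN (q tu tv : ℝ) (xN yN : ℕ → ℝ) (N : ℕ) : ℝ :=
  (q / (1 - q)) * (tv - tu) * (N : ℝ) ^ ((2 : ℝ) / 3) +
    sigmaQ q * (yN N - xN N) * (N : ℝ) ^ ((1 : ℝ) / 3)

/-- The quantity `K¹_N`, written via the parametrization `w = 1 + it`,
`t ∈ [-N^{-1/3}, N^{-1/3}]`, of the vertical segment from `1 - iN^{-1/3}` to
`1 + iN^{-1/3}` (so that `(2πi)^{-1} dw = (2π)^{-1} dt`). -/
def K1N (q tu tv : ℝ) (xN yN : ℕ → ℝ) (N : ℕ) : ℂ :=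
  ((1 : ℂ) - (q : ℂ)) ^ (MMt tu N - MMt tv N) * (1 / (2 * (Real.pi : ℂ))) *
    ∫ t in (-((N : ℝ) ^ (-(1 : ℝ) / 3)))..((N : ℝ) ^ (-(1 : ℝ) / 3)),
      ((1 : ℂ) - (q : ℂ) * (1 + (t : ℂ) * Complex.I)) ^ (MMt tv N - MMt tu N) *
        Complex.exp (((deltaN q tu tv xN yN N : ℂ) - 1) *
          Complex.log (1 + (t : ℂ) * Complex.I))

/-
Near `w = 1` put `w = 1 + z / (σ_q N^{1/3})`. With `a = q / (1 - q)`, `m = M_v - M_u` and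
`d = δ_N - 1`, the normalised integrand `(1 - q)^{-m} (1 - q w)^m w^d` is the exponential of
`m log (1 - a (w - 1)) + d log w`. Its two first-order terms diverge like `N^{1/3}`, but `δ_N` is
chosen so that `d - a m` is only of order `N^{1/3}`: the linear part of the phase then tends to
`(ỹ - x̃) z`, the quadratic part to `-f_q (t_v - t_u) z²`, and the remainder is `O(N^{-1/3})`
uniformly for bounded `z`. Uniform convergence passes to the integral.
-/

section LogPhase

open Asymptotics

lemma log_one_add_sub_quadratic_isBigO :
    (fun z : ℂ ↦ log (1 + z) - (z - z ^ 2 / 2)) =O[𝓝 0] fun z ↦ z ^ 3 := by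
  have htaylor (z : ℂ) : logTaylor 3 z = z - z ^ 2 / 2 := by
    simp only [logTaylor, Finset.sum_range_succ, Finset.sum_range_zero]
    norm_num
    ring
  simpa only [htaylor] using log_sub_logTaylor_isBigO 2

lemma tendsto_mul_log_one_add_sub_quadratic {κ : Type*} {L : Filter κ} {c w : κ → ℂ}
    (hw : Tendsto w L (𝓝 0)) (hc : (fun k ↦ c k * w k ^ 2) =O[L] fun _ ↦ (1 : ℂ)) :
    Tendsto (fun k ↦ c k * (log (1 + w k) - (w k - w k ^ 2 / 2))) L (𝓝 0) := by
  have hcube : (fun k ↦ c k * w k ^ 3) =o[L] fun _ ↦ (1 : ℂ) :=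
    (hc.mul_isLittleO ((isLittleO_one_iff ℂ).2 hw)).congr (fun k ↦ by ring) fun _ ↦ mul_one 1
  exact ((isBigO_refl c L).mul
    (log_one_add_sub_quadratic_isBigO.comp_tendsto hw)).trans_tendsto
      ((isLittleO_one_iff ℂ).1 hcube)

variable {ι : Type*} {l : Filter ι}

lemma isBigO_one_snd_of_isBounded {E : Type*} [SeminormedAddCommGroup E] (F : Type*) [Norm F]
    [One F] [NormOneClass F] {K : Set E} (hK : Bornology.IsBounded K) :
    (fun p : ι × E ↦ p.2) =O[l ×ˢ 𝓟 K] fun _ ↦ (1 : F) := by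
  obtain ⟨R, hR⟩ := hK.exists_norm_le
  refine IsBigO.of_bound R ?_
  filter_upwards [tendsto_snd.eventually (mem_principal_self K)] with p hp
  simpa using hR p.2 hp

lemma tendstoUniformlyOn_mul_pow {𝕜 : Type*} [NormedField 𝕜] {K : Set 𝕜} {c : ι → 𝕜} {γ : 𝕜}
    (hK : Bornology.IsBounded K) (hc : Tendsto c l (𝓝 γ)) (k : ℕ) :
    TendstoUniformlyOn (fun n z ↦ c n * z ^ k) (fun z ↦ γ * z ^ k) l K := by
  rw [tendstoUniformlyOn_iff_tendsto, tendsto_uniformity_iff_dist_tendsto_zero]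
  have hdiff : Tendsto (fun p : ι × 𝕜 ↦ γ - c p.1) (l ×ˢ 𝓟 K) (𝓝 0) := by
    simpa using (hc.comp tendsto_fst).const_sub γ
  have hprod : (fun p : ι × 𝕜 ↦ (γ - c p.1) * p.2 ^ k) =o[l ×ˢ 𝓟 K] fun _ ↦ (1 : 𝕜) := by
    simpa using ((isLittleO_one_iff 𝕜).2 hdiff).mul_isBigO
      ((isBigO_one_snd_of_isBounded 𝕜 hK).pow k)
  simpa only [dist_eq_norm, sub_mul, norm_zero] using ((isLittleO_one_iff 𝕜).1 hprod).norm

variable {K : Set ℂ} {a α τ : ℂ}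

lemma tendstoUniformlyOn_mul_log_one_add_sub_quadratic {c ε : ι → ℂ} {γ : ℂ}
    (hK : Bornology.IsBounded K) (hε : Tendsto ε l (𝓝 0))
    (hc : Tendsto (fun n ↦ c n * ε n ^ 2) l (𝓝 γ)) :
    TendstoUniformlyOn
      (fun n z ↦ c n * (log (1 + ε n * z) - (ε n * z - (ε n * z) ^ 2 / 2))) 0 l K := by
  rw [tendstoUniformlyOn_iff_tendsto, tendsto_uniformity_iff_dist_tendsto_zero]
  have hz := isBigO_one_snd_of_isBounded (l := l) ℂ hK
  have hw : Tendsto (fun p : ι × ℂ ↦ ε p.1 * p.2) (l ×ˢ 𝓟 K) (𝓝 0) := by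
    rw [← isLittleO_one_iff ℂ]
    simpa using ((isLittleO_one_iff ℂ).2 (hε.comp tendsto_fst)).mul_isBigO hz
  have hcw : (fun p : ι × ℂ ↦ c p.1 * (ε p.1 * p.2) ^ 2) =O[l ×ˢ 𝓟 K] fun _ ↦ (1 : ℂ) := by
    refine (((hc.comp tendsto_fst).isBigO_one ℂ).mul (hz.pow 2)).congr (fun p ↦ ?_) fun _ ↦ ?_
    · simp only [Function.comp_apply]
      ring
    · norm_num
  simpa only [Pi.zero_apply, dist_zero_left, norm_zero] using
    (tendsto_mul_log_one_add_sub_quadratic hw hcw).norm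

lemma tendstoUniformlyOn_mul_log_add_mul_log {m d ε : ι → ℂ} (hK : Bornology.IsBounded K)
    (hε : Tendsto ε l (𝓝 0)) (hm : Tendsto (fun n ↦ m n * ε n ^ 2) l (𝓝 τ))
    (hd : Tendsto (fun n ↦ (d n - a * m n) * ε n) l (𝓝 α)) :
    TendstoUniformlyOn (fun n z ↦ m n * log (1 - a * (ε n * z)) + d n * log (1 + ε n * z))
      (fun z ↦ α * z - a * (1 + a) * τ / 2 * z ^ 2) l K := by
  have hd_sq : Tendsto (fun n ↦ d n * ε n ^ 2) l (𝓝 (a * τ)) := by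
    have := (hd.mul hε).add (hm.const_mul a)
    rw [mul_zero, zero_add] at this
    exact this.congr fun n ↦ by ring
  have hquad : Tendsto (fun n ↦ (a ^ 2 * m n + d n) * ε n ^ 2 / 2) l
      (𝓝 (a * (1 + a) * τ / 2)) := by
    convert ((hm.const_mul (a ^ 2)).add hd_sq).div_const 2 using 2 <;> ring
  have hε' : Tendsto (fun n ↦ -a * ε n) l (𝓝 0) := by simpa using hε.const_mul (-a)
  have hm' : Tendsto (fun n ↦ m n * (-a * ε n) ^ 2) l (𝓝 (a ^ 2 * τ)) :=
    (hm.const_mul (a ^ 2)).congr fun n ↦ by ring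
  have hsum := ((tendstoUniformlyOn_mul_pow hK hd 1).sub
    (tendstoUniformlyOn_mul_pow hK hquad 2)).add
      ((tendstoUniformlyOn_mul_log_one_add_sub_quadratic hK hε' hm').add
        (tendstoUniformlyOn_mul_log_one_add_sub_quadratic hK hε hd_sq))
  refine (hsum.congr (.of_forall fun n z _ ↦ ?_)).congr_right fun z _ ↦ ?_
  · simp only [Pi.add_apply, Pi.sub_apply]
    rw [show 1 - a * (ε n * z) = 1 + -a * ε n * z by ring]
    ring
  · simp only [Pi.add_apply, Pi.sub_apply, Pi.zero_apply]
    ring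

end LogPhase

section Integral

lemma zpow_mul_exp_eq_exp_log {u : ℂ} (hu : u ≠ 0) (k : ℤ) (v : ℂ) :
    u ^ k * exp v = exp (k * log u + v) := by
  rw [exp_add, exp_int_mul, exp_log hu]

variable {ι : Type*} {l : Filter ι} {a α τ : ℝ} {m : ι → ℤ} {d ε : ι → ℝ}

lemma one_sub_ofReal_mul_I_ne_zero (r s t : ℝ) : (1 : ℂ) - r * (s * (t * I)) ≠ 0 :=
  fun h ↦ by simpa using congrArg re h

lemma one_add_ofReal_mul_I_mem_slitPlane (s t : ℝ) : (1 : ℂ) + s * (t * I) ∈ slitPlane :=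
  .inl (by simp)

lemma tendstoUniformlyOn_zpow_mul_exp_log {S : Set ℝ} (hS : Bornology.IsBounded S)
    (hε : Tendsto ε l (𝓝 0))
    (hm : Tendsto (fun n ↦ m n * ε n ^ 2) l (𝓝 τ))
    (hd : Tendsto (fun n ↦ (d n - a * m n) * ε n) l (𝓝 α)) :
    TendstoUniformlyOn
      (fun n (s : ℝ) ↦ (1 - a * (ε n * (s * I))) ^ m n * exp (d n * log (1 + ε n * (s * I))))
      (fun s ↦ exp (α * (s * I) - a * (1 + a) * τ / 2 * (s * I) ^ 2)) l S := by
  obtain ⟨R, hR⟩ := hS.exists_norm_le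
  have hK : Bornology.IsBounded (Metric.closedBall (0 : ℂ) R) := Metric.isBounded_closedBall
  have hmem (s : ℝ) (hs : s ∈ S) : (s : ℂ) * I ∈ Metric.closedBall (0 : ℂ) R := by
    simpa using hR s hs
  have hphase := tendstoUniformlyOn_mul_log_add_mul_log (a := (a : ℂ)) hK
    (by simpa using hε.ofReal) (by simpa using hm.ofReal) (by simpa using hd.ofReal)
  have hbdd : BddAbove ((fun z : ℂ ↦
      (α * z - a * (1 + a) * τ / 2 * z ^ 2).re) '' Metric.closedBall 0 R) :=
    (isCompact_closedBall 0 R).bddAbove_image (by fun_prop)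
  refine (((hphase.comp_cexp hbdd).comp fun s : ℝ ↦ (s : ℂ) * I).mono hmem).congr
    (.of_forall fun n s _ ↦ ?_)
  exact (zpow_mul_exp_eq_exp_log (one_sub_ofReal_mul_I_ne_zero _ _ _) _ _).symm

theorem tendsto_integral_zpow_mul_exp_log [l.IsCountablyGenerated]
    (hε : Tendsto ε l (𝓝 0))
    (hm : Tendsto (fun n ↦ m n * ε n ^ 2) l (𝓝 τ))
    (hd : Tendsto (fun n ↦ (d n - a * m n) * ε n) l (𝓝 α)) (b c : ℝ) :
    Tendsto
      (fun n ↦ ∫ s : ℝ in b..c,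
        (1 - a * (ε n * (s * I))) ^ m n * exp (d n * log (1 + ε n * (s * I))))
      l (𝓝 (∫ s : ℝ in b..c, exp (α * (s * I) - a * (1 + a) * τ / 2 * (s * I) ^ 2))) := by
  refine TendstoUniformlyOn.tendsto_intervalIntegral_of_continuousOn (.of_forall fun n ↦ ?_)
    (tendstoUniformlyOn_zpow_mul_exp_log isCompact_uIcc.isBounded hε hm hd)
  refine Continuous.continuousOn (.mul ?_ ?_)
  · exact .zpow₀ (by fun_prop) _ fun s ↦ .inl (one_sub_ofReal_mul_I_ne_zero _ _ _)
  · exact (continuous_const.mul (.clog (by fun_prop)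
      fun s ↦ one_add_ofReal_mul_I_mem_slitPlane _ _)).cexp

end Integral

section Scaling

lemma rpow_two_thirds {x : ℝ} (hx : 0 ≤ x) : x ^ ((2 : ℝ) / 3) = (x ^ ((1 : ℝ) / 3)) ^ 2 := by
  rw [← Real.rpow_mul_natCast hx]
  norm_num

lemma rpow_neg_one_third {x : ℝ} (hx : 0 ≤ x) :
    x ^ (-(1 : ℝ) / 3) = (x ^ ((1 : ℝ) / 3))⁻¹ := by
  rw [neg_div, Real.rpow_neg hx]

variable {q : ℝ}

lemma sigmaQ_ne_zero (hq : 0 < q) (hq1 : q ≠ 1) : sigmaQ q ≠ 0 := by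
  have : 1 - q ≠ 0 := sub_ne_zero.2 hq1.symm
  unfold sigmaQ
  positivity

lemma fQ_mul_sigmaQ_sq (hq : 0 < q) (hq1 : q ≠ 1) :
    fQ q * sigmaQ q ^ 2 = q / (1 - q) * (1 + q / (1 - q)) / 2 := by
  have h1q : 1 - q ≠ 0 := sub_ne_zero.2 hq1.symm
  have hcube : (q ^ ((1 : ℝ) / 3)) ^ 3 = q := by
    rw [← Real.rpow_mul_natCast hq.le]
    norm_num
  rw [fQ, sigmaQ, rpow_two_thirds (by positivity)]
  field_simp
  rw [hcube]
  ring

lemma quadratic_coeff_eq_fQ_mul (hq : 0 < q) (hq1 : q ≠ 1) (t : ℝ) :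
    q / (1 - q) * (1 + q / (1 - q)) * (t / sigmaQ q ^ 2) / 2 = fQ q * t := by
  have hσ := sigmaQ_ne_zero hq hq1
  calc q / (1 - q) * (1 + q / (1 - q)) * (t / sigmaQ q ^ 2) / 2
      = q / (1 - q) * (1 + q / (1 - q)) / 2 * (t / sigmaQ q ^ 2) := by ring
    _ = fQ q * sigmaQ q ^ 2 * (t / sigmaQ q ^ 2) := by rw [fQ_mul_sigmaQ_sq hq hq1]
    _ = fQ q * t := by field_simp

/-- The factor `1 / (σ_q N^{1/3})` by which the segment from `-iσ_q` to `iσ_q` is shrunk onto the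
segment from `-iN^{-1/3}` to `iN^{-1/3}`, so that `w = 1 + segmentScale q N * (s * I)`. -/
def segmentScale (q : ℝ) (N : ℕ) : ℝ := (sigmaQ q * (N : ℝ) ^ ((1 : ℝ) / 3))⁻¹

lemma tendsto_segmentScale (q : ℝ) :
    Tendsto (segmentScale q) atTop (𝓝 0) := by
  have hroot : Tendsto (fun N : ℕ ↦ (N : ℝ) ^ ((1 : ℝ) / 3)) atTop atTop :=
    (tendsto_rpow_atTop (by norm_num)).comp tendsto_natCast_atTop_atTop
  have hlim := hroot.inv_tendsto_atTop.const_mul (sigmaQ q)⁻¹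
  rw [mul_zero] at hlim
  exact hlim.congr fun N ↦ (mul_inv _ _).symm

lemma abs_MMt_sub_MMt_sub_le_one (tu tv : ℝ) (N : ℕ) :
    |((MMt tv N - MMt tu N : ℤ) : ℝ) - (tv - tu) * (N : ℝ) ^ ((2 : ℝ) / 3)| ≤ 1 := by
  have hv := Int.floor_le (tv * (N : ℝ) ^ ((2 : ℝ) / 3))
  have hv' := Int.lt_floor_add_one (tv * (N : ℝ) ^ ((2 : ℝ) / 3))
  have hu := Int.floor_le (tu * (N : ℝ) ^ ((2 : ℝ) / 3))
  have hu' := Int.lt_floor_add_one (tu * (N : ℝ) ^ ((2 : ℝ) / 3))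
  unfold MMt
  push_cast
  rw [abs_le]
  constructor <;> linarith

lemma tendsto_MMt_sub_MMt_mul_segmentScale_sq (hq : 0 < q) (hq1 : q ≠ 1) (tu tv : ℝ) :
    Tendsto (fun N ↦ ((MMt tv N - MMt tu N : ℤ) : ℝ) * segmentScale q N ^ 2) atTop
      (𝓝 ((tv - tu) / sigmaQ q ^ 2)) := by
  have hscale := tendsto_segmentScale q
  have herror := bdd_le_mul_tendsto_zero' 1
    (.of_forall (abs_MMt_sub_MMt_sub_le_one tu tv)) (by simpa using hscale.pow 2)
  have hlim := herror.const_add ((tv - tu) / sigmaQ q ^ 2)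
  rw [add_zero] at hlim
  refine hlim.congr' ?_
  filter_upwards [eventually_ne_atTop 0] with N hN
  have hσ := sigmaQ_ne_zero hq hq1
  have hr : (N : ℝ) ^ ((1 : ℝ) / 3) ≠ 0 := by positivity
  rw [segmentScale, rpow_two_thirds N.cast_nonneg]
  field_simp
  ring

lemma tendsto_deltaN_sub_mul_MMt_sub_MMt_mul_segmentScale (hq : 0 < q) (hq1 : q ≠ 1)
    (tu tv : ℝ) {xN yN : ℕ → ℝ} {ξ : ℝ} (hξ : Tendsto (fun N ↦ yN N - xN N) atTop (𝓝 ξ)) :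
    Tendsto (fun N ↦ (deltaN q tu tv xN yN N - 1
        - q / (1 - q) * ((MMt tv N - MMt tu N : ℤ) : ℝ)) * segmentScale q N) atTop (𝓝 ξ) := by
  have hscale := tendsto_segmentScale q
  have herror := bdd_le_mul_tendsto_zero' 1
    (.of_forall (abs_MMt_sub_MMt_sub_le_one tu tv)) hscale
  have hlim := (hξ.sub hscale).sub (herror.const_mul (q / (1 - q)))
  rw [mul_zero, sub_zero, sub_zero] at hlim
  refine hlim.congr' ?_
  filter_upwards [eventually_ne_atTop 0] with N hN
  have hunit : sigmaQ q * (N : ℝ) ^ ((1 : ℝ) / 3) * segmentScale q N = 1 :=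
    mul_inv_cancel₀ (mul_ne_zero (sigmaQ_ne_zero hq hq1) (by positivity))
  rw [deltaN]
  linear_combination -(yN N - xN N) * hunit

lemma zpow_neg_mul_one_sub_mul_one_add_zpow {𝕜 : Type*} [Field 𝕜] {p : 𝕜} (hp : p ≠ 1)
    (w : 𝕜) (k : ℤ) :
    (1 - p) ^ (-k) * (1 - p * (1 + w)) ^ k = (1 - p / (1 - p) * w) ^ k := by
  have h1p : 1 - p ≠ 0 := sub_ne_zero.2 hp.symm
  rw [zpow_neg, ← inv_zpow, ← mul_zpow]
  congr 1
  field_simp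
  ring

lemma mul_K1N_eq_integral (hq : 0 < q) (hq1 : q ≠ 1) (tu tv : ℝ) (xN yN : ℕ → ℝ) {N : ℕ}
    (hN : N ≠ 0) :
    (((N : ℝ) ^ ((1 : ℝ) / 3) * sigmaQ q : ℝ) : ℂ) * K1N q tu tv xN yN N =
      1 / (2 * (Real.pi : ℂ)) * ∫ s : ℝ in -sigmaQ q..sigmaQ q,
        (1 - (q / (1 - q) : ℝ) * (segmentScale q N * (s * I))) ^ (MMt tv N - MMt tu N) *
          exp ((deltaN q tu tv xN yN N - 1 : ℝ) * log (1 + segmentScale q N * (s * I))) := by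
  have hr : (N : ℝ) ^ ((1 : ℝ) / 3) ≠ 0 := by positivity
  have hσ := sigmaQ_ne_zero hq hq1
  have hend : (N : ℝ) ^ (-(1 : ℝ) / 3) = segmentScale q N * sigmaQ q := by
    rw [rpow_neg_one_third N.cast_nonneg, segmentScale]
    field_simp
  have hunit : (((N : ℝ) ^ ((1 : ℝ) / 3) * sigmaQ q : ℝ) : ℂ) * segmentScale q N = 1 := by
    rw [← ofReal_mul, segmentScale, mul_comm (sigmaQ q), mul_inv_cancel₀ (mul_ne_zero hr hσ),
      ofReal_one]
  have hqC : (q : ℂ) ≠ 1 := by exact_mod_cast hq1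
  rw [K1N, hend, ← mul_neg, ← smul_integral_comp_mul_left, real_smul,
    ← neg_sub (MMt tv N) (MMt tu N)]
  set k := MMt tv N - MMt tu N
  have hintegrand (s : ℝ) :
      (1 - q : ℂ) ^ (-k) * ((1 - q * (1 + (segmentScale q N * s : ℝ) * I)) ^ k *
          exp ((deltaN q tu tv xN yN N - 1) * log (1 + (segmentScale q N * s : ℝ) * I))) =
        (1 - (q / (1 - q) : ℝ) * (segmentScale q N * (s * I))) ^ k *
          exp ((deltaN q tu tv xN yN N - 1 : ℝ) * log (1 + segmentScale q N * (s * I))) := by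
    rw [← mul_assoc, zpow_neg_mul_one_sub_mul_one_add_zpow hqC]
    push_cast
    simp only [mul_assoc]
  simp only [← hintegrand, intervalIntegral.integral_const_mul]
  generalize (∫ _ in -sigmaQ q..sigmaQ q, (_ : ℂ)) = J
  linear_combination (1 - q : ℂ) ^ (-k) * (1 / (2 * (Real.pi : ℂ))) * J * hunit

end Scaling

theorem stmt11_general {q : ℝ} (hq : 0 < q) (hq1 : q ≠ 1) (tu tv : ℝ) {ξ : ℝ} {xN yN : ℕ → ℝ}
    (hξ : Tendsto (fun N ↦ yN N - xN N) atTop (𝓝 ξ)) :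
    Tendsto (fun N : ℕ ↦ (((N : ℝ) ^ ((1 : ℝ) / 3) * sigmaQ q : ℝ) : ℂ) * K1N q tu tv xN yN N)
      atTop (𝓝 ((1 / (2 * (Real.pi : ℂ))) *
        ∫ s : ℝ in -sigmaQ q..sigmaQ q,
          exp (ξ * (s * I) - fQ q * (tv - tu : ℝ) * (s * I) ^ 2))) := by
  have hintegral := tendsto_integral_zpow_mul_exp_log (tendsto_segmentScale q)
    (tendsto_MMt_sub_MMt_mul_segmentScale_sq hq hq1 tu tv)
    (tendsto_deltaN_sub_mul_MMt_sub_MMt_mul_segmentScale hq hq1 tu tv hξ)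
    (-sigmaQ q) (sigmaQ q)
  have hcoef : ((q / (1 - q) : ℝ) : ℂ) * (1 + (q / (1 - q) : ℝ)) *
      ((tv - tu) / sigmaQ q ^ 2 : ℝ) / 2 = fQ q * (tv - tu : ℝ) := by
    exact_mod_cast quadratic_coeff_eq_fQ_mul hq hq1 (tv - tu)
  rw [hcoef] at hintegral
  refine (hintegral.const_mul _).congr' ?_
  filter_upwards [eventually_ne_atTop 0] with N hN
  exact (mul_K1N_eq_integral hq hq1 tu tv xN yN hN).symm

/-- Equation (5.1)/(`LimitK1`): the limit of `N^{1/3} σ_q K¹_N`. -/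
theorem stmt11 (q : ℝ) (hq : q ∈ Set.Ioo (0 : ℝ) 1) (tu tv : ℝ)
    (x y : ℝ) (xN yN : ℕ → ℝ)
    (hx : Tendsto xN atTop (𝓝 x)) (hy : Tendsto yN atTop (𝓝 y)) :
    Tendsto (fun N : ℕ =>
        (((N : ℝ) ^ ((1 : ℝ) / 3) * sigmaQ q : ℝ) : ℂ) * K1N q tu tv xN yN N)
      atTop (𝓝 ((1 / (2 * (Real.pi : ℂ))) *
        ∫ s in (-(sigmaQ q))..(sigmaQ q),
          Complex.exp (((y - x : ℝ) : ℂ) * ((s : ℂ) * Complex.I) -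
            ((fQ q : ℂ)) * ((tv - tu : ℝ) : ℂ) * ((s : ℂ) * Complex.I) ^ 2))) :=
  stmt11_general hq.1 hq.2.ne tu tv (hy.sub hx)
end
end

section
/- With the notation of the context, assume t_u > t_v and define for each N ∈ ℕ the quantity K²_N = −(1−q)^{M_u(N)−M_v(N)} · (2π)^{−1} ∫_{−π}^{π} (1−qe^{iθ})^{M_v(N)−M_u(N)} · exp(iθ·δ_N) dθ (this equals the positively oriented unit-circle integral −(1−q)^{M_u(N)−M_v(N)}(2πi)^{−1}∮_{|w|=1}(1−qw)^{M_v(N)−M_u(N)} w^{δ_N−1} dw with the principal branch of w^{δ_N−1}; here M_v(N)−M_u(N) is an integer power and 1−qe^{iθ} ≠ 0). Then lim_{N→∞} N^{1/3} σ_q K²_N = −(4π f_q (t_u−t_v))^{−1/2} · exp(−(ỹ−x̃)²/(4 f_q (t_u−t_v))). -/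
open Filter Topology Complex MeasureTheory intervalIntegral

noncomputable section

/-- The quantity `K²_N`, written via the parametrization `w = e^{iθ}`,
`θ ∈ [-π, π]`, of the positively oriented unit circle. -/
def K2N (q tu tv : ℝ) (xN yN : ℕ → ℝ) (N : ℕ) : ℂ :=
  -(((1 : ℂ) - (q : ℂ)) ^ (MMt tu N - MMt tv N) * (1 / (2 * (Real.pi : ℂ))) *
    ∫ θ in (-Real.pi)..Real.pi,
      ((1 : ℂ) - (q : ℂ) * Complex.exp ((θ : ℂ) * Complex.I)) ^ (MMt tv N - MMt tu N) *
        Complex.exp (Complex.I * (θ : ℂ) * (deltaN q tu tv xN yN N : ℂ)))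

/-!
Since `(1 - q) / (1 - q e^{iθ})` is the characteristic function of the geometric law on `ℕ` with
ratio `q`, for integer `δ_N` the quantity `-K²_N` is, by Fourier inversion, the probability that a
sum of `n = M_u(N) - M_v(N)` independent geometric variables equals `-δ_N`. The limit is thus a
local central limit theorem. Centring each variable at its mean `q / (1 - q)` turns the exponent
`δ_N` into `σ_q (ỹ_N - x̃_N) N^{1/3} + O(1)`, and after the substitution `θ = s / N^{1/3}` the
integrand converges pointwise to `exp (i w s - τ v s² / 2)`, where `v = q / (1 - q)²` is the
variance, `τ = t_u - t_v` and `w = σ_q (ỹ - x̃)`. Domination comes from a Gaussian bound on the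
characteristic function, valid on the whole of `[-π, π]`.
-/

section LocalLimit

open Asymptotics

variable {ι : Type*} {l : Filter ι}

lemma tendsto_zpow_exp_of_tendsto_mul_sub_one {f : ι → ℂ} {n : ι → ℤ} {z : ℂ}
    (hf : Tendsto f l (𝓝 1)) (hnf : Tendsto (fun i => n i * (f i - 1)) l (𝓝 z)) :
    Tendsto (fun i => f i ^ n i) l (𝓝 (exp z)) := by
  have hlog : (fun i => log (f i) - (f i - 1)) =o[l] fun i => f i - 1 := by
    simpa [Function.comp_def] using
      (hasDerivAt_log one_mem_slitPlane).isLittleO.comp_tendsto hf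
  have hrem : Tendsto (fun i => n i * (log (f i) - (f i - 1))) l (𝓝 0) :=
    (isLittleO_one_iff ℂ).mp <|
      ((isBigO_refl (fun i => (n i : ℂ)) l).mul_isLittleO hlog).trans_isBigO (hnf.isBigO_one ℂ)
  have hnlog : Tendsto (fun i => n i * log (f i)) l (𝓝 z) := by
    simpa [← mul_add] using hrem.add hnf
  refine ((continuous_exp.tendsto z).comp hnlog).congr' ?_
  filter_upwards [hf.eventually_ne one_ne_zero] with i hi
  rw [Function.comp_apply, exp_int_mul, exp_log hi]

lemma isLittleO_inv_sub_one_sub {𝕜 : Type*} [NontriviallyNormedField 𝕜] {f g h : ι → 𝕜}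
    (hh : Tendsto h l (𝓝 0)) (hg : g =O[l] h) (hf : (fun i => f i - (1 + g i)) =o[l] h) :
    (fun i => (f i)⁻¹ - (1 - g i)) =o[l] h := by
  have hfO : (fun i => f i - 1) =O[l] h := by
    refine (hf.isBigO.add hg).congr_left fun i => ?_
    ring
  have hf1 : Tendsto f l (𝓝 1) := tendsto_sub_nhds_zero_iff.mp (hfO.trans_tendsto hh)
  have hinv : (fun i => (f i)⁻¹ - 1 - (1 - f i)) =o[l] fun i => f i - 1 := by
    simpa [Function.comp_def] using
      (hasDerivAt_inv (one_ne_zero (α := 𝕜))).isLittleO.comp_tendsto hf1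
  refine ((hinv.trans_isBigO hfO).sub hf).congr_left fun i => ?_
  ring

lemma isLittleO_exp_mul_I_sub (a : ℝ) :
    (fun θ : ℝ => exp (a * θ * I) - (1 + a * θ * I - a ^ 2 / 2 * θ ^ 2))
      =o[𝓝 0] fun θ : ℝ => (θ : ℂ) ^ 2 := by
  have hlim : Tendsto (fun θ : ℝ => (a * θ * I : ℂ)) (𝓝 0) (𝓝 0) :=
    Continuous.tendsto' (by fun_prop) _ _ (by simp)
  have hO : (fun θ : ℝ => (a * θ * I : ℂ) ^ 2) =O[𝓝 0] fun θ : ℝ => (θ : ℂ) ^ 2 := by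
    refine (isBigO_const_mul_self (-(a : ℂ) ^ 2) _ _).congr_left fun θ => ?_
    rw [mul_pow, mul_pow, I_sq]
    ring
  refine (((exp_sub_sum_range_succ_isLittleO_pow 2).comp_tendsto hlim).trans_isBigO
    hO).congr_left fun θ => ?_
  simp only [Function.comp_apply, Finset.sum_range_succ, Finset.sum_range_zero, Nat.factorial]
  push_cast
  linear_combination (-(a * θ) ^ 2 / 2 : ℂ) * I_sq

lemma integral_exp_neg_mul_sq_mul_exp_I_mul {V : ℝ} (hV : 0 < V) (w : ℝ) :
    ∫ s : ℝ, exp (-(V / 2) * s ^ 2) * exp (I * w * s) =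
      (√(2 * Real.pi / V) * Real.exp (-w ^ 2 / (2 * V)) : ℝ) := by
  have hsqrt : ((Real.pi : ℂ) / (V / 2)) ^ (1 / 2 : ℂ) = (√(2 * Real.pi / V) : ℝ) := by
    rw [Real.sqrt_eq_rpow, ofReal_cpow (by positivity)]
    push_cast
    congr 1
    field_simp
  have hre : 0 < ((V : ℂ) / 2).re := by simpa using hV
  simp only [mul_comm (exp (-((V : ℂ) / 2) * _))]
  rw [fourierIntegral_gaussian hre, hsqrt]
  push_cast
  congr 2
  ring

lemma smul_intervalIntegral_eq_integral_indicator {E : Type*} [NormedAddCommGroup E]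
    [NormedSpace ℝ E] (f : ℝ → E) {a R : ℝ} (ha : 0 < a) (hR : 0 ≤ R) :
    a • ∫ θ in -R..R, f θ =
      ∫ s, (Set.Ioc (-(R * a)) (R * a)).indicator (fun s => f (s / a)) s := by
  have hRa : -(R * a) ≤ R * a := neg_le_self (mul_nonneg hR ha.le)
  rw [MeasureTheory.integral_indicator measurableSet_Ioc, ← integral_of_le hRa,
    integral_comp_div _ ha.ne', neg_div, mul_div_cancel_right₀ _ ha.ne']

variable {φ : ℝ → ℂ} {v k R τ w : ℝ}

lemma norm_zpow_comp_div_le (hk : 0 ≤ k)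
    (hbound : ∀ θ, |θ| ≤ R → ‖φ θ‖ ≤ Real.exp (-k * θ ^ 2)) {a s : ℝ} {n : ℤ} (ha : 0 < a)
    (hs : |s| ≤ R * a) (hτ : 0 ≤ τ) (hn : τ ≤ n / a ^ 2) :
    ‖φ (s / a) ^ n‖ ≤ Real.exp (-(k * τ) * s ^ 2) := by
  have hθ : |s / a| ≤ R := by rwa [abs_div, abs_of_pos ha, div_le_iff₀ ha]
  have hn₀ : (0 : ℝ) ≤ n :=
    (mul_nonneg hτ (sq_nonneg a)).trans ((le_div_iff₀ (sq_pos_of_pos ha)).mp hn)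
  calc ‖φ (s / a) ^ n‖ = ‖φ (s / a)‖ ^ n := norm_zpow _ _
    _ ≤ Real.exp (-k * (s / a) ^ 2) ^ n :=
      zpow_le_zpow_left₀ (mod_cast hn₀) (norm_nonneg _) (hbound _ hθ)
    _ = Real.exp (-(k * (n / a ^ 2) * s ^ 2)) := by
      rw [← Real.rpow_intCast, ← Real.exp_mul]
      ring_nf
    _ ≤ Real.exp (-(k * τ * s ^ 2)) := by gcongr
    _ = Real.exp (-(k * τ) * s ^ 2) := by rw [neg_mul]

variable {a c : ι → ℝ} {n : ι → ℤ}

lemma tendsto_zpow_comp_div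
    (hφ : (fun θ : ℝ => φ θ - (1 - v / 2 * θ ^ 2)) =o[𝓝 0] fun θ : ℝ => (θ : ℂ) ^ 2)
    (ha : Tendsto a l atTop) (hn : Tendsto (fun i => n i / a i ^ 2) l (𝓝 τ)) (s : ℝ) :
    Tendsto (fun i => φ (s / a i) ^ n i) l (𝓝 (exp (-((τ * v : ℝ) / 2) * s ^ 2))) := by
  have hθ : Tendsto (fun i => s / a i) l (𝓝 0) := ha.const_div_atTop s
  have hn' : Tendsto (fun i => ((n i / a i ^ 2 : ℝ) : ℂ)) l (𝓝 τ) := hn.ofReal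
  have hquad : Tendsto (fun i => (v / 2 * (s / a i : ℝ) ^ 2 : ℂ)) l (𝓝 0) := by
    simpa using (hθ.ofReal.pow 2).const_mul (v / 2 : ℂ)
  have hrem := hφ.comp_tendsto hθ
  have hφ1 : Tendsto (fun i => φ (s / a i)) l (𝓝 1) := by
    have hrem0 := hrem.isBigO.trans_tendsto
      (by simpa using hθ.ofReal.pow 2 : Tendsto (fun i => ((s / a i : ℝ) : ℂ) ^ 2) l (𝓝 0))
    simpa [Function.comp_def] using hrem0.add (hquad.const_sub 1)
  refine tendsto_zpow_exp_of_tendsto_mul_sub_one hφ1 ?_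
  have hnrem : Tendsto (fun i => n i * (φ (s / a i) - (1 - v / 2 * (s / a i : ℝ) ^ 2))) l
      (𝓝 0) := by
    refine (isLittleO_one_iff ℂ).mp <|
      ((isBigO_refl (fun i => (n i : ℂ)) l).mul_isLittleO hrem).trans_isBigO ?_
    refine ((hn'.mul_const ((s : ℂ) ^ 2)).isBigO_one ℂ).congr_left fun i => ?_
    simp only [Function.comp_apply]
    push_cast
    ring
  have hmain := hnrem.sub (hn'.mul_const (v / 2 * s ^ 2 : ℂ))
  convert hmain using 2 <;> (push_cast; ring)

theorem tendsto_mul_integral_zpow_mul_exp [l.IsCountablyGenerated] (hmeas : Measurable φ)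
    (hv : 0 < v) (hφ : (fun θ : ℝ => φ θ - (1 - v / 2 * θ ^ 2)) =o[𝓝 0] fun θ : ℝ => (θ : ℂ) ^ 2)
    (hR : 0 < R) (hk : 0 < k) (hbound : ∀ θ, |θ| ≤ R → ‖φ θ‖ ≤ Real.exp (-k * θ ^ 2))
    (ha : Tendsto a l atTop) (hτ : 0 < τ) (hn : Tendsto (fun i => n i / a i ^ 2) l (𝓝 τ))
    (hc : Tendsto (fun i => c i / a i) l (𝓝 w)) :
    Tendsto (fun i => (a i : ℂ) * ∫ θ in -R..R, φ θ ^ n i * exp (I * θ * c i)) l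
      (𝓝 (√(2 * Real.pi / (τ * v)) * Real.exp (-w ^ 2 / (2 * (τ * v))) : ℝ)) := by
  rw [← integral_exp_neg_mul_sq_mul_exp_I_mul (mul_pos hτ hv)]
  have hpos : ∀ᶠ i in l, 0 < a i := ha.eventually_gt_atTop 0
  simp only [← real_smul]
  refine Tendsto.congr' (hpos.mono fun i hi =>
    (smul_intervalIntegral_eq_integral_indicator _ hi hR.le).symm) ?_
  refine tendsto_integral_filter_of_dominated_convergence
    (fun s => Real.exp (-(k * (τ / 2)) * s ^ 2)) (Eventually.of_forall fun i => ?_) ?_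
    (integrable_exp_neg_mul_sq (by positivity)) (Eventually.of_forall fun s => ?_)
  · have : Measurable fun s : ℝ => φ (s / a i) ^ n i * exp (I * (s / a i : ℝ) * c i) := by
      fun_prop
    exact (this.indicator measurableSet_Ioc).aestronglyMeasurable
  · filter_upwards [hpos, hn.eventually_const_le (half_lt_self hτ)] with i hi hni
    refine Eventually.of_forall fun s => ?_
    by_cases hs : s ∈ Set.Ioc (-(R * a i)) (R * a i)
    · have hphase : ‖exp (I * (s / a i : ℝ) * c i)‖ = 1 := by
        rw [mul_assoc, mul_comm, ← ofReal_mul, norm_exp_ofReal_mul_I]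
      rw [Set.indicator_of_mem hs, norm_mul, hphase, mul_one]
      exact norm_zpow_comp_div_le hk.le hbound hi (abs_le.mpr ⟨hs.1.le, hs.2⟩) (by positivity) hni
    · rw [Set.indicator_of_notMem hs, norm_zero]
      positivity
  · have hphase : Tendsto (fun i => exp (I * (s / a i : ℝ) * c i)) l (𝓝 (exp (I * w * s))) := by
      refine (((hc.ofReal.const_mul I).mul_const (s : ℂ)).cexp).congr fun i => ?_
      push_cast
      ring_nf
    refine ((tendsto_zpow_comp_div hφ ha hn s).mul hphase).congr' ?_
    filter_upwards [(ha.const_mul_atTop hR).eventually_gt_atTop |s|] with i hi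
    obtain ⟨hlower, hupper⟩ := abs_lt.mp hi
    rw [Set.indicator_of_mem (Set.mem_Ioc.mpr ⟨hlower, hupper.le⟩)]

end LocalLimit

section Geometric

open Asymptotics

/-- The characteristic function `E exp(iθ(X - E X))` of a centred geometric variable:
`P(X = j) = (1 - q) q ^ j` for `j : ℕ`, with mean `q / (1 - q)` and variance `q / (1 - q) ^ 2`. -/
def centeredGeomCharFun (q θ : ℝ) : ℂ :=
  (1 - q) / (1 - q * exp (θ * I)) * exp (-((q / (1 - q) : ℝ) * θ * I))

variable {q : ℝ}

lemma normSq_one_sub_mul_exp (q θ : ℝ) :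
    normSq (1 - q * exp (θ * I)) = (1 - q) ^ 2 + 2 * q * (1 - Real.cos θ) := by
  rw [normSq_apply]
  simp only [sub_re, one_re, re_ofReal_mul, exp_ofReal_mul_I_re, sub_im, one_im, im_ofReal_mul,
    exp_ofReal_mul_I_im]
  linear_combination q ^ 2 * Real.sin_sq_add_cos_sq θ

lemma measurable_centeredGeomCharFun (q : ℝ) : Measurable (centeredGeomCharFun q) := by
  unfold centeredGeomCharFun
  fun_prop

lemma inv_centeredGeomCharFun (q θ : ℝ) :
    (centeredGeomCharFun q θ)⁻¹ =
      (1 - q * exp (θ * I)) / (1 - q) * exp ((q / (1 - q) : ℝ) * θ * I) := by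
  rw [centeredGeomCharFun, mul_inv, inv_div, ← exp_neg, neg_neg]

lemma isLittleO_centeredGeomCharFun_sub (hq : q ≠ 1) :
    (fun θ : ℝ => centeredGeomCharFun q θ - (1 - (q / (1 - q) ^ 2 : ℝ) / 2 * θ ^ 2))
      =o[𝓝 0] fun θ : ℝ => (θ : ℂ) ^ 2 := by
  set m := q / (1 - q) with hm
  set v := q / (1 - q) ^ 2 with hv
  have hq' : (1 - q : ℂ) ≠ 0 := by exact_mod_cast sub_ne_zero.mpr hq.symm
  have hsq : Tendsto (fun θ : ℝ => (θ : ℂ) ^ 2) (𝓝 0) (𝓝 0) :=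
    Continuous.tendsto' (by fun_prop) _ _ (by simp)
  -- The reciprocal is a combination of two exponentials, so it is easier to expand.
  have hinv : (fun θ : ℝ => (centeredGeomCharFun q θ)⁻¹ - (1 + (v : ℂ) / 2 * θ ^ 2))
      =o[𝓝 0] fun θ : ℝ => (θ : ℂ) ^ 2 := by
    refine (((isLittleO_exp_mul_I_sub m).sub
      ((isLittleO_exp_mul_I_sub (m + 1)).const_mul_left (q : ℂ))).const_mul_left
        (1 - q : ℂ)⁻¹).congr_left fun θ => ?_
    have hexp : exp ((m + 1 : ℝ) * θ * I) = exp (θ * I) * exp (m * θ * I) := by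
      rw [← exp_add]
      push_cast
      ring_nf
    rw [inv_centeredGeomCharFun, hexp, hv, ← hm]
    generalize exp (m * θ * I) = z
    rw [hm]
    push_cast
    field_simp
    ring
  simpa using isLittleO_inv_sub_one_sub hsq (isBigO_const_mul_self ((v : ℂ) / 2) _ _) hinv

lemma norm_centeredGeomCharFun_sq (q θ : ℝ) :
    ‖centeredGeomCharFun q θ‖ ^ 2 =
      (1 - q) ^ 2 / ((1 - q) ^ 2 + 2 * q * (1 - Real.cos θ)) := by
  have hphase : ‖exp (-((q / (1 - q) : ℝ) * θ * I))‖ = 1 := by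
    rw [← ofReal_mul, ← neg_mul, ← ofReal_neg, norm_exp_ofReal_mul_I]
  have hnum : ‖(1 - q : ℂ)‖ ^ 2 = (1 - q) ^ 2 := by
    rw [← ofReal_one, ← ofReal_sub, norm_real, Real.norm_eq_abs, sq_abs]
  rw [centeredGeomCharFun, norm_mul, hphase, mul_one, norm_div, div_pow, hnum,
    ← normSq_eq_norm_sq, normSq_one_sub_mul_exp]

lemma norm_centeredGeomCharFun_le (hq₀ : 0 ≤ q) (hq₁ : q < 1) {θ : ℝ} (hθ : |θ| ≤ Real.pi) :
    ‖centeredGeomCharFun q θ‖ ≤ Real.exp (-(q / (2 * Real.pi ^ 2)) * θ ^ 2) := by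
  have hcos : Real.cos θ ≤ 1 - 2 / Real.pi ^ 2 * θ ^ 2 := Real.cos_le_one_sub_mul_cos_sq hθ
  set u := 1 - Real.cos θ with hu
  set D := (1 - q) ^ 2 + 2 * q * u with hD
  have hu₀ : 0 ≤ u := sub_nonneg.mpr (Real.cos_le_one θ)
  have hDpos : 0 < D := by nlinarith [mul_nonneg hq₀ hu₀, sq_pos_of_pos (sub_pos.mpr hq₁)]
  have hD4 : D ≤ 4 := by nlinarith [Real.neg_one_le_cos θ]
  refine le_of_sq_le_sq ?_ (Real.exp_pos _).le
  calc ‖centeredGeomCharFun q θ‖ ^ 2 = 1 - 2 * q * u / D := by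
        rw [norm_centeredGeomCharFun_sq, ← hu, ← hD, eq_sub_iff_add_eq, ← add_div, ← hD,
          div_self hDpos.ne']
    _ ≤ 1 - 2 * q * u / 4 := by gcongr
    _ ≤ 1 - q * (2 / Real.pi ^ 2 * θ ^ 2) / 2 := by nlinarith
    _ ≤ Real.exp (-(q * (2 / Real.pi ^ 2 * θ ^ 2) / 2)) := Real.one_sub_le_exp_neg _
    _ = Real.exp (-(q / (2 * Real.pi ^ 2)) * θ ^ 2) ^ 2 := by
        rw [← Real.exp_nat_mul]
        congr 1
        field_simp
        push_cast
        ring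

lemma zpow_mul_zpow_neg_mul_exp_eq (q : ℝ) (n : ℤ) (d θ : ℝ) :
    (1 - q : ℂ) ^ n * ((1 - q * exp (θ * I)) ^ (-n) * exp (I * θ * d)) =
      centeredGeomCharFun q θ ^ n * exp (I * θ * (d + n * (q / (1 - q)) : ℝ)) := by
  have hphase : exp (I * θ * d) = exp (-((q / (1 - q) : ℝ) * θ * I)) ^ n *
      exp (I * θ * (d + n * (q / (1 - q)) : ℝ)) := by
    rw [← exp_int_mul, ← exp_add]
    push_cast
    ring_nf
  rw [centeredGeomCharFun, mul_zpow, div_zpow, zpow_neg, hphase]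
  ring

theorem tendsto_mul_integral_centeredGeomCharFun {ι : Type*} {l : Filter ι}
    [l.IsCountablyGenerated] (hq₀ : 0 < q) (hq₁ : q < 1) {a c : ι → ℝ} {n : ι → ℤ} {τ w : ℝ}
    (ha : Tendsto a l atTop) (hτ : 0 < τ) (hn : Tendsto (fun i => n i / a i ^ 2) l (𝓝 τ))
    (hc : Tendsto (fun i => c i / a i) l (𝓝 w)) :
    Tendsto (fun i => (a i : ℂ) * ∫ θ in -Real.pi..Real.pi,
        centeredGeomCharFun q θ ^ n i * exp (I * θ * c i)) l
      (𝓝 (√(2 * Real.pi / (τ * (q / (1 - q) ^ 2))) *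
        Real.exp (-w ^ 2 / (2 * (τ * (q / (1 - q) ^ 2)))) : ℝ)) := by
  have : 0 < 1 - q := sub_pos.mpr hq₁
  exact tendsto_mul_integral_zpow_mul_exp (measurable_centeredGeomCharFun q) (by positivity)
    (isLittleO_centeredGeomCharFun_sub hq₁.ne) Real.pi_pos
    (k := q / (2 * Real.pi ^ 2)) (by positivity)
    (fun _ => norm_centeredGeomCharFun_le hq₀.le hq₁) ha hτ hn hc

end Geometric

section Scaling

variable {q : ℝ}

lemma sigmaQ_pos (hq₀ : 0 < q) (hq₁ : q < 1) : 0 < sigmaQ q := by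
  have : 0 < 1 - q := sub_pos.mpr hq₁
  unfold sigmaQ
  positivity

lemma fQ_pos (hq₀ : 0 < q) : 0 < fQ q := by
  unfold fQ
  positivity

lemma sq_rpow_one_third {x : ℝ} (hx : 0 ≤ x) : (x ^ ((1 : ℝ) / 3)) ^ 2 = x ^ ((2 : ℝ) / 3) := by
  rw [← Real.rpow_mul_natCast hx]
  norm_num

lemma two_mul_fQ_mul_sigmaQ_sq (hq₀ : 0 < q) :
    2 * fQ q * sigmaQ q ^ 2 = q / (1 - q) ^ 2 := by
  have hcube : q ^ ((1 : ℝ) / 3) * (q ^ ((1 : ℝ) / 3)) ^ 2 = q := by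
    rw [← pow_succ', ← Real.rpow_mul_natCast hq₀.le]
    norm_num
  rw [sigmaQ, fQ, div_pow, mul_pow, sq_rpow_one_third (by positivity : 0 ≤ 1 + q)]
  field_simp
  linear_combination hcube / (1 - q) ^ 2

lemma sigmaQ_mul_gaussian_eq (hq₀ : 0 < q) (hq₁ : q < 1) {τ : ℝ} (hτ : 0 < τ) (d : ℝ) :
    sigmaQ q / (2 * Real.pi) * (√(2 * Real.pi / (τ * (q / (1 - q) ^ 2))) *
        Real.exp (-(sigmaQ q * d) ^ 2 / (2 * (τ * (q / (1 - q) ^ 2))))) =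
      (√(4 * Real.pi * fQ q * τ))⁻¹ * Real.exp (-d ^ 2 / (4 * fQ q * τ)) := by
  have hσ := sigmaQ_pos hq₀ hq₁
  have hf := fQ_pos hq₀
  rw [← two_mul_fQ_mul_sigmaQ_sq hq₀, ← mul_assoc]
  congr 1
  · rw [← Real.sqrt_inv, eq_comm, Real.sqrt_eq_iff_mul_self_eq (by positivity) (by positivity),
      mul_mul_mul_comm, Real.mul_self_sqrt (by positivity)]
    field_simp
    norm_num
  · congr 1
    field_simp
    norm_num

lemma abs_MMt_sub_MMt_sub_le (t u : ℝ) (N : ℕ) :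
    |((MMt t N - MMt u N : ℤ) : ℝ) - (t - u) * (N : ℝ) ^ ((2 : ℝ) / 3)| ≤ 1 := by
  set X := (N : ℝ) ^ ((2 : ℝ) / 3)
  have hsplit : ((MMt t N - MMt u N : ℤ) : ℝ) - (t - u) * X =
      Int.fract (u * X) - Int.fract (t * X) := by
    unfold MMt Int.fract
    push_cast
    ring
  rw [hsplit, abs_le]
  constructor <;> linarith [Int.fract_nonneg (u * X), Int.fract_lt_one (u * X),
    Int.fract_nonneg (t * X), Int.fract_lt_one (t * X)]

lemma tendsto_natCast_rpow_one_third_atTop :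
    Tendsto (fun N : ℕ => (N : ℝ) ^ ((1 : ℝ) / 3)) atTop atTop :=
  (tendsto_rpow_atTop (by norm_num)).comp tendsto_natCast_atTop_atTop

lemma tendsto_MMt_sub_MMt_sub_div (t u : ℝ) :
    Tendsto (fun N : ℕ => (((MMt t N - MMt u N : ℤ) : ℝ) - (t - u) * (N : ℝ) ^ ((2 : ℝ) / 3)) /
      (N : ℝ) ^ ((1 : ℝ) / 3)) atTop (𝓝 0) :=
  tendsto_bdd_div_atTop_nhds_zero
    (Eventually.of_forall fun N => (abs_le.mp (abs_MMt_sub_MMt_sub_le t u N)).1)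
    (Eventually.of_forall fun N => (abs_le.mp (abs_MMt_sub_MMt_sub_le t u N)).2)
    tendsto_natCast_rpow_one_third_atTop

lemma tendsto_MMt_sub_MMt_div (t u : ℝ) :
    Tendsto (fun N : ℕ => ((MMt t N - MMt u N : ℤ) : ℝ) / ((N : ℝ) ^ ((1 : ℝ) / 3)) ^ 2)
      atTop (𝓝 (t - u)) := by
  have hlim := ((tendsto_MMt_sub_MMt_sub_div t u).div_atTop
    tendsto_natCast_rpow_one_third_atTop).add_const (t - u)
  rw [zero_add] at hlim
  refine hlim.congr' ?_
  filter_upwards [tendsto_natCast_rpow_one_third_atTop.eventually_gt_atTop 0] with N hN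
  rw [← sq_rpow_one_third N.cast_nonneg]
  field_simp
  ring

lemma tendsto_deltaN_add_div (q tu tv : ℝ) {xN yN : ℕ → ℝ} {d : ℝ}
    (hd : Tendsto (fun N => yN N - xN N) atTop (𝓝 d)) :
    Tendsto (fun N : ℕ =>
        (deltaN q tu tv xN yN N + (MMt tu N - MMt tv N : ℤ) * (q / (1 - q))) /
          (N : ℝ) ^ ((1 : ℝ) / 3))
      atTop (𝓝 (sigmaQ q * d)) := by
  have hlim := ((tendsto_MMt_sub_MMt_sub_div tu tv).const_mul (q / (1 - q))).add
    (hd.const_mul (sigmaQ q))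
  rw [mul_zero, zero_add] at hlim
  refine hlim.congr' ?_
  filter_upwards [tendsto_natCast_rpow_one_third_atTop.eventually_gt_atTop 0] with N hN
  unfold deltaN
  field_simp
  ring

lemma K2N_eq_integral_centeredGeomCharFun (q tu tv : ℝ) (xN yN : ℕ → ℝ) (N : ℕ) :
    K2N q tu tv xN yN N = -(1 / (2 * Real.pi) * ∫ θ in -Real.pi..Real.pi,
      centeredGeomCharFun q θ ^ (MMt tu N - MMt tv N) * exp (I * θ *
        (deltaN q tu tv xN yN N + (MMt tu N - MMt tv N : ℤ) * (q / (1 - q)) : ℝ))) := by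
  simp only [← zpow_mul_zpow_neg_mul_exp_eq, neg_sub, intervalIntegral.integral_const_mul, K2N]
  ring

end Scaling

/-- Equation (5.2)/(`LimitK2`): the limit of `N^{1/3} σ_q K²_N` when `t_u > t_v`. -/
theorem stmt12 (q : ℝ) (hq : q ∈ Set.Ioo (0 : ℝ) 1) (tu tv : ℝ) (htuv : tv < tu)
    (x y : ℝ) (xN yN : ℕ → ℝ)
    (hx : Tendsto xN atTop (𝓝 x)) (hy : Tendsto yN atTop (𝓝 y)) :
    Tendsto (fun N : ℕ =>
        (((N : ℝ) ^ ((1 : ℝ) / 3) * sigmaQ q : ℝ) : ℂ) * K2N q tu tv xN yN N)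
      atTop (𝓝 (-((((Real.sqrt (4 * Real.pi * fQ q * (tu - tv)))⁻¹ : ℝ) : ℂ) *
        Complex.exp (((-(y - x) ^ 2 / (4 * fQ q * (tu - tv)) : ℝ) : ℂ))))) := by
  obtain ⟨hq₀, hq₁⟩ := hq
  have hlim := (tendsto_mul_integral_centeredGeomCharFun hq₀ hq₁
    tendsto_natCast_rpow_one_third_atTop (sub_pos.mpr htuv) (tendsto_MMt_sub_MMt_div tu tv)
    (tendsto_deltaN_add_div q tu tv (hy.sub hx))).const_mul
      (-(sigmaQ q / (2 * Real.pi) : ℝ) : ℂ)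
  rw [neg_mul, ← ofReal_mul, sigmaQ_mul_gaussian_eq hq₀ hq₁ (sub_pos.mpr htuv), ofReal_mul,
    ofReal_exp] at hlim
  refine hlim.congr fun N => ?_
  rw [K2N_eq_integral_centeredGeomCharFun]
  push_cast
  ring
end
end

section
/- Fix q ∈ (0,1) and set σ_q = q^{1/3}(1+q)^{1/3}/(1−q). Define S(z) = Log(1 − q/z) − Log(1 − qz) − (2q/(1−q))·Log z, where Log is the principal branch of the complex logarithm, wherever the arguments lie off (−∞,0]. Then: (a) there exist δ₀ ∈ (0,1/2) and C₀ > 0 such that for all z ∈ ℂ with |z−1| ≤ δ₀, S(z) is well-defined and |S(z) − σ_q³(z−1)³/3| ≤ C₀|z−1|⁴; (b) for every r > 0 with r ≠ 1, the function h_r(θ) := Re S(re^{iθ}) = (1/2)·log(1 + q²r^{−2} − 2qr^{−1}cos θ) − (1/2)·log(1 + q²r² − 2qr cos θ) − (2q/(1−q))·log r is well-defined and differentiable on (0,π), and its derivative satisfies h_r′(θ) > 0 for all θ ∈ (0,π) when 0 < r < 1, and h_r′(θ) < 0 for all θ ∈ (0,π) when r > 1. -/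
/-!
Both parts rest on factorizations of derivatives. For (a),
`S'(z) = σ_q³ (z - 1)² · (1 - q)² / (z (z - q) (1 - q z))`, and the last factor is `1 + O(z - 1)`,
so `S'(z) - σ_q³ (z - 1)² = O((z - 1)³)`; integrating from `S(1) = 0` gives the claim. For (b),
`h_r'(θ) = sin θ · q (1 - q²) (1 - r²) / (r |1 - q / z|² |1 - q z|²)` with `z = r e^{iθ}`, whose
sign is that of `1 - r²`.
-/

open Filter Complex

noncomputable section

def Sq (q : ℝ) (z : ℂ) : ℂ :=
  Complex.log (1 - (q : ℂ) / z) - Complex.log (1 - (q : ℂ) * z) -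
    ((2 * q / (1 - q) : ℝ) : ℂ) * Complex.log z

/-- The real formula for `Re S(r e^{iθ})`. -/
def hSr (q r θ : ℝ) : ℝ :=
  (1 / 2) * Real.log (1 + q ^ 2 / r ^ 2 - 2 * (q / r) * Real.cos θ) -
    (1 / 2) * Real.log (1 + q ^ 2 * r ^ 2 - 2 * q * r * Real.cos θ) -
    (2 * q / (1 - q)) * Real.log r

/-- `w` lies off the branch cut `(-∞, 0]` of the principal logarithm. -/
def OffCut (w : ℂ) : Prop := ¬(w.im = 0 ∧ w.re ≤ 0)

open Asymptotics Topology

section IsBigO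

variable {𝕜 E : Type*} [RCLike 𝕜] [NormedAddCommGroup E] [NormedSpace 𝕜 E]

theorem isBigO_sub_pow_succ_of_hasDerivAt {f f' : 𝕜 → E} {a : 𝕜} {n : ℕ}
    (hf : ∀ᶠ z in 𝓝 a, HasDerivAt f (f' z) z) (hf' : f' =O[𝓝 a] fun z => (z - a) ^ n) :
    (fun z => f z - f a) =O[𝓝 a] fun z => (z - a) ^ (n + 1) := by
  obtain ⟨C, hC, hbound⟩ := hf'.exists_pos
  obtain ⟨ε, hε, hball⟩ := Metric.eventually_nhds_iff_ball.1 (hf.and hbound.bound)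
  refine IsBigO.of_bound C (Metric.eventually_nhds_iff_ball.2 ⟨ε, hε, fun z hz => ?_⟩)
  have hsub : ∀ w ∈ Metric.closedBall a ‖z - a‖, w ∈ Metric.ball a ε := fun w hw =>
    mem_ball_iff_norm.2 ((mem_closedBall_iff_norm.1 hw).trans_lt (mem_ball_iff_norm.1 hz))
  have hderiv_le : ∀ w ∈ Metric.closedBall a ‖z - a‖, ‖f' w‖ ≤ C * ‖z - a‖ ^ n := fun w hw =>
    calc ‖f' w‖ ≤ C * ‖(w - a) ^ n‖ := (hball w (hsub w hw)).2
      _ = C * ‖w - a‖ ^ n := by rw [norm_pow]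
      _ ≤ C * ‖z - a‖ ^ n := by gcongr; exact mem_closedBall_iff_norm.1 hw
  calc ‖f z - f a‖ ≤ C * ‖z - a‖ ^ n * ‖z - a‖ :=
        (convex_closedBall a ‖z - a‖).norm_image_sub_le_of_norm_hasDerivWithin_le
          (fun w hw => (hball w (hsub w hw)).1.hasDerivWithinAt) hderiv_le
          (Metric.mem_closedBall_self (norm_nonneg _)) (mem_closedBall_iff_norm.2 le_rfl)
    _ = C * ‖(z - a) ^ (n + 1)‖ := by rw [norm_pow, pow_succ, mul_assoc]

end IsBigO

theorem offCut_of_mem_slitPlane {w : ℂ} (hw : w ∈ slitPlane) : OffCut w := fun h =>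
  hw.elim (fun hre => hre.not_ge h.2) fun him => him h.1

theorem sigmaQ_pow_three {q : ℝ} (hq : 0 ≤ q) : sigmaQ q ^ 3 = q * (1 + q) / (1 - q) ^ 3 := by
  have rpow_third_pow_three {x : ℝ} (hx : 0 ≤ x) : (x ^ ((1 : ℝ) / 3)) ^ 3 = x := by
    simpa only [one_div, Nat.cast_ofNat] using Real.rpow_inv_natCast_pow hx three_ne_zero
  rw [sigmaQ, div_pow, mul_pow, rpow_third_pow_three hq, rpow_third_pow_three (by positivity)]

theorem Sq_one (q : ℝ) : Sq q 1 = 0 := by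
  simp [Sq]

theorem eventually_mem_slitPlane_nhds_one {q : ℝ} (hq : q < 1) :
    ∀ᶠ z : ℂ in 𝓝 1, 1 - (q : ℂ) / z ∈ slitPlane ∧ 1 - (q : ℂ) * z ∈ slitPlane ∧
      z ∈ slitPlane := by
  have h_one_sub : 1 - (q : ℂ) ∈ slitPlane := by
    exact_mod_cast ofReal_mem_slitPlane.2 (sub_pos.2 hq)
  have hdiv : ContinuousAt (fun z : ℂ => 1 - (q : ℂ) / z) 1 := by
    fun_prop (disch := exact one_ne_zero)
  have hmul : ContinuousAt (fun z : ℂ => 1 - (q : ℂ) * z) 1 := by fun_prop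
  exact (hdiv.eventually_mem (isOpen_slitPlane.mem_nhds (by simpa using h_one_sub))).and
    ((hmul.eventually_mem (isOpen_slitPlane.mem_nhds (by simpa using h_one_sub))).and
      (isOpen_slitPlane.mem_nhds one_mem_slitPlane))

theorem hasDerivAt_Sq {q : ℝ} {z : ℂ} (hq : q ≠ 1) (hdiv : 1 - (q : ℂ) / z ∈ slitPlane)
    (hmul : 1 - (q : ℂ) * z ∈ slitPlane) (hz : z ∈ slitPlane) :
    HasDerivAt (Sq q)
      ((q : ℂ) * (1 + q) / (1 - q) * (z - 1) ^ 2 / (z * (z - q) * (1 - q * z))) z := by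
  have hz₀ : z ≠ 0 := slitPlane_ne_zero hz
  have hmul₀ : 1 - (q : ℂ) * z ≠ 0 := slitPlane_ne_zero hmul
  have hdiv_eq : 1 - (q : ℂ) / z = (z - q) / z := one_sub_div hz₀
  have hsub₀ : z - q ≠ 0 := fun h => slitPlane_ne_zero hdiv (by rw [hdiv_eq, h, zero_div])
  have hq₀ : (1 : ℂ) - q ≠ 0 := by exact_mod_cast sub_ne_zero.2 hq.symm
  have hlog_div := (((hasDerivAt_inv hz₀).const_mul (q : ℂ)).const_sub 1).clog
    (by simpa only [div_eq_mul_inv] using hdiv)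
  have hlog_mul := (((hasDerivAt_id z).const_mul (q : ℂ)).const_sub 1).clog hmul
  have hlog := (hasDerivAt_log hz).const_mul ((2 * q / (1 - q) : ℝ) : ℂ)
  refine ((hlog_div.sub hlog_mul).sub hlog).congr_deriv ?_
  simp only [← div_eq_mul_inv, hdiv_eq, id]
  push_cast
  field_simp
  ring

theorem isBigO_deriv_Sq_sub_cubic {q : ℝ} (hq₀ : 0 ≤ q) (hq₁ : q < 1) :
    (fun z : ℂ => (q : ℂ) * (1 + q) / (1 - q) * (z - 1) ^ 2 / (z * (z - q) * (1 - q * z)) -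
      (sigmaQ q : ℂ) ^ 3 * (z - 1) ^ 2) =O[𝓝 1] fun z => (z - 1) ^ 3 := by
  have hq : (1 : ℂ) - q ≠ 0 := by exact_mod_cast (sub_pos.2 hq₁).ne'
  have hσ : (sigmaQ q : ℂ) ^ 3 = q * (1 + q) / (1 - q) ^ 3 := by
    exact_mod_cast sigmaQ_pow_three hq₀
  let g : ℂ → ℂ := fun z => (1 - q) ^ 2 / (z * (z - q) * (1 - q * z))
  have hg_one : g 1 = 1 := by
    simp only [g]
    field_simp
  have hg : DifferentiableAt ℂ g 1 := by
    simp only [g]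
    fun_prop (disch := simp [hq])
  have hbound : (fun z : ℂ => (sigmaQ q : ℂ) ^ 3 * (z - 1) ^ 2 * (g z - 1)) =O[𝓝 1]
      fun z => (z - 1) ^ 2 * (z - 1) :=
    ((isBigO_refl _ _).const_mul_left _).mul (by simpa only [hg_one] using hg.isBigO_sub)
  refine hbound.congr (fun z => ?_) fun z => (pow_succ _ 2).symm
  simp only [g, hσ]
  field_simp

theorem isBigO_Sq_sub_cubic {q : ℝ} (hq₀ : 0 ≤ q) (hq₁ : q < 1) :
    (fun z : ℂ => Sq q z - (sigmaQ q : ℂ) ^ 3 * (z - 1) ^ 3 / 3) =O[𝓝 1]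
      fun z => (z - 1) ^ 4 := by
  have hcubic (z : ℂ) : HasDerivAt (fun z : ℂ => (sigmaQ q : ℂ) ^ 3 * (z - 1) ^ 3 / 3)
      ((sigmaQ q : ℂ) ^ 3 * (z - 1) ^ 2) z := by
    refine (((((hasDerivAt_id z).sub_const 1).pow 3).const_mul _).div_const 3).congr_deriv ?_
    simp only [id]
    push_cast
    ring
  have hderiv := (eventually_mem_slitPlane_nhds_one hq₁).mono fun z hz =>
    (hasDerivAt_Sq hq₁.ne hz.1 hz.2.1 hz.2.2).sub (hcubic z)
  simpa [Sq_one] using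
    isBigO_sub_pow_succ_of_hasDerivAt hderiv (isBigO_deriv_Sq_sub_cubic hq₀ hq₁)

theorem exists_forall_norm_Sq_sub_cubic_le {q : ℝ} (hq₀ : 0 ≤ q) (hq₁ : q < 1) :
    ∃ δ > 0, ∃ C > 0, ∀ z : ℂ, ‖z - 1‖ ≤ δ →
      OffCut (1 - (q : ℂ) / z) ∧ OffCut (1 - (q : ℂ) * z) ∧ OffCut z ∧
        ‖Sq q z - (sigmaQ q : ℂ) ^ 3 * (z - 1) ^ 3 / 3‖ ≤ C * ‖z - 1‖ ^ 4 := by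
  obtain ⟨C, hC, hbound⟩ := (isBigO_Sq_sub_cubic hq₀ hq₁).exists_pos
  obtain ⟨δ, hδ, hball⟩ := Metric.nhds_basis_closedBall.eventually_iff.1
    ((eventually_mem_slitPlane_nhds_one hq₁).and hbound.bound)
  refine ⟨δ, hδ, C, hC, fun z hz => ?_⟩
  obtain ⟨⟨hdiv, hmul, hself⟩, hle⟩ := hball (mem_closedBall_iff_norm.2 hz)
  exact ⟨offCut_of_mem_slitPlane hdiv, offCut_of_mem_slitPlane hmul,
    offCut_of_mem_slitPlane hself, by rwa [norm_pow] at hle⟩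

theorem sq_norm_one_sub_ofReal_mul_exp (s θ : ℝ) :
    ‖1 - (s : ℂ) * exp (θ * I)‖ ^ 2 = 1 + s ^ 2 - 2 * s * Real.cos θ := by
  rw [Complex.sq_norm, Complex.normSq_apply, sub_re, sub_im, re_ofReal_mul, im_ofReal_mul,
    exp_ofReal_mul_I_re, exp_ofReal_mul_I_im, one_re, one_im]
  linear_combination s ^ 2 * Real.sin_sq_add_cos_sq θ

theorem one_add_sq_sub_two_mul_cos_pos (s : ℝ) {θ : ℝ} (hθ : Real.sin θ ≠ 0) :
    0 < 1 + s ^ 2 - 2 * s * Real.cos θ :=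
  calc 0 < (s - Real.cos θ) ^ 2 + Real.sin θ ^ 2 := by positivity
    _ = 1 + s ^ 2 - 2 * s * Real.cos θ := by
      linear_combination Real.sin_sq_add_cos_sq θ

theorem re_log_one_sub_ofReal_mul_exp (s θ : ℝ) :
    (log (1 - (s : ℂ) * exp (θ * I))).re =
      1 / 2 * Real.log (1 + s ^ 2 - 2 * s * Real.cos θ) := by
  rw [log_re, ← sq_norm_one_sub_ofReal_mul_exp, Real.log_pow, Nat.cast_ofNat]
  ring

theorem hasDerivAt_half_log_one_add_sq_sub_two_mul_cos (s : ℝ) {θ : ℝ} (hθ : Real.sin θ ≠ 0) :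
    HasDerivAt (fun θ => 1 / 2 * Real.log (1 + s ^ 2 - 2 * s * Real.cos θ))
      (s * Real.sin θ / (1 + s ^ 2 - 2 * s * Real.cos θ)) θ := by
  refine (((((Real.hasDerivAt_cos θ).const_mul (2 * s)).const_sub (1 + s ^ 2)).log
    (one_add_sq_sub_two_mul_cos_pos s hθ).ne').const_mul (1 / 2)).congr_deriv ?_
  ring

theorem hSr_eq (q r θ : ℝ) :
    hSr q r θ = 1 / 2 * Real.log (1 + (q / r) ^ 2 - 2 * (q / r) * Real.cos θ) -
      1 / 2 * Real.log (1 + (q * r) ^ 2 - 2 * (q * r) * Real.cos θ) -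
      2 * q / (1 - q) * Real.log r := by
  rw [hSr, div_pow, mul_pow, mul_assoc 2 q r]

theorem hSr_eq_re_Sq (q r θ : ℝ) : hSr q r θ = (Sq q (r * exp (θ * I))).re := by
  have hdiv : (q : ℂ) / (r * exp (θ * I)) = (q / r : ℝ) * exp ((-θ : ℝ) * I) := by
    rw [← div_div, div_eq_mul_inv, ← exp_neg, ← neg_mul, ofReal_neg, ofReal_div]
  have hmul : (q : ℂ) * (r * exp (θ * I)) = (q * r : ℝ) * exp (θ * I) := by
    rw [ofReal_mul, mul_assoc]
  have hlog : (log (r * exp (θ * I))).re = Real.log r := by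
    rw [log_re, norm_mul, norm_exp_ofReal_mul_I, mul_one, norm_real, Real.norm_eq_abs,
      Real.log_abs]
  rw [hSr_eq, Sq, sub_re, sub_re, re_ofReal_mul, hdiv, hmul, re_log_one_sub_ofReal_mul_exp,
    re_log_one_sub_ofReal_mul_exp, hlog, Real.cos_neg]

theorem hasDerivAt_hSr (q : ℝ) {r θ : ℝ} (hr : r ≠ 0) (hθ : Real.sin θ ≠ 0) :
    HasDerivAt (hSr q r)
      (Real.sin θ * (q * (1 - q ^ 2) * (1 - r ^ 2)) /
        (r * (1 + (q / r) ^ 2 - 2 * (q / r) * Real.cos θ) *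
          (1 + (q * r) ^ 2 - 2 * (q * r) * Real.cos θ))) θ := by
  have hdiv := (one_add_sq_sub_two_mul_cos_pos (q / r) hθ).ne'
  have hmul := (one_add_sq_sub_two_mul_cos_pos (q * r) hθ).ne'
  rw [funext (hSr_eq q r)]
  refine (((hasDerivAt_half_log_one_add_sq_sub_two_mul_cos (q / r) hθ).sub
    (hasDerivAt_half_log_one_add_sq_sub_two_mul_cos (q * r) hθ)).sub_const _).congr_deriv ?_
  rw [div_sub_div _ _ hdiv hmul, div_eq_div_iff (mul_ne_zero hdiv hmul)
    (mul_ne_zero (mul_ne_zero hr hdiv) hmul)]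
  field_simp
  ring

theorem deriv_hSr_pos {q r θ : ℝ} (hq : q ∈ Set.Ioo (0 : ℝ) 1) (hr : r ∈ Set.Ioo (0 : ℝ) 1)
    (hθ : 0 < Real.sin θ) : 0 < deriv (hSr q r) θ := by
  have hdiv := one_add_sq_sub_two_mul_cos_pos (q / r) hθ.ne'
  have hmul := one_add_sq_sub_two_mul_cos_pos (q * r) hθ.ne'
  have hq_sq : 0 < 1 - q ^ 2 := sub_pos.2 (pow_lt_one₀ hq.1.le hq.2 two_ne_zero)
  have hr_sq : 0 < 1 - r ^ 2 := sub_pos.2 (pow_lt_one₀ hr.1.le hr.2 two_ne_zero)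
  rw [(hasDerivAt_hSr q hr.1.ne' hθ.ne').deriv]
  obtain ⟨hq₀, -⟩ := hq
  obtain ⟨hr₀, -⟩ := hr
  positivity

theorem deriv_hSr_neg {q r θ : ℝ} (hq : q ∈ Set.Ioo (0 : ℝ) 1) (hr : 1 < r)
    (hθ : 0 < Real.sin θ) : deriv (hSr q r) θ < 0 := by
  have hr₀ : 0 < r := one_pos.trans hr
  have hdiv := one_add_sq_sub_two_mul_cos_pos (q / r) hθ.ne'
  have hmul := one_add_sq_sub_two_mul_cos_pos (q * r) hθ.ne'
  have hq_sq : 0 < 1 - q ^ 2 := sub_pos.2 (pow_lt_one₀ hq.1.le hq.2 two_ne_zero)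
  have hr_sq : 1 - r ^ 2 < 0 := sub_neg.2 (one_lt_pow₀ hr two_ne_zero)
  rw [(hasDerivAt_hSr q hr₀.ne' hθ.ne').deriv]
  exact div_neg_of_neg_of_pos
    (mul_neg_of_pos_of_neg hθ (mul_neg_of_pos_of_neg (mul_pos hq.1 hq_sq) hr_sq)) (by positivity)

/-- Lemma 5.2 (`TaylorS`). -/
theorem stmt14 (q : ℝ) (hq : q ∈ Set.Ioo (0 : ℝ) 1) :
    (∃ δ₀ ∈ Set.Ioo (0 : ℝ) (1 / 2), ∃ C₀ : ℝ, 0 < C₀ ∧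
      ∀ z : ℂ, ‖z - 1‖ ≤ δ₀ →
        OffCut (1 - (q : ℂ) / z) ∧ OffCut (1 - (q : ℂ) * z) ∧ OffCut z ∧
        ‖Sq q z - (sigmaQ q : ℂ) ^ 3 * (z - 1) ^ 3 / 3‖ ≤ C₀ * ‖z - 1‖ ^ 4) ∧
    (∀ r : ℝ, 0 < r → r ≠ 1 → ∀ θ ∈ Set.Ioo (0 : ℝ) Real.pi,
      0 < 1 + q ^ 2 / r ^ 2 - 2 * (q / r) * Real.cos θ ∧
      0 < 1 + q ^ 2 * r ^ 2 - 2 * q * r * Real.cos θ ∧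
      hSr q r θ = (Sq q ((r : ℂ) * Complex.exp ((θ : ℂ) * Complex.I))).re ∧
      DifferentiableAt ℝ (hSr q r) θ ∧
      (r < 1 → 0 < deriv (hSr q r) θ) ∧
      (1 < r → deriv (hSr q r) θ < 0)) := by
  refine ⟨?_, fun r hr _ θ hθ => ?_⟩
  · obtain ⟨δ, hδ, C, hC, hbound⟩ := exists_forall_norm_Sq_sub_cubic_le hq.1.le hq.2
    exact ⟨min δ (1 / 4), ⟨by positivity, (min_le_right _ _).trans_lt (by norm_num)⟩, C, hC,
      fun z hz => hbound z (hz.trans (min_le_left _ _))⟩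
  · have hsin : 0 < Real.sin θ := Real.sin_pos_of_mem_Ioo hθ
    exact ⟨by simpa only [div_pow] using one_add_sq_sub_two_mul_cos_pos (q / r) hsin.ne',
      by simpa only [mul_pow, mul_assoc] using one_add_sq_sub_two_mul_cos_pos (q * r) hsin.ne',
      hSr_eq_re_Sq q r θ, (hasDerivAt_hSr q hr.ne' hsin.ne').differentiableAt,
      fun hr₁ => deriv_hSr_pos hq ⟨hr, hr₁⟩ hsin, fun hr₁ => deriv_hSr_neg hq hr₁ hsin⟩
end
end
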